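/- arXiv:2505.04130 — 3 statements merged into one kernel-verified Lean document; each statement's English description precedes it below -/
import Mathlib

section
/- Let E be an aperiodic countable Borel equivalence relation on a Polish space X, and let A, B ⊆ X be Borel sets each of which has infinite intersection with every E-class. Then there exist a comeagre E-invariant Borel set Y ⊆ X and a Borel bijection f : A ∩ Y → B ∩ Y whose graph is contained in E, i.e. x E f(x) for all x ∈ A ∩ Y. -/
/-!
The bijection is built by a greedy matching whose moves are chosen generically.

By Lusin–Novikov uniformization, proved here as `exists_cover_injOn`, the relation `E` is a
countable union of disjoint Borel graphs `Γ k` of partial injections (`exists_isGraphing`). The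
proof of Lusin–Novikov, for a countable-to-one Borel map `p`, is a fusion argument. Call a set of
finite configurations of points small if it splits into countably many pieces, on each of which some vertex is confined to a
Borel set where `p` is injective. By `not_small_extend`, a large analytic set of configurations
remains large when each configuration is extended by a different point of the same fibre, taken from
the values of one of its vertices; if the whole space is large, iterating this produces
a perfect subset of a single fibre.

Borel sets `LA N`, increasing to the whole space, are such that `A \ LA N` meets every class, and
likewise `LB N` for `B` (`IsGraphing.exists_exhaustion`). A state is a Borel partial injection
from `A` to `B` inside `E`, confined to some level `N` of these exhaustions. A move picks `k` and a
higher level `N'`, and adds all the pairs of `Γ k` whose two points are unmatched and lie in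
`LA N'` and `LB N'`. As every class contains points of `A` and of `B` outside level `N`, any
given unmatched point is matched by some move.

Since there are only countably many moves, some move succeeds for a nonmeagre set of points inside
any prescribed nonempty open set. Running through all goals and all basic open sets gives one
sequence of moves after which, for a comeagre set of `x`, every point of `A` and of `B` in the class
of `x` is matched (`exists_generic_sequence`). That set of `x` is invariant by definition, so no
saturation of a meagre set is ever needed.
-/

open Set MeasureTheory Filter Topology

namespace GenericMatching

/-! ### Lusin–Novikov uniformization -/

theorem analyticSet_inter {Z : Type*} [TopologicalSpace Z] [T2Space Z] {s t : Set Z}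
    (hs : AnalyticSet s) (ht : AnalyticSet t) : AnalyticSet (s ∩ t) := by
  rw [inter_eq_iInter]
  exact AnalyticSet.iInter (by rintro (_ | _) <;> assumption)

/-- An analytic set on which `p` is injective extends to a Borel set on which `p` is injective:
separate `S` from the set of points that share a `p`-fibre with a different point of `S`, then
repeat this with the Borel set so obtained in the place of `S`. -/
theorem exists_measurable_injOn {Z X : Type*} [TopologicalSpace Z] [PolishSpace Z]
    [MeasurableSpace Z] [BorelSpace Z] [TopologicalSpace X] [T2Space X]
    {p : Z → X} (hp : Continuous p) {S : Set Z} (hS : AnalyticSet S) (hinj : InjOn p S) :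
    ∃ B, MeasurableSet B ∧ S ⊆ B ∧ InjOn p B := by
  let N : Set Z → Set Z := fun T => Prod.fst '' ((Prod.snd ⁻¹' T) ∩
    ({q : Z × Z | p q.1 = p q.2} ∩ {q : Z × Z | q.1 = q.2}ᶜ))
  have hN : ∀ T, AnalyticSet T → AnalyticSet (N T) := fun T hT =>
    (analyticSet_inter (hT.preimage continuous_snd) (MeasurableSet.analyticSet
      ((isClosed_eq (hp.comp continuous_fst) (hp.comp continuous_snd)).measurableSet.inter
        (isClosed_eq continuous_fst continuous_snd).measurableSet.compl))).image_of_continuous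
      continuous_fst
  have hdisj : Disjoint S (N S) := by
    rw [Set.disjoint_left]
    rintro x hx ⟨⟨a, b⟩, ⟨hb, h1, h2⟩, rfl⟩
    exact h2 (hinj hx hb h1)
  obtain ⟨B₁, hSB₁, hB₁, hB₁m⟩ := hS.measurablySeparable (hN S hS) hdisj
  have hdisj' : Disjoint S (N B₁) := by
    rw [Set.disjoint_left]
    rintro x hx ⟨⟨a, b⟩, ⟨hb, h1, h2⟩, rfl⟩
    exact Set.disjoint_left.1 hB₁ ⟨(b, a), ⟨hx, h1.symm, fun h => h2 h.symm⟩, rfl⟩ hb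
  obtain ⟨B₂, hSB₂, hB₂, hB₂m⟩ :=
    hS.measurablySeparable (hN B₁ hB₁m.analyticSet) hdisj'
  refine ⟨B₁ ∩ B₂, hB₁m.inter hB₂m, subset_inter hSB₁ hSB₂, ?_⟩
  intro x hx y hy hxy
  by_contra hne
  exact Set.disjoint_left.1 hB₂ ⟨(x, y), ⟨hy.1, hxy, hne⟩, rfl⟩ hx.2

/-- A set `H` of configurations `φ`, of which only the vertices `φ 0, …, φ n` matter, is small if
it splits into countably many pieces, on each of which some vertex stays inside a Borel set where
`p` is injective. -/
def Small {Z X : Type*} [MeasurableSpace Z] (p : Z → X) (n : ℕ) (H : Set (ℕ → Z)) : Prop :=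
  ∃ (v : ℕ → ℕ) (B : ℕ → Set Z),
    (∀ i, v i ≤ n ∧ MeasurableSet (B i) ∧ InjOn p (B i)) ∧ ∀ φ ∈ H, ∃ i, φ (v i) ∈ B i

theorem Small.iUnion {Z X : Type*} [MeasurableSpace Z] {p : Z → X} {n : ℕ}
    {H : ℕ → Set (ℕ → Z)} (h : ∀ k, Small p n (H k)) : Small p n (⋃ k, H k) := by
  choose v B h1 h2 using h
  refine ⟨fun m => v m.unpair.1 m.unpair.2, fun m => B m.unpair.1 m.unpair.2,
    fun i => h1 _ _, ?_⟩
  intro φ hφ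
  obtain ⟨k, hk⟩ := mem_iUnion.1 hφ
  obtain ⟨i, hi⟩ := h2 k φ hk
  exact ⟨Nat.pair k i, by simpa using hi⟩

theorem Small.mono {Z X : Type*} [MeasurableSpace Z] {p : Z → X} {n : ℕ}
    {H K : Set (ℕ → Z)} (h : Small p n K) (hHK : H ⊆ K) : Small p n H := by
  obtain ⟨v, B, h1, h2⟩ := h
  exact ⟨v, B, h1, fun φ hφ => h2 φ (hHK hφ)⟩

theorem nonempty_of_not_small {Z X : Type*} [MeasurableSpace Z] {p : Z → X} {n : ℕ}
    {H : Set (ℕ → Z)} (h : ¬ Small p n H) : H.Nonempty := by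
  by_contra hne
  rw [not_nonempty_iff_eq_empty] at hne
  subst hne
  exact h ⟨fun _ => 0, fun _ => ∅, fun _ => ⟨Nat.zero_le _, MeasurableSet.empty, injOn_empty _⟩,
    fun φ hφ => hφ.elim⟩

/-- The configurations obtained from a `φ ∈ H` by adding, as vertex `n + 1`, the vertex `u` of
another `ψ ∈ H`, where `φ u` and `ψ u` are distinct points of the same fibre. -/
def extend {Z X : Type*} (p : Z → X) (n u : ℕ) (H : Set (ℕ → Z)) : Set (ℕ → Z) :=
  (fun q : (ℕ → Z) × (ℕ → Z) => Function.update q.1 (n + 1) (q.2 u)) ''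
    ((Prod.fst ⁻¹' H ∩ Prod.snd ⁻¹' H) ∩
      ({q | p (q.1 u) = p (q.2 u)} ∩ {q | q.1 u = q.2 u}ᶜ))

theorem analyticSet_extend {Z X : Type*} [TopologicalSpace Z] [PolishSpace Z]
    [TopologicalSpace X] [T2Space X] {p : Z → X} (hp : Continuous p) (n u : ℕ)
    {H : Set (ℕ → Z)} (hH : AnalyticSet H) : AnalyticSet (extend p n u H) := by
  borelize Z
  refine AnalyticSet.image_of_continuous (analyticSet_inter
    (analyticSet_inter (hH.preimage continuous_fst) (hH.preimage continuous_snd))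
    (MeasurableSet.analyticSet (MeasurableSet.inter ?_ (MeasurableSet.compl ?_)))) ?_
  · exact (isClosed_eq (by fun_prop) (by fun_prop)).measurableSet
  · exact (isClosed_eq (by fun_prop) (by fun_prop)).measurableSet
  · exact Continuous.update (by fun_prop) _ (by fun_prop)

/-- Extending a large analytic set of configurations leaves it large. If countably many Borel sets
witnessed that the extension is small, then deleting from `H` every configuration with a vertex in
the corresponding set would leave a large set with no admissible pair `φ, ψ`, so that its vertices
`u` would form an analytic set on which `p` is injective. -/
theorem not_small_extend {Z X : Type*} [TopologicalSpace Z] [PolishSpace Z]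
    [MeasurableSpace Z] [BorelSpace Z] [TopologicalSpace X] [T2Space X]
    {p : Z → X} (hp : Continuous p) {n u : ℕ} (hu : u ≤ n)
    {H : Set (ℕ → Z)} (hH : AnalyticSet H) (hL : ¬ Small p n H) :
    ¬ Small p (n + 1) (extend p n u H) := by
  rintro ⟨v, B, hvB, hcov⟩
  let w : ℕ → ℕ := fun i => if v i = n + 1 then u else v i
  have hw : ∀ i, w i ≤ n := by
    intro i
    have := (hvB i).1
    simp only [w]
    split_ifs <;> omega
  let D : Set (ℕ → Z) := ⋃ i, {φ | φ (w i) ∈ B i}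
  have hDm : MeasurableSet D :=
    MeasurableSet.iUnion fun i => (measurable_pi_apply (w i)) (hvB i).2.1
  have hD : Small p n D := ⟨w, B, fun i => ⟨hw i, (hvB i).2⟩, fun φ hφ => mem_iUnion.1 hφ⟩
  have hinj : InjOn p ((fun φ : ℕ → Z => φ u) '' (H ∩ Dᶜ)) := by
    rintro _ ⟨φ, ⟨hφ, hφD⟩, rfl⟩ _ ⟨ψ, ⟨hψ, hψD⟩, rfl⟩ hpe
    by_contra hne
    obtain ⟨i, hi⟩ := hcov _ ⟨(φ, ψ), ⟨⟨hφ, hψ⟩, hpe, hne⟩, rfl⟩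
    by_cases hv : v i = n + 1
    · apply hψD
      refine mem_iUnion.2 ⟨i, ?_⟩
      simpa [w, hv] using hi
    · apply hφD
      refine mem_iUnion.2 ⟨i, ?_⟩
      simpa [w, hv] using hi
  obtain ⟨C, hCm, hC, hCinj⟩ := exists_measurable_injOn hp
    ((analyticSet_inter hH hDm.compl.analyticSet).image_of_continuous (continuous_apply u)) hinj
  have hrest : Small p n (H ∩ Dᶜ) :=
    ⟨fun _ => u, fun _ => C, fun _ => ⟨hu, hCm, hCinj⟩, fun φ hφ => ⟨0, hC ⟨φ, hφ, rfl⟩⟩⟩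
  refine hL ((Small.iUnion (H := fun k => if k = 0 then D else H ∩ Dᶜ) ?_).mono ?_)
  · intro k
    split_ifs
    exacts [hD, hrest]
  · intro φ hφ
    by_cases h : φ ∈ D
    · exact mem_iUnion.2 ⟨0, by simpa using h⟩
    · exact mem_iUnion.2 ⟨1, by simpa using ⟨hφ, h⟩⟩

/-- A large analytic set of configurations contains one whose first `m` vertices vary within
distance `ε`. -/
theorem exists_small_diam {Z X : Type*} [MetricSpace Z] [SecondCountableTopology Z]
    [CompleteSpace Z] [MeasurableSpace Z] [BorelSpace Z] {p : Z → X} {n : ℕ}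
    {H : Set (ℕ → Z)} (hH : AnalyticSet H) (hL : ¬ Small p n H) {ε : ℝ} (hε : 0 < ε) (m : ℕ) :
    ∃ K ⊆ H, AnalyticSet K ∧ ¬ Small p n K ∧
      ∀ θ ∈ K, ∀ θ' ∈ K, ∀ i < m, dist (θ i) (θ' i) ≤ ε := by
  induction m with
  | zero => exact ⟨H, Subset.rfl, hH, hL, fun _ _ _ _ i hi => absurd hi (Nat.not_lt_zero i)⟩
  | succ m ih =>
    obtain ⟨K, hKH, hKa, hKL, hK⟩ := ih
    obtain ⟨φ₀, -⟩ := nonempty_of_not_small hKL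
    have : Nonempty Z := ⟨φ₀ 0⟩
    let U : ℕ → Set (ℕ → Z) := fun k =>
      {φ | φ m ∈ Metric.ball (TopologicalSpace.denseSeq Z k) (ε / 2)}
    have hU : ∀ k, MeasurableSet (U k) := fun k =>
      (measurable_pi_apply m) Metric.isOpen_ball.measurableSet
    obtain ⟨k, hk⟩ : ∃ k, ¬ Small p n (K ∩ U k) := by
      by_contra! hcon
      refine hKL ((Small.iUnion hcon).mono fun φ hφ => ?_)
      obtain ⟨k, hk⟩ := (TopologicalSpace.denseRange_denseSeq Z).exists_dist_lt (φ m)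
        (half_pos hε)
      exact mem_iUnion.2 ⟨k, hφ, hk⟩
    refine ⟨K ∩ U k, inter_subset_left.trans hKH, analyticSet_inter hKa (hU k).analyticSet, hk, ?_⟩
    intro θ hθ θ' hθ' i hi
    rcases Nat.lt_succ_iff_lt_or_eq.1 hi with hi | rfl
    · exact hK θ hθ.1 θ' hθ'.1 i hi
    · have h1 : dist (θ i) _ < ε / 2 := hθ.2
      have h2 : dist (θ' i) _ < ε / 2 := hθ'.2
      have := dist_triangle_right (θ i) (θ' i) (TopologicalSpace.denseSeq Z k)
      linarith

/-- One step of the fusion: from `H` one passes to `K`, whose configurations have one vertex more,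
close to vertex `u` but uniformly separated from it. -/
theorem exists_fusion_step {Z X : Type*} [MetricSpace Z] [SecondCountableTopology Z]
    [CompleteSpace Z] [MeasurableSpace Z] [BorelSpace Z] [TopologicalSpace X] [T2Space X]
    {p : Z → X} (hp : Continuous p) {n u : ℕ} (hu : u ≤ n)
    {H : Set (ℕ → Z)} (hH : AnalyticSet H) (hL : ¬ Small p n H) :
    ∃ K, (AnalyticSet K ∧ ¬ Small p (n + 1) K ∧
        ∀ θ ∈ K, ∀ θ' ∈ K, ∀ i < n + 2, dist (θ i) (θ' i) ≤ (1 / 2 : ℝ) ^ (n + 1)) ∧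
      (∀ θ ∈ K, ∃ φ ∈ H, ∀ i ≤ n, θ i = φ i) ∧ (∀ θ ∈ K, ∃ ψ ∈ H, θ (n + 1) = ψ u) ∧
      (∀ θ ∈ K, p (θ u) = p (θ (n + 1))) ∧
      ∃ δ > 0, ∀ θ ∈ K, δ ≤ dist (θ u) (θ (n + 1)) := by
  have hext := not_small_extend hp hu hH hL
  let F : ℕ → Set (ℕ → Z) := fun k => {θ | 1 / ((k : ℝ) + 1) ≤ dist (θ u) (θ (n + 1))}
  have hF : ∀ k, MeasurableSet (F k) := fun k =>
    (isClosed_le continuous_const (by fun_prop)).measurableSet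
  have hne : u ≠ n + 1 := by omega
  have hne' : ∀ i ≤ n, i ≠ n + 1 := fun i hi => by omega
  obtain ⟨k, hk⟩ : ∃ k, ¬ Small p (n + 1) (extend p n u H ∩ F k) := by
    by_contra! hcon
    refine hext ((Small.iUnion hcon).mono fun θ hθ => ?_)
    have hpos : 0 < dist (θ u) (θ (n + 1)) := by
      obtain ⟨⟨φ, ψ⟩, ⟨-, -, h⟩, rfl⟩ := hθ
      simpa [hne] using h
    obtain ⟨k, hk⟩ := exists_nat_one_div_lt hpos
    exact mem_iUnion.2 ⟨k, hθ, hk.le⟩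
  obtain ⟨K, hKsub, hKa, hKL, hKd⟩ := exists_small_diam
    (analyticSet_inter (analyticSet_extend hp n u hH) (hF k).analyticSet) hk
    (by positivity : (0 : ℝ) < (1 / 2) ^ (n + 1)) (n + 2)
  refine ⟨K, ⟨hKa, hKL, hKd⟩, ?_, ?_, ?_, 1 / ((k : ℝ) + 1), by positivity,
    fun θ hθ => (hKsub hθ).2⟩
  · intro θ hθ
    obtain ⟨⟨φ, ψ⟩, ⟨⟨h1, h2⟩, -, -⟩, rfl⟩ := (hKsub hθ).1
    exact ⟨φ, h1, fun i hi => by simp [hne' i hi]⟩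
  · intro θ hθ
    obtain ⟨⟨φ, ψ⟩, ⟨⟨h1, h2⟩, -, -⟩, rfl⟩ := (hKsub hθ).1
    exact ⟨ψ, h2, by simp⟩
  · intro θ hθ
    obtain ⟨⟨φ, ψ⟩, ⟨-, h, -⟩, rfl⟩ := (hKsub hθ).1
    simpa [hne] using h

/-- If the domain of `p` is not a countable union of Borel sets on which `p` is injective, then
some fibre of `p` contains a nonempty perfect set, namely the closure of the limit `z` of
a fusion sequence. -/
theorem exists_uncountable_fibre {Z X : Type*} [MetricSpace Z] [SecondCountableTopology Z]
    [CompleteSpace Z] [MeasurableSpace Z] [BorelSpace Z] [TopologicalSpace X] [T2Space X]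
    {p : Z → X} (hp : Continuous p) (hL : ¬ Small p 0 univ) :
    ∃ x, ¬ (p ⁻¹' {x}).Countable := by
  obtain ⟨H0, -, hH0⟩ := exists_small_diam (MeasurableSet.univ.analyticSet) hL one_pos 1
  let St : ℕ → Type _ := fun n => {H : Set (ℕ → Z) // AnalyticSet H ∧ ¬ Small p n H ∧
    ∀ θ ∈ H, ∀ θ' ∈ H, ∀ i < n + 1, dist (θ i) (θ' i) ≤ (1 / 2 : ℝ) ^ n}
  -- This choice of `u` takes every value infinitely often.
  let u : ℕ → ℕ := fun n => n.unpair.1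
  have hu : ∀ n, u n ≤ n := fun n => Nat.unpair_left_le n
  choose nxt hnxt1 hnxt2 hnxt3 hnxt4 hnxt5 using fun (n : ℕ) (H : St n) =>
    exists_fusion_step hp (hu n) H.2.1 H.2.2.1
  let S : ∀ n, St n := fun n => Nat.rec ⟨H0, by simpa using hH0⟩
    (fun n H => ⟨nxt n H, hnxt1 n H⟩) n
  have hS : ∀ n, (S (n + 1)).1 = nxt n (S n) := fun n => rfl
  choose θ hθ using fun n => nonempty_of_not_small (S n).2.2.1
  have hdown : ∀ n k, ∀ η ∈ (S (n + k)).1, ∃ φ ∈ (S n).1, ∀ i ≤ n, η i = φ i := by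
    intro n k
    induction k with
    | zero => exact fun η hη => ⟨η, hη, fun _ _ => rfl⟩
    | succ k ih =>
      intro η hη
      obtain ⟨φ, hφ, h1⟩ := hnxt2 (n + k) (S (n + k)) η hη
      obtain ⟨ψ, hψ, h2⟩ := ih φ hφ
      exact ⟨ψ, hψ, fun i hi => (h1 i (by omega)).trans (h2 i hi)⟩
  have hdown' : ∀ n m, n ≤ m → ∃ φ ∈ (S n).1, ∀ i ≤ n, θ m i = φ i := by
    intro n m hnm
    obtain ⟨k, rfl⟩ := Nat.exists_eq_add_of_le hnm
    exact hdown n k _ (hθ _)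
  have hdist : ∀ n m i, i ≤ n → n ≤ m → dist (θ m i) (θ n i) ≤ (1 / 2 : ℝ) ^ n := by
    intro n m i hi hnm
    obtain ⟨φ, hφ, h⟩ := hdown' n m hnm
    rw [h i hi]
    exact (S n).2.2.2 φ hφ _ (hθ n) i (by omega)
  have hpow : Tendsto (fun n : ℕ => (1 / 2 : ℝ) ^ n) atTop (𝓝 0) :=
    tendsto_pow_atTop_nhds_zero_of_lt_one (by norm_num) (by norm_num)
  have hcauchy : ∀ i, CauchySeq fun n => θ n i := by
    intro i
    rw [Metric.cauchySeq_iff']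
    intro ε hε
    obtain ⟨N, hN⟩ := ((hpow.eventually_lt_const hε).and (eventually_ge_atTop i)).exists
    exact ⟨N, fun n hn => (hdist N n i hN.2 hn).trans_lt hN.1⟩
  choose z hz using fun i => cauchySeq_tendsto_of_complete (hcauchy i)
  have hzd : ∀ n, dist (z (u n)) (z (n + 1)) ≤ (1 / 2 : ℝ) ^ n := by
    intro n
    refine le_of_tendsto ((hz (u n)).dist (hz (n + 1))) ?_
    filter_upwards [eventually_ge_atTop (n + 1)] with m hm
    obtain ⟨φ, hφ, h1⟩ := hdown' n m (by omega)
    obtain ⟨η, hη, h2⟩ := hdown' (n + 1) m hm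
    obtain ⟨ψ, hψ, h3⟩ := hnxt3 n (S n) η hη
    rw [h1 _ (hu n), h2 _ le_rfl, h3]
    exact (S n).2.2.2 φ hφ ψ hψ _ (Nat.lt_succ_of_le (hu n))
  have hzne : ∀ n, z (n + 1) ≠ z (u n) := by
    intro n heq
    obtain ⟨δ, hδ, h⟩ := hnxt5 n (S n)
    have : δ ≤ dist (z (u n)) (z (n + 1)) := by
      refine ge_of_tendsto ((hz (u n)).dist (hz (n + 1))) ?_
      filter_upwards [eventually_ge_atTop (n + 1)] with m hm
      obtain ⟨η, hη, h2⟩ := hdown' (n + 1) m hm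
      rw [h2 _ le_rfl, h2 _ ((hu n).trans (Nat.le_succ n))]
      exact h η hη
    rw [heq, dist_self] at this
    linarith
  have hzp : ∀ n, p (z (u n)) = p (z (n + 1)) := by
    intro n
    refine tendsto_nhds_unique_of_eventuallyEq ((hp.tendsto _).comp (hz (u n)))
      ((hp.tendsto _).comp (hz (n + 1))) ?_
    filter_upwards [eventually_ge_atTop (n + 1)] with m hm
    obtain ⟨η, hη, h2⟩ := hdown' (n + 1) m hm
    simp only [Function.comp]
    rw [h2 _ le_rfl, h2 _ ((hu n).trans (Nat.le_succ n))]
    exact hnxt4 n (S n) η hη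
  have hz0 : ∀ n, p (z n) = p (z 0) := by
    intro n
    induction n using Nat.strong_induction_on with
    | _ n ih =>
      rcases n with _ | n
      · rfl
      · rw [← hzp n]
        exact ih _ (Nat.lt_succ_of_le (hu n))
  have hperf : Preperfect (range z) := by
    rw [preperfect_iff_nhds]
    rintro _ ⟨i, rfl⟩ U hU
    obtain ⟨ε, hε, hball⟩ := Metric.mem_nhds_iff.1 hU
    obtain ⟨N, hN⟩ := (eventually_atTop.1 (hpow.eventually_lt_const hε))
    have hui : u (Nat.pair i N) = i := by simp [u]
    refine ⟨z (Nat.pair i N + 1), ⟨hball ?_, mem_range_self _⟩, ?_⟩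
    · rw [Metric.mem_ball, dist_comm]
      have := hzd (Nat.pair i N)
      rw [hui] at this
      exact this.trans_lt (hN _ (Nat.right_le_pair i N))
    · have := hzne (Nat.pair i N)
      rwa [hui] at this
  obtain ⟨f, hf, -, hfinj⟩ := hperf.perfect_closure.exists_nat_bool_injection
    (range_nonempty z).closure
  refine ⟨p (z 0), fun hcount => ?_⟩
  have hsub : closure (range z) ⊆ p ⁻¹' {p (z 0)} :=
    closure_minimal (by rintro _ ⟨i, rfl⟩; exact hz0 i) (isClosed_singleton.preimage hp)
  have hc : (range f).Countable := hcount.mono (hf.trans hsub)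
  rw [← image_univ] at hc
  have hcu := Set.countable_of_injective_of_countable_image hfinj.injOn hc
  obtain ⟨e, he⟩ := (Set.countable_univ_iff.1 hcu).exists_injective_nat
  classical
  refine Function.cantor_injective (fun s : Set ℕ => e fun n => decide (n ∈ s)) fun s t hst => ?_
  ext n
  simpa using congrFun (he hst) n

/-- **Lusin–Novikov**: a countable-to-one Borel map between standard Borel spaces is injective on
each of countably many Borel sets that cover its domain. -/
theorem exists_cover_injOn {Z X : Type*} [MeasurableSpace Z] [StandardBorelSpace Z]
    [MeasurableSpace X] [StandardBorelSpace X] {p : Z → X} (hp : Measurable p)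
    (hc : ∀ x, (p ⁻¹' {x}).Countable) :
    ∃ B : ℕ → Set Z, (∀ n, MeasurableSet (B n)) ∧ (∀ n, InjOn p (B n)) ∧ ⋃ n, B n = univ := by
  let := upgradeStandardBorel Z
  let := upgradeStandardBorel X
  have hpol₀ : PolishSpace Z := inferInstance
  obtain ⟨t', hle, hcont, hpol⟩ := hp.exists_continuous
  have hb : @BorelSpace Z t' _ := by
    refine @BorelSpace.mk _ t' _ ?_
    rw [borel_eq_borel_of_le hpol hpol₀ hle]
    exact eq_borel_upgradeStandardBorel Z
  let : TopologicalSpace Z := t'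
  let := TopologicalSpace.upgradeIsCompletelyMetrizable Z
  have hs : Small p 0 univ := by
    by_contra hL
    obtain ⟨x, hx⟩ := exists_uncountable_fibre hcont hL
    exact hx (hc x)
  obtain ⟨v, B, h1, h2⟩ := hs
  refine ⟨B, fun n => (h1 n).2.1, fun n => (h1 n).2.2, eq_univ_of_forall fun z => ?_⟩
  obtain ⟨i, hi⟩ := h2 (fun _ => z) (mem_univ _)
  exact mem_iUnion.2 ⟨i, hi⟩

/-! ### Countable Borel equivalence relations as countable unions of partial injections -/

/-- The Feldman–Moore presentation of `E`: disjoint Borel graphs `Γ k` of partial injections, whose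
union is `E`. -/
structure IsGraphing {X : Type*} [MeasurableSpace X] (E : X → X → Prop)
    (Γ : ℕ → Set (X × X)) : Prop where
  meas : ∀ k, MeasurableSet (Γ k)
  disj : Pairwise (Function.onFun Disjoint Γ)
  injFst : ∀ k, InjOn Prod.fst (Γ k)
  injSnd : ∀ k, InjOn Prod.snd (Γ k)
  rel_iff : ∀ x y, E x y ↔ ∃ k, (x, y) ∈ Γ k

theorem exists_isGraphing {X : Type*} [MeasurableSpace X] [StandardBorelSpace X]
    {E : X → X → Prop} (hE : Equivalence E) (hEmeas : MeasurableSet {p : X × X | E p.1 p.2})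
    (hEcount : ∀ x, {y | E x y}.Countable) : ∃ Γ, IsGraphing E Γ := by
  have := hEmeas.standardBorel
  let Z := {p : X × X | E p.1 p.2}
  have h1 : ∀ x, ((fun z : Z => z.1.1) ⁻¹' {x}).Countable := by
    intro x
    refine Set.countable_of_injective_of_countable_image (f := fun z : Z => z.1.2) ?_
      ((hEcount x).mono ?_)
    · rintro ⟨⟨a, b⟩, h⟩ rfl ⟨⟨a', b'⟩, h'⟩ h2 h3
      simp_all
    · rintro _ ⟨⟨⟨a, b⟩, h⟩, rfl, rfl⟩
      exact h
  have h2 : ∀ x, ((fun z : Z => z.1.2) ⁻¹' {x}).Countable := by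
    intro x
    refine Set.countable_of_injective_of_countable_image (f := fun z : Z => z.1.1) ?_
      ((hEcount x).mono ?_)
    · rintro ⟨⟨a, b⟩, h⟩ rfl ⟨⟨a', b'⟩, h'⟩ h2 h3
      simp_all
    · rintro _ ⟨⟨⟨a, b⟩, h⟩, rfl, rfl⟩
      exact hE.symm h
  obtain ⟨B, hBm, hBi, hB⟩ := exists_cover_injOn (by fun_prop) h1
  obtain ⟨C, hCm, hCi, hC⟩ := exists_cover_injOn (by fun_prop) h2
  let G : ℕ → Set (X × X) := fun m => Subtype.val '' (B m.unpair.1 ∩ C m.unpair.2)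
  have hsub : ∀ k, disjointed G k ⊆ G k := fun k => disjointed_subset G k
  refine ⟨disjointed G, ?_, disjoint_disjointed G, ?_, ?_, ?_⟩
  · exact fun k => MeasurableSet.disjointed
      (fun m => hEmeas.subtype_image ((hBm _).inter (hCm _))) k
  · intro k a ha b hb hab
    obtain ⟨a, ha', rfl⟩ := hsub k ha
    obtain ⟨b, hb', rfl⟩ := hsub k hb
    rw [hBi _ ha'.1 hb'.1 hab]
  · intro k a ha b hb hab
    obtain ⟨a, ha', rfl⟩ := hsub k ha
    obtain ⟨b, hb', rfl⟩ := hsub k hb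
    rw [hCi _ ha'.2 hb'.2 hab]
  · intro x y
    rw [← mem_iUnion, iUnion_disjointed, mem_iUnion]
    constructor
    · intro h
      obtain ⟨n, hn⟩ := mem_iUnion.1 (hB ▸ mem_univ (⟨(x, y), h⟩ : Z))
      obtain ⟨m, hm⟩ := mem_iUnion.1 (hC ▸ mem_univ (⟨(x, y), h⟩ : Z))
      exact ⟨Nat.pair n m, ⟨(x, y), h⟩, by simpa using ⟨hn, hm⟩, rfl⟩
    · rintro ⟨k, ⟨⟨a, b⟩, h⟩, -, heq⟩
      cases heq
      exact h

theorem measurableSet_image_fst {X : Type*} [MeasurableSpace X] [StandardBorelSpace X]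
    {M : Set (X × X)} (hM : MeasurableSet M) (hi : InjOn Prod.fst M) {S : Set X}
    (hS : MeasurableSet S) : MeasurableSet (Prod.fst '' (M ∩ Prod.snd ⁻¹' S)) :=
  (hM.inter (measurable_snd hS)).image_of_measurable_injOn measurable_fst
    (hi.mono inter_subset_left)

/-- The saturation of a Borel set is Borel. -/
theorem IsGraphing.measurableSet_sat {X : Type*} [MeasurableSpace X] [StandardBorelSpace X]
    {E : X → X → Prop} {Γ : ℕ → Set (X × X)} (hΓ : IsGraphing E Γ) {S : Set X}
    (hS : MeasurableSet S) : MeasurableSet {x | ∃ y ∈ S, E x y} := by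
  have : {x | ∃ y ∈ S, E x y} = ⋃ k, Prod.fst '' (Γ k ∩ Prod.snd ⁻¹' S) := by
    ext x
    simp only [hΓ.rel_iff, mem_ofPred_eq, mem_iUnion, mem_image, mem_inter_iff, mem_preimage,
      Prod.exists, exists_and_right, exists_eq_right]
    grind
  rw [this]
  exact MeasurableSet.iUnion fun k => measurableSet_image_fst (hΓ.meas k) (hΓ.injFst k) hS

/-- For Borel `S` the set of points whose class meets `S` in an infinite set is Borel: since
the graphs are disjoint, this says that `x` is related to a point of `S` by infinitely many
of them. -/
theorem IsGraphing.measurableSet_infinite {X : Type*} [MeasurableSpace X] [StandardBorelSpace X]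
    {E : X → X → Prop} {Γ : ℕ → Set (X × X)} (hΓ : IsGraphing E Γ) {S : Set X}
    (hS : MeasurableSet S) : MeasurableSet {x | (S ∩ {y | E x y}).Infinite} := by
  let P : ℕ → Set X := fun k => Prod.fst '' (Γ k ∩ Prod.snd ⁻¹' S)
  have hP : ∀ k, MeasurableSet (P k) := fun k =>
    measurableSet_image_fst (hΓ.meas k) (hΓ.injFst k) hS
  have key : ∀ x, (S ∩ {y | E x y}).Infinite ↔ ∀ n, ∃ k ≥ n, x ∈ P k := by
    intro x
    choose! κ hκ using fun y => (hΓ.rel_iff x y).1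
    have hinj : InjOn κ (S ∩ {y | E x y}) := by
      intro y hy y' hy' h
      have h1 := hκ y hy.2
      have h2 := hκ y' hy'.2
      rw [← h] at h2
      exact congrArg Prod.snd (hΓ.injFst _ h1 h2 rfl)
    have himg : κ '' (S ∩ {y | E x y}) = {k | x ∈ P k} := by
      ext k
      constructor
      · rintro ⟨y, hy, rfl⟩
        exact ⟨(x, y), ⟨hκ y hy.2, hy.1⟩, rfl⟩
      · rintro ⟨⟨x', y⟩, ⟨h1, h2⟩, rfl⟩
        have hxy : E x' y := (hΓ.rel_iff _ _).2 ⟨k, h1⟩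
        refine ⟨y, ⟨h2, hxy⟩, ?_⟩
        by_contra hne
        exact Set.disjoint_left.1 (hΓ.disj hne) (hκ y hxy) h1
    rw [← Set.infinite_image_iff hinj, himg, ← Nat.frequently_atTop_iff_infinite,
      frequently_atTop]
  have : {x | (S ∩ {y | E x y}).Infinite} = ⋂ n, ⋃ k, ⋃ (_ : k ≥ n), P k := by
    ext x
    simp [key]
  rw [this]
  exact MeasurableSet.iInter fun n => MeasurableSet.iUnion fun k => MeasurableSet.iUnion fun _ =>
    hP k

/-- An increasing Borel exhaustion `L` of `X`, no member of which contains the trace of `A` on a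
class. The sets `S n` halve `A` repeatedly along a Borel separating sequence, keeping an infinite
part of each class; at most one point per class survives all the steps, and `L n` consists of these
points and of those outside `S n`. -/
theorem IsGraphing.exists_exhaustion {X : Type*} [MeasurableSpace X] [StandardBorelSpace X]
    {E : X → X → Prop} (hE : Equivalence E) {Γ : ℕ → Set (X × X)} (hΓ : IsGraphing E Γ)
    {A : Set X} (hA : MeasurableSet A) (hAinf : ∀ x, (A ∩ {y | E x y}).Infinite) :
    ∃ L : ℕ → Set X, Monotone L ∧ (∀ n, MeasurableSet (L n)) ∧ (∀ x, ∃ n, x ∈ L n) ∧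
      ∀ x n, ∃ y ∈ A, E x y ∧ y ∉ L n := by
  obtain ⟨f, hfm, hfinj⟩ :=
    MeasurableSpace.measurable_injection_nat_bool_of_countablySeparated X
  let U : ℕ → Set X := fun n => {x | f x n = true}
  have hU : ∀ n, MeasurableSet (U n) := fun n =>
    ((measurable_pi_apply n).comp hfm) (measurableSet_singleton true)
  let S : ℕ → Set X := fun n => Nat.rec A
    (fun n T => {x | x ∈ T ∧ (x ∈ U n ↔ (T ∩ U n ∩ {y | E x y}).Infinite)}) n
  have hS : ∀ n, S (n + 1) =
    {x | x ∈ S n ∧ (x ∈ U n ↔ (S n ∩ U n ∩ {y | E x y}).Infinite)} := fun n => rfl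
  have hSm : ∀ n, MeasurableSet (S n) := by
    intro n
    induction n with
    | zero => exact hA
    | succ n ih =>
      have h1 := hΓ.measurableSet_infinite (ih.inter (hU n))
      rw [hS]
      exact ih.inter (((hU n).iff h1))
  have hcls : ∀ {x y}, E x y → {z | E x z} = {z | E y z} := by
    intro x y hxy
    ext z
    exact ⟨fun h => hE.trans (hE.symm hxy) h, fun h => hE.trans hxy h⟩
  have hSinf : ∀ n x, (S n ∩ {y | E x y}).Infinite := by
    intro n
    induction n with
    | zero => exact hAinf
    | succ n ih =>
      intro x
      by_cases h : (S n ∩ U n ∩ {y | E x y}).Infinite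
      · refine h.mono ?_
        rintro y ⟨⟨h1, h2⟩, h3⟩
        refine ⟨⟨h1, ?_⟩, h3⟩
        rw [← hcls h3]
        exact iff_of_true h2 h
      · have h' : ((S n ∩ {y | E x y}) \ (S n ∩ U n ∩ {y | E x y})).Infinite :=
          (ih x).sdiff (not_infinite.1 h)
        refine h'.mono ?_
        rintro y ⟨⟨h1, h3⟩, h2⟩
        refine ⟨⟨h1, ?_⟩, h3⟩
        rw [← hcls h3]
        exact iff_of_false (fun hyU => h2 ⟨⟨h1, hyU⟩, h3⟩) h
  have hanti : Antitone S := antitone_nat_of_succ_le fun n x hx => hx.1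
  have hone : ∀ y y', E y y' → y ∈ ⋂ n, S n → y' ∈ ⋂ n, S n → y = y' := by
    intro y y' hyy hy hy'
    apply hfinj
    ext n
    have h1 : y ∈ S (n + 1) := mem_iInter.1 hy (n + 1)
    have h2 : y' ∈ S (n + 1) := mem_iInter.1 hy' (n + 1)
    have h3 := h1.2
    rw [hcls hyy] at h3
    exact Bool.eq_iff_iff.2 (h3.trans h2.2.symm)
  refine ⟨fun n => (S n)ᶜ ∪ ⋂ m, S m, ?_, ?_, ?_, ?_⟩
  · exact fun n m hnm => union_subset_union_left _ (compl_subset_compl.2 (hanti hnm))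
  · exact fun n => (hSm n).compl.union (MeasurableSet.iInter hSm)
  · intro x
    by_cases h : x ∈ ⋂ m, S m
    · exact ⟨0, Or.inr h⟩
    · rw [mem_iInter] at h
      push Not at h
      obtain ⟨n, hn⟩ := h
      exact ⟨n, Or.inl hn⟩
  · intro x n
    obtain ⟨y, hy, hy'⟩ := (hSinf n x).exists_notMem_finite
      (s := S n ∩ {y | E x y}) (t := (⋂ m, S m) ∩ {y | E x y}) (Set.Subsingleton.finite
        fun a ha b hb => hone a b (hE.trans (hE.symm ha.2) hb.2) ha.1 hb.1)
    refine ⟨y, hanti (Nat.zero_le n) hy.1, hy.2, ?_⟩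
    rintro (h | h)
    · exact h hy.1
    · exact hy' ⟨h, hy.2⟩

/-! ### A generic sequence of choices -/

/-- Suppose that from every state `s` and for every goal `i`, every point reaches `Q i` after some
one of countably many moves. Then some single sequence of moves brings a comeagre set of points to
every goal. In a nonempty open set, some move takes a nonmeagre set of points to `Q i`; it
suffices to make such a move once for each goal and each basic open set, because a Borel set that is
nonmeagre in each open set is comeagre. -/
theorem exists_generic_sequence {X : Type*} [TopologicalSpace X] [PolishSpace X]
    [MeasurableSpace X] [BorelSpace X] {σ κ ι : Type*} [Countable κ] [Countable ι]
    (s₀ : σ) (next : σ → κ → σ) (Q : ι → σ → Set X) (hQ : ∀ i s, MeasurableSet (Q i s))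
    (hcov : ∀ i s x, ∃ k, x ∈ Q i (next s k)) (k₀ : κ) :
    ∃ s : ℕ → σ, s 0 = s₀ ∧ (∀ n, ∃ k, s (n + 1) = next (s n) k) ∧
      ∀ i, IsMeagre (⋃ n, Q i (s n))ᶜ := by
  let b := TopologicalSpace.countableBasis X
  have hb := TopologicalSpace.isBasis_countableBasis X
  have hpick : ∀ (t : ι × b) (s : σ), ∃ k,
      (t.2.1.Nonempty → ¬ IsMeagre (Q t.1 (next s k) ∩ t.2.1)) := by
    rintro ⟨i, U, hU⟩ s
    by_contra! hcon
    refine not_isMeagre_of_isOpen (hb.isOpen hU) (hcon k₀).1 ?_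
    refine (isMeagre_iUnion fun k => (hcon k).2).mono fun x hx => ?_
    obtain ⟨k, hk⟩ := hcov i s x
    exact mem_iUnion.2 ⟨k, hk, hx⟩
  choose pick hpick using hpick
  rcases isEmpty_or_nonempty (ι × b) with hemp | hne
  · refine ⟨fun n => Nat.rec s₀ (fun _ s => next s k₀) n, rfl, fun n => ⟨k₀, rfl⟩, fun i => ?_⟩
    have hXe : IsEmpty X := by
      refine ⟨fun x => ?_⟩
      obtain ⟨U, hU, -, -⟩ := hb.exists_subset_of_mem_open (mem_univ x) isOpen_univ
      exact hemp.false (i, ⟨U, hU⟩)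
    rw [Set.eq_empty_of_isEmpty (_ᶜ)]
    exact IsMeagre.empty
  · have : Countable b := TopologicalSpace.countable_countableBasis X
    obtain ⟨task, htask⟩ := exists_surjective_nat (ι × b)
    let s : ℕ → σ := fun n => Nat.rec s₀ (fun n s => next s (pick (task n) s)) n
    have hs : ∀ n, s (n + 1) = next (s n) (pick (task n) (s n)) := fun n => rfl
    refine ⟨s, rfl, fun n => ⟨_, hs n⟩, fun i => ?_⟩
    obtain ⟨O, hO, hQO⟩ := (MeasurableSet.iUnion fun n => hQ i (s n)).compl.residualEq_isOpen
    have hdiff : IsMeagre {x | ¬ (x ∈ (⋃ n, Q i (s n))ᶜ ↔ x ∈ O)} := by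
      have h : ∀ᶠ x in residual X, (x ∈ (⋃ n, Q i (s n))ᶜ) = (x ∈ O) := hQO
      rw [IsMeagre]
      filter_upwards [h] with x hx
      exact not_not.2 (iff_of_eq hx)
    rcases O.eq_empty_or_nonempty with rfl | ⟨x, hx⟩
    · refine hdiff.mono fun x hx => ?_
      simp only [mem_empty_iff_false, iff_false, not_not, mem_ofPred_eq]
      exact hx
    · exfalso
      obtain ⟨U, hU, hxU, hUO⟩ := hb.exists_subset_of_mem_open hx hO
      obtain ⟨n, hn⟩ := htask (i, ⟨U, hU⟩)
      have h := hpick (task n) (s n)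
      rw [← hs, hn] at h
      refine h ⟨x, hxU⟩ (hdiff.mono ?_)
      rintro y ⟨hy, hyU⟩
      simp only [mem_ofPred_eq, mem_compl_iff, hUO hyU, iff_true, not_not]
      exact mem_iUnion.2 ⟨n + 1, hy⟩

/-! ### Partial matchings -/

/-- A Borel set `M` of pairs that is the graph of a partial injection from `A` to `B` inside `E`,
with domain contained in `LA` and range contained in `LB`. -/
structure IsMatching {X : Type*} [MeasurableSpace X] (E : X → X → Prop) (A B LA LB : Set X)
    (M : Set (X × X)) : Prop where
  meas : MeasurableSet M
  injFst : InjOn Prod.fst M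
  injSnd : InjOn Prod.snd M
  rel : ∀ p ∈ M, E p.1 p.2
  mem : ∀ p ∈ M, p.1 ∈ A ∩ LA ∧ p.2 ∈ B ∩ LB

theorem IsMatching.measurableSet_fst {X : Type*} [MeasurableSpace X] [StandardBorelSpace X]
    {E : X → X → Prop} {A B LA LB : Set X} {M : Set (X × X)} (hM : IsMatching E A B LA LB M) :
    MeasurableSet (Prod.fst '' M) :=
  hM.meas.image_of_measurable_injOn measurable_fst hM.injFst

theorem IsMatching.measurableSet_snd {X : Type*} [MeasurableSpace X] [StandardBorelSpace X]
    {E : X → X → Prop} {A B LA LB : Set X} {M : Set (X × X)} (hM : IsMatching E A B LA LB M) :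
    MeasurableSet (Prod.snd '' M) :=
  hM.meas.image_of_measurable_injOn measurable_snd hM.injSnd

/-- Enlarge `M` by all the pairs in `G` that join an unmatched point of `A ∩ LA` to an unmatched
point of `B ∩ LB`. -/
def grow {X : Type*} (A B LA LB : Set X) (G M : Set (X × X)) : Set (X × X) :=
  M ∪ (G ∩ ((A ∩ LA) \ (Prod.fst '' M)) ×ˢ ((B ∩ LB) \ (Prod.snd '' M)))

theorem IsMatching.grow {X : Type*} [MeasurableSpace X] [StandardBorelSpace X]
    {E : X → X → Prop} {A B LA LB LA' LB' : Set X} {M G : Set (X × X)}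
    (hM : IsMatching E A B LA LB M) (hA : MeasurableSet A) (hB : MeasurableSet B)
    (hLA' : MeasurableSet LA') (hLB' : MeasurableSet LB') (hLA : LA ⊆ LA') (hLB : LB ⊆ LB')
    (hG : MeasurableSet G) (hG1 : InjOn Prod.fst G) (hG2 : InjOn Prod.snd G)
    (hGE : ∀ p ∈ G, E p.1 p.2) :
    IsMatching E A B LA' LB' (grow A B LA' LB' G M) where
  meas := hM.meas.union (hG.inter (((hA.inter hLA').diff hM.measurableSet_fst).prod
    ((hB.inter hLB').diff hM.measurableSet_snd)))
  injFst := by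
    rintro p (hp | ⟨hp, hp1, hp2⟩) q (hq | ⟨hq, hq1, hq2⟩) h
    · exact hM.injFst hp hq h
    · exact absurd ⟨p, hp, h⟩ hq1.2
    · exact absurd ⟨q, hq, h.symm⟩ hp1.2
    · exact hG1 hp hq h
  injSnd := by
    rintro p (hp | ⟨hp, hp1, hp2⟩) q (hq | ⟨hq, hq1, hq2⟩) h
    · exact hM.injSnd hp hq h
    · exact absurd ⟨p, hp, h⟩ hq2.2
    · exact absurd ⟨q, hq, h.symm⟩ hp2.2
    · exact hG2 hp hq h
  rel := by
    rintro p (hp | ⟨hp, -⟩)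
    exacts [hM.rel p hp, hGE p hp]
  mem := by
    rintro p (hp | ⟨-, hp1, hp2⟩)
    · have := hM.mem p hp
      exact ⟨⟨this.1.1, hLA this.1.2⟩, this.2.1, hLB this.2.2⟩
    · exact ⟨hp1.1, hp2.1⟩

/-- The map `f` whose graph over the domain of `M` is `M`, extended by the identity, is Borel. -/
theorem exists_measurable_of_injOn {X : Type*} [MeasurableSpace X] [StandardBorelSpace X]
    {M : Set (X × X)} (hM : MeasurableSet M) (hi : InjOn Prod.fst M) :
    ∃ f : X → X, Measurable f ∧ ∀ p ∈ M, f p.1 = p.2 := by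
  classical
  let f : X → X := fun a => if h : ∃ b, (a, b) ∈ M then h.choose else a
  have hf : ∀ p ∈ M, f p.1 = p.2 := by
    rintro ⟨a, b⟩ hp
    have h : ∃ b, (a, b) ∈ M := ⟨b, hp⟩
    have hfa : f a = h.choose := dif_pos h
    rw [hfa]
    exact congrArg Prod.snd (hi h.choose_spec hp rfl)
  have hf' : ∀ a, a ∉ Prod.fst '' M → f a = a := by
    intro a ha
    exact dif_neg fun ⟨b, hb⟩ => ha ⟨(a, b), hb, rfl⟩
  refine ⟨f, fun S hS => ?_, hf⟩
  have : f ⁻¹' S = Prod.fst '' (M ∩ Prod.snd ⁻¹' S) ∪ ((Prod.fst '' M)ᶜ ∩ S) := by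
    ext a
    by_cases ha : a ∈ Prod.fst '' M
    · obtain ⟨⟨a, b⟩, hp, rfl⟩ := ha
      have h1 := hf _ hp
      simp only at h1
      constructor
      · intro h
        exact Or.inl ⟨(a, b), ⟨hp, by rwa [mem_preimage, h1] at h⟩, rfl⟩
      · rintro (⟨q, ⟨hq, hqS⟩, hqa⟩ | ⟨h, -⟩)
        · obtain rfl := hi hq hp hqa
          rw [mem_preimage, h1]
          exact hqS
        · exact absurd ⟨(a, b), hp, rfl⟩ h
    · rw [mem_preimage, hf' a ha]
      constructor
      · exact fun h => Or.inr ⟨ha, h⟩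
      · rintro (⟨q, ⟨hq, -⟩, hqa⟩ | ⟨-, h⟩)
        · exact absurd ⟨q, hq, hqa⟩ ha
        · exact h
  rw [this]
  exact (measurableSet_image_fst hM hi hS).union
    ((hM.image_of_measurable_injOn measurable_fst hi).compl.inter hS)

end GenericMatching

open GenericMatching

/-- For an aperiodic CBER `E` on a Polish space `X` and Borel sets `A, B`
each meeting every `E`-class in an infinite set, there is a comeagre `E`-invariant Borel
set `Y` and a Borel bijection `f : A ∩ Y → B ∩ Y` whose graph is contained in `E`. -/
theorem stmt_0 {X : Type*} [TopologicalSpace X] [PolishSpace X]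
    [MeasurableSpace X] [BorelSpace X]
    (E : X → X → Prop) (hE : Equivalence E)
    (hEmeas : MeasurableSet {p : X × X | E p.1 p.2})
    (hEcount : ∀ x, {y | E x y}.Countable)
    (hEaper : ∀ x, {y | E x y}.Infinite)
    (A B : Set X) (hA : MeasurableSet A) (hB : MeasurableSet B)
    (hAinf : ∀ x, (A ∩ {y | E x y}).Infinite)
    (hBinf : ∀ x, (B ∩ {y | E x y}).Infinite) :
    ∃ Y : Set X, MeasurableSet Y ∧ IsMeagre Yᶜ ∧
      (∀ x y, E x y → x ∈ Y → y ∈ Y) ∧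
      ∃ f : X → X, Measurable f ∧ Set.BijOn f (A ∩ Y) (B ∩ Y) ∧
        ∀ x ∈ A ∩ Y, E x (f x) := by
  obtain ⟨Γ, hΓ⟩ := exists_isGraphing hE hEmeas hEcount
  obtain ⟨LA, hLAmono, hLAm, hLA, hLAout⟩ := hΓ.exists_exhaustion hE hA hAinf
  obtain ⟨LB, hLBmono, hLBm, hLB, hLBout⟩ := hΓ.exists_exhaustion hE hB hBinf
  -- A state is a matching confined to some level `N` of the two exhaustions, so that every class
  -- still has unmatched points of `A` and of `B` outside that level.
  let σ := {s : Set (X × X) × ℕ // IsMatching E A B (LA s.2) (LB s.2) s.1}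
  let s₀ : σ := ⟨(∅, 0), MeasurableSet.empty, injOn_empty _, injOn_empty _,
    fun _ h => h.elim, fun _ h => h.elim⟩
  let next : σ → ℕ × ℕ → σ := fun s k =>
    ⟨(grow A B (LA (max s.1.2 k.2)) (LB (max s.1.2 k.2)) (Γ k.1) s.1.1, max s.1.2 k.2),
      s.2.grow hA hB (hLAm _) (hLBm _) (hLAmono (le_max_left _ _)) (hLBmono (le_max_left _ _))
        (hΓ.meas _) (hΓ.injFst _) (hΓ.injSnd _) fun p hp => (hΓ.rel_iff _ _).2 ⟨_, hp⟩⟩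
  -- Goal `i` for a point `x`: the image of `x` under the `i`-th partial injection is matched if it
  -- lies in `A` (left summand) or in `B` (right summand).
  let W : ℕ ⊕ ℕ → σ → Set X := fun i s =>
    Sum.elim (fun _ => A \ Prod.fst '' s.1.1) (fun _ => B \ Prod.snd '' s.1.1) i
  let idx : ℕ ⊕ ℕ → ℕ := Sum.elim id id
  let Q : ℕ ⊕ ℕ → σ → Set X := fun i s => (Prod.fst '' (Γ (idx i) ∩ Prod.snd ⁻¹' W i s))ᶜ
  have hW : ∀ i s, MeasurableSet (W i s) := by
    rintro (i | i) s
    exacts [hA.diff s.2.measurableSet_fst, hB.diff s.2.measurableSet_snd]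
  have hQm : ∀ i s, MeasurableSet (Q i s) := fun i s =>
    (measurableSet_image_fst (hΓ.meas _) (hΓ.injFst _) (hW i s)).compl
  have hcov : ∀ i s x, ∃ k, x ∈ Q i (next s k) := by
    intro i s x
    by_cases hx : ∃ y, (x, y) ∈ Γ (idx i)
    · obtain ⟨y, hy⟩ := hx
      suffices h : ∃ k, y ∉ W i (next s k) by
        obtain ⟨k, hk⟩ := h
        refine ⟨k, ?_⟩
        rintro ⟨q, ⟨hq, hqW⟩, hqx⟩
        obtain rfl := hΓ.injFst _ hq hy hqx
        exact hk hqW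
      rcases i with i | i
      · by_cases hyW : y ∈ A \ Prod.fst '' s.1.1
        · obtain ⟨z, hzB, hyz, hz⟩ := hLBout y s.1.2
          obtain ⟨j, hj⟩ := (hΓ.rel_iff _ _).1 hyz
          obtain ⟨n, hn⟩ := hLA y
          obtain ⟨m, hm⟩ := hLB z
          refine ⟨(j, max n m), fun hcon => hcon.2 ⟨(y, z), Or.inr ⟨hj, ⟨⟨hyW.1, ?_⟩, hyW.2⟩,
            ⟨hzB, ?_⟩, ?_⟩, rfl⟩⟩
          · exact hLAmono (by simp) hn
          · exact hLBmono (by simp) hm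
          · rintro ⟨q, hq, rfl⟩
            exact hz (s.2.mem q hq).2.2
        · refine ⟨(0, 0), fun hcon => hyW ⟨hcon.1, fun h => hcon.2 (image_mono ?_ h)⟩⟩
          exact subset_union_left
      · by_cases hyW : y ∈ B \ Prod.snd '' s.1.1
        · obtain ⟨z, hzA, hyz, hz⟩ := hLAout y s.1.2
          obtain ⟨j, hj⟩ := (hΓ.rel_iff _ _).1 (hE.symm hyz)
          obtain ⟨n, hn⟩ := hLB y
          obtain ⟨m, hm⟩ := hLA z
          refine ⟨(j, max n m), fun hcon => hcon.2 ⟨(z, y), Or.inr ⟨hj, ⟨⟨hzA, ?_⟩, ?_⟩,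
            ⟨hyW.1, ?_⟩, hyW.2⟩, rfl⟩⟩
          · exact hLAmono (by simp) hm
          · rintro ⟨q, hq, rfl⟩
            exact hz (s.2.mem q hq).1.2
          · exact hLBmono (by simp) hn
        · refine ⟨(0, 0), fun hcon => hyW ⟨hcon.1, fun h => hcon.2 (image_mono ?_ h)⟩⟩
          exact subset_union_left
    · refine ⟨(0, 0), ?_⟩
      rintro ⟨⟨x', y⟩, ⟨hq, -⟩, rfl⟩
      exact hx ⟨y, hq⟩
  obtain ⟨s, -, hs, hmeagre⟩ := exists_generic_sequence s₀ next Q hQm hcov (0, 0)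
  have hmono : Monotone fun n => (s n).1.1 := by
    refine monotone_nat_of_le_succ fun n => ?_
    obtain ⟨k, hk⟩ := hs n
    rw [hk]
    exact subset_union_left
  let M : Set (X × X) := ⋃ n, (s n).1.1
  have hMm : MeasurableSet M := MeasurableSet.iUnion fun n => (s n).2.meas
  have hdir : ∀ p ∈ M, ∀ q ∈ M, ∃ n, p ∈ (s n).1.1 ∧ q ∈ (s n).1.1 := by
    intro p hp q hq
    obtain ⟨n, hn⟩ := mem_iUnion.1 hp
    obtain ⟨m, hm⟩ := mem_iUnion.1 hq
    exact ⟨max n m, hmono (le_max_left _ _) hn, hmono (le_max_right _ _) hm⟩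
  have hMatch : IsMatching E A B univ univ M := by
    refine ⟨hMm, fun p hp q hq h => ?_, fun p hp q hq h => ?_, fun p hp => ?_, fun p hp => ?_⟩
    · obtain ⟨n, h1, h2⟩ := hdir p hp q hq
      exact (s n).2.injFst h1 h2 h
    · obtain ⟨n, h1, h2⟩ := hdir p hp q hq
      exact (s n).2.injSnd h1 h2 h
    · obtain ⟨n, h1⟩ := mem_iUnion.1 hp
      exact (s n).2.rel p h1
    · obtain ⟨n, h1⟩ := mem_iUnion.1 hp
      have := (s n).2.mem p h1
      exact ⟨⟨this.1.1, trivial⟩, this.2.1, trivial⟩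
  obtain ⟨f, hfm, hf⟩ := exists_measurable_of_injOn hMm hMatch.injFst
  let bad : Set X := {x | ∃ y ∈ A \ Prod.fst '' M, E x y} ∪ {x | ∃ y ∈ B \ Prod.snd '' M, E x y}
  have hYA : ∀ x ∈ badᶜ, x ∈ A → x ∈ Prod.fst '' M := by
    intro x hx hxA
    by_contra h
    exact hx (Or.inl ⟨x, ⟨hxA, h⟩, hE.refl x⟩)
  have hYB : ∀ x ∈ badᶜ, x ∈ B → x ∈ Prod.snd '' M := by
    intro x hx hxB
    by_contra h
    exact hx (Or.inr ⟨x, ⟨hxB, h⟩, hE.refl x⟩)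
  have hinv : ∀ x y, E x y → x ∈ badᶜ → y ∈ badᶜ := by
    rintro x y hxy hx (⟨z, hz, hyz⟩ | ⟨z, hz, hyz⟩)
    · exact hx (Or.inl ⟨z, hz, hE.trans hxy hyz⟩)
    · exact hx (Or.inr ⟨z, hz, hE.trans hxy hyz⟩)
  refine ⟨badᶜ, ?_, ?_, hinv, f, hfm, ⟨?_, ?_, ?_⟩, ?_⟩
  · exact ((hΓ.measurableSet_sat (hA.diff hMatch.measurableSet_fst)).union
      (hΓ.measurableSet_sat (hB.diff hMatch.measurableSet_snd))).compl
  · rw [compl_compl]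
    refine (isMeagre_iUnion hmeagre).mono ?_
    rintro x (⟨y, ⟨hyA, hyM⟩, hxy⟩ | ⟨y, ⟨hyB, hyM⟩, hxy⟩)
    · obtain ⟨i, hi⟩ := (hΓ.rel_iff _ _).1 hxy
      refine mem_iUnion.2 ⟨Sum.inl i, fun hcon => ?_⟩
      obtain ⟨n, hn⟩ := mem_iUnion.1 hcon
      exact hn ⟨(x, y), ⟨hi, hyA, fun h => hyM (image_mono (subset_iUnion _ n) h)⟩, rfl⟩
    · obtain ⟨i, hi⟩ := (hΓ.rel_iff _ _).1 hxy
      refine mem_iUnion.2 ⟨Sum.inr i, fun hcon => ?_⟩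
      obtain ⟨n, hn⟩ := mem_iUnion.1 hcon
      exact hn ⟨(x, y), ⟨hi, hyB, fun h => hyM (image_mono (subset_iUnion _ n) h)⟩, rfl⟩
  · rintro x ⟨hxA, hxY⟩
    obtain ⟨p, hp, rfl⟩ := hYA x hxY hxA
    rw [hf p hp]
    exact ⟨(hMatch.mem p hp).2.1, hinv _ _ (hMatch.rel p hp) hxY⟩
  · rintro x ⟨hxA, hxY⟩ y ⟨hyA, hyY⟩ hxy
    obtain ⟨p, hp, rfl⟩ := hYA x hxY hxA
    obtain ⟨q, hq, rfl⟩ := hYA y hyY hyA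
    rw [hf p hp, hf q hq] at hxy
    rw [hMatch.injSnd hp hq hxy]
  · rintro y ⟨hyB, hyY⟩
    obtain ⟨p, hp, rfl⟩ := hYB y hyY hyB
    exact ⟨p.1, ⟨(hMatch.mem p hp).1.1, hinv _ _ (hE.symm (hMatch.rel p hp)) hyY⟩, hf p hp⟩
  · rintro x ⟨hxA, hxY⟩
    obtain ⟨p, hp, rfl⟩ := hYA x hxY hxA
    rw [hf p hp]
    exact hMatch.rel p hp
end

section
/- Let E be a countable Borel equivalence relation on a standard Borel space X, let R, S ⊆ X be disjoint Borel sets each having infinite intersection with every E-class, and let F be the Borel subequivalence relation defined by x F y ⇔ (x E y and (x ∈ R ⇔ y ∈ R) and (x ∈ S ⇔ y ∈ S)). If F is compressible, then there is a Borel bijection f : R → S whose graph is contained in E. -/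
/-!
The argument rests on the Lusin–Novikov theorem (`sigmaInj_univ`): a countable-to-one Borel map
`f : P → X` between standard Borel spaces is injective on each member of some countable cover
of `P` by Borel sets. Call a subset of `P` small if it is a countable union of Borel sets on
which `f` is injective, and call a family `(A k)` large if the images `f '' (A k \ C)` have a common
point for every small `C`. For `k ≠ l` with `A k = A l`, these two members of a large family can be
shrunk to disjoint closed sets of small diameter with the family staying large
(`LargeFam.split`): otherwise a single small `C` works against all pairs of sets from a countable
separating family, so `f` is injective on the points of `A k \ C` lying over the common image of
all `A i \ C`. As the images involved are analytic, Lusin separation encloses this set of points in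
a Borel set on which `f` is injective, and adding that set to `C` contradicts largeness. If `P` is
not small, iterating the splitting gives a Cantor scheme whose branches all lie in one fibre of `f`,
which is then uncountable.

Applied to the first projection of `E`, the theorem gives Borel maps `φ n : X → X` such that `E x y`
holds iff `φ n x = y` for some `n`, hence Borel selectors for Borel conditions on `E`-classes.
The compression `g` restricts to `S`, and `S \ g '' S` meets every `E`-class because `S ∩ [x]_E` is
a single `F`-class. Let `r x` be a Borel choice of a point of `S \ g '' S` in the class of `x`, and
`i x` the least index with `φ (i x) (r x) = x`. Since the sets `g^[n] '' (S \ g '' S)` are pairwise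
disjoint, `x ↦ g^[i x] (r x)` is a Borel injection of `X` into `S` with graph in `E`. The same
holds for `R`, and the Schröder–Bernstein construction combines the two injections.
-/

open Set MeasureTheory Filter Topology

/-! ### The Lusin–Novikov theorem -/

/-- `C` is a countable union of measurable sets on each of which `f` is injective. -/
def SigmaInj {P X : Type*} [MeasurableSpace P] (f : P → X) (C : Set P) : Prop :=
  ∃ D : ℕ → Set P, (∀ n, MeasurableSet (D n) ∧ InjOn f (D n)) ∧ C = ⋃ n, D n

/-- The family `(A k)`, `k ∈ K`, is large if no `SigmaInj` set `C` makes the sets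
`f '' (A k \ C)` have empty intersection. -/
def LargeFam {P X J : Type*} [MeasurableSpace P] (f : P → X) (K : Set J) (A : J → Set P) : Prop :=
  ∀ C, SigmaInj f C → ∃ x, ∀ k ∈ K, ∃ a ∈ A k \ C, f a = x

section
variable {P X J : Type*} [MeasurableSpace P] {f : P → X}

lemma SigmaInj.measurableSet {C : Set P} (h : SigmaInj f C) : MeasurableSet C := by
  obtain ⟨D, hD, rfl⟩ := h
  exact MeasurableSet.iUnion fun n => (hD n).1

lemma SigmaInj.of_injOn {C : Set P} (hC : MeasurableSet C) (h : InjOn f C) : SigmaInj f C :=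
  ⟨fun _ => C, fun _ => ⟨hC, h⟩, (iUnion_const C).symm⟩

lemma SigmaInj.empty : SigmaInj f (∅ : Set P) :=
  .of_injOn MeasurableSet.empty (injOn_empty f)

lemma SigmaInj.iUnion {ι : Type*} [Countable ι] {C : ι → Set P} (h : ∀ i, SigmaInj f (C i)) :
    SigmaInj f (⋃ i, C i) := by
  rcases isEmpty_or_nonempty ι with hι | hι
  · simpa using SigmaInj.empty
  choose D hD hC using h
  obtain ⟨e, he⟩ := exists_surjective_nat (ι × ℕ)
  refine ⟨fun n => D (e n).1 (e n).2, fun n => hD _ _, ?_⟩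
  rw [he.iUnion_comp (fun q : ι × ℕ => D q.1 q.2), iUnion_prod']
  simp_rw [hC]

lemma SigmaInj.union {C C' : Set P} (h : SigmaInj f C) (h' : SigmaInj f C') :
    SigmaInj f (C ∪ C') := by
  rw [union_eq_iUnion]
  exact .iUnion fun b => by cases b <;> assumption

/-- Suppose `f` is injective on `D` and the pieces of `D` cut out by a countable separating family
have analytic images. Then Lusin separation of the images of disjoint pieces yields a measurable
superset of `D` on which `f` is still injective. -/
lemma exists_injOn_measurable_superset [TopologicalSpace X] [T2Space X] [MeasurableSpace X]
    [OpensMeasurableSpace X] (hf : Measurable f) {ι : Type*} [Countable ι] {𝒱 : ι → Set P}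
    (h𝒱 : ∀ i, MeasurableSet (𝒱 i))
    (hsep : ∀ a b, a ≠ b → ∃ i j, a ∈ 𝒱 i ∧ b ∈ 𝒱 j ∧ Disjoint (𝒱 i) (𝒱 j))
    {D : Set P} (hD : InjOn f D) (han : ∀ i, AnalyticSet (f '' (D ∩ 𝒱 i))) :
    ∃ D', D ⊆ D' ∧ MeasurableSet D' ∧ InjOn f D' := by
  have key : ∀ q : {q : ι × ι // Disjoint (𝒱 q.1) (𝒱 q.2)},
      MeasurablySeparable (f '' (D ∩ 𝒱 q.1.1)) (f '' (D ∩ 𝒱 q.1.2)) := by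
    rintro ⟨⟨i, j⟩, hij⟩
    refine (han i).measurablySeparable (han j) ?_
    rw [disjoint_left]
    rintro _ ⟨a, ⟨haD, hai⟩, rfl⟩ ⟨b, ⟨hbD, hbj⟩, hab⟩
    have := hD hbD haD hab
    subst this
    exact disjoint_left.1 hij hai hbj
  choose B hB1 hB2 hBm using key
  refine ⟨⋂ q, ((𝒱 q.1.1)ᶜ ∪ f ⁻¹' B q) ∩ ((𝒱 q.1.2)ᶜ ∪ (f ⁻¹' B q)ᶜ), ?_, ?_, ?_⟩
  · intro a ha
    refine mem_iInter.2 fun q => ⟨?_, ?_⟩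
    · by_cases h : a ∈ 𝒱 q.1.1
      · exact Or.inr (hB1 q ⟨a, ⟨ha, h⟩, rfl⟩)
      · exact Or.inl h
    · by_cases h : a ∈ 𝒱 q.1.2
      · exact Or.inr fun h' => disjoint_left.1 (hB2 q) ⟨a, ⟨ha, h⟩, rfl⟩ h'
      · exact Or.inl h
  · exact MeasurableSet.iInter fun q => ((h𝒱 _).compl.union (hf (hBm q))).inter
      ((h𝒱 _).compl.union (hf (hBm q)).compl)
  · intro a ha b hb hab
    by_contra hne
    obtain ⟨i, j, hi, hj, hij⟩ := hsep a b hne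
    have h1 := (mem_iInter.1 ha ⟨(i, j), hij⟩).1
    have h2 := (mem_iInter.1 hb ⟨(i, j), hij⟩).2
    rcases h1 with h1 | h1
    · exact h1 hi
    rcases h2 with h2 | h2
    · exact h2 hj
    · exact h2 (by rw [mem_preimage, ← hab]; exact h1)

/-- The members are closed balls of radius `1 / (m + 1)` around the points of a dense sequence. -/
lemma exists_separating_family (P : Type*) [MetricSpace P] [SecondCountableTopology P]
    {ε : ENNReal} (hε : 0 < ε) :
    ∃ (ι : Type) (_ : Countable ι) (𝒱 : ι → Set P),
      (∀ i, IsClosed (𝒱 i) ∧ Metric.ediam (𝒱 i) ≤ ε) ∧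
      ∀ a b, a ≠ b → ∃ i j, a ∈ 𝒱 i ∧ b ∈ 𝒱 j ∧ Disjoint (𝒱 i) (𝒱 j) := by
  rcases isEmpty_or_nonempty P with hP | hP
  · exact ⟨Empty, inferInstance, Empty.elim, fun i => i.elim, fun a => hP.elim a⟩
  obtain ⟨u, hu⟩ := TopologicalSpace.exists_dense_seq P
  refine ⟨{q : ℕ × ℕ // Metric.ediam (Metric.closedBall (u q.1) (1 / ((q.2 : ℝ) + 1))) ≤ ε},
    inferInstance, fun q => Metric.closedBall (u q.1.1) (1 / ((q.1.2 : ℝ) + 1)),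
    fun q => ⟨Metric.isClosed_closedBall, q.2⟩, ?_⟩
  intro a b hab
  obtain ⟨δ, hδ0, hδ⟩ : ∃ δ : ℝ, 0 < δ ∧ ENNReal.ofReal δ < ε := by
    obtain ⟨c, hc0, hc⟩ := ENNReal.lt_iff_exists_nnreal_btwn.1 hε
    exact ⟨c, by exact_mod_cast hc0, by simpa using hc⟩
  have hd : 0 < dist a b := dist_pos.2 hab
  obtain ⟨m, hm⟩ := exists_nat_one_div_lt (show 0 < min (δ / 2) (dist a b / 4) by positivity)
  have hm1 := lt_of_lt_of_le hm (min_le_left _ _)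
  have hm2 := lt_of_lt_of_le hm (min_le_right _ _)
  have hm0 : (0 : ℝ) < 1 / ((m : ℝ) + 1) := by positivity
  obtain ⟨i, hi⟩ := hu.exists_dist_lt a hm0
  obtain ⟨j, hj⟩ := hu.exists_dist_lt b hm0
  have hdiam : ∀ x : P, Metric.ediam (Metric.closedBall x (1 / ((m : ℝ) + 1))) ≤ ε := by
    intro x
    refine (Metric.ediam_le_of_forall_dist_le (C := δ) fun y hy z hz => ?_).trans hδ.le
    rw [Metric.mem_closedBall] at hy hz
    linarith [dist_triangle_right y z x]
  refine ⟨⟨(i, m), hdiam _⟩, ⟨(j, m), hdiam _⟩, hi.le, hj.le, ?_⟩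
  refine Metric.closedBall_disjoint_closedBall ?_
  have h1 := dist_triangle a (u i) b
  have h2 := dist_triangle (u i) (u j) b
  rw [dist_comm] at hj
  dsimp only
  linarith

/-- Two equal members of a large family of closed sets can be cut down to disjoint sets of small
diameter while the family stays large. -/
lemma LargeFam.split [MetricSpace P] [CompleteSpace P] [SecondCountableTopology P] [BorelSpace P]
    [TopologicalSpace X] [T2Space X] [SecondCountableTopology X] [MeasurableSpace X]
    [OpensMeasurableSpace X] [DecidableEq J]
    (hf : Measurable f) {K : Set J} (hK : K.Countable) {B : J → Set P} (hB : ∀ j, IsClosed (B j))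
    {k l : J} (hk : k ∈ K) (hl : l ∈ K) (hkl : k ≠ l) (hBkl : B k = B l)
    {ε : ENNReal} (hε : 0 < ε) (h : LargeFam f K B) :
    ∃ V W : Set P, IsClosed V ∧ IsClosed W ∧ Metric.ediam V ≤ ε ∧ Metric.ediam W ≤ ε ∧
      Disjoint V W ∧
      LargeFam f K (Function.update (Function.update B k (B k ∩ V)) l (B l ∩ W)) := by
  obtain ⟨ι, _, 𝒱, h𝒱, hsep⟩ := exists_separating_family P hε
  by_contra! hcon
  have key : ∀ q : {q : ι × ι // Disjoint (𝒱 q.1) (𝒱 q.2)}, ∃ C, SigmaInj f C ∧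
      ∀ x, ∃ i ∈ K, ∀ a ∈ (Function.update (Function.update B k (B k ∩ 𝒱 q.1.1)) l
        (B l ∩ 𝒱 q.1.2)) i \ C, f a ≠ x := by
    intro q
    have := hcon _ _ (h𝒱 q.1.1).1 (h𝒱 q.1.2).1 (h𝒱 q.1.1).2 (h𝒱 q.1.2).2 q.2
    unfold LargeFam at this
    push Not at this
    exact this
  choose C hC hCx using key
  set U := ⋃ q, C q with hU
  have hUs : SigmaInj f U := .iUnion hC
  have hCU : ∀ q, C q ⊆ U := fun q => subset_iUnion C q
  -- the points of `B k \ U` lying over the common image of all `B i \ U`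
  set D : Set P := {a | a ∈ B k \ U ∧ ∀ i ∈ K, ∃ c ∈ B i \ U, f c = f a} with hDdef
  have hDinj : InjOn f D := by
    intro a ha b hb hab
    by_contra hne
    obtain ⟨i, j, hi, hj, hij⟩ := hsep a b hne
    obtain ⟨t, ht, hta⟩ := hCx ⟨(i, j), hij⟩ (f a)
    by_cases htl : t = l
    · subst htl
      refine hta b ⟨?_, fun hh => hb.1.2 (hCU _ hh)⟩ hab.symm
      rw [Function.update_self]
      exact ⟨hBkl ▸ hb.1.1, hj⟩
    by_cases htk : t = k
    · subst htk
      refine hta a ⟨?_, fun hh => ha.1.2 (hCU _ hh)⟩ rfl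
      rw [Function.update_of_ne htl, Function.update_self]
      exact ⟨ha.1.1, hi⟩
    obtain ⟨c, hc, hca⟩ := ha.2 t ht
    refine hta c ⟨?_, fun hh => hc.2 (hCU _ hh)⟩ hca
    rw [Function.update_of_ne htl, Function.update_of_ne htk]
    exact hc.1
  have hDan : ∀ i, AnalyticSet (f '' (D ∩ 𝒱 i)) := by
    intro i
    have : Countable K := hK
    have : Nonempty K := ⟨⟨k, hk⟩⟩
    have heq : f '' (D ∩ 𝒱 i) =
        ⋂ t : K, f '' (Function.update B k (B k ∩ 𝒱 i) t \ U) := by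
      ext x
      simp only [mem_iInter]
      constructor
      · rintro ⟨a, ⟨haD, hai⟩, rfl⟩ ⟨t, ht⟩
        by_cases htk : t = k
        · subst htk
          refine ⟨a, ⟨?_, haD.1.2⟩, rfl⟩
          rw [Function.update_self]
          exact ⟨haD.1.1, hai⟩
        · obtain ⟨c, hc, hca⟩ := haD.2 t ht
          refine ⟨c, ⟨?_, hc.2⟩, hca⟩
          rw [Function.update_of_ne htk]
          exact hc.1
      · intro hx
        obtain ⟨a, ha, rfl⟩ := hx ⟨k, hk⟩
        rw [Function.update_self] at ha
        refine ⟨a, ⟨⟨⟨ha.1.1, ha.2⟩, fun t ht => ?_⟩, ha.1.2⟩, rfl⟩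
        obtain ⟨c, hc, hca⟩ := hx ⟨t, ht⟩
        refine ⟨c, ⟨?_, hc.2⟩, hca⟩
        by_cases htk : t = k
        · subst htk
          have := hc.1
          rw [Function.update_self] at this
          exact this.1
        · have := hc.1
          rwa [Function.update_of_ne htk] at this
    rw [heq]
    refine AnalyticSet.iInter fun t => MeasurableSet.analyticSet_image ?_ hf
    refine MeasurableSet.diff ?_ hUs.measurableSet
    by_cases htk : (t : J) = k
    · rw [htk, Function.update_self]
      exact (hB k).measurableSet.inter (h𝒱 i).1.measurableSet
    · rw [Function.update_of_ne htk]
      exact (hB t).measurableSet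
  obtain ⟨D', hDD', hD'm, hD'inj⟩ := exists_injOn_measurable_superset hf
    (fun i => (h𝒱 i).1.measurableSet) hsep hDinj hDan
  obtain ⟨x, hx⟩ := h _ (hUs.union (.of_injOn hD'm hD'inj))
  obtain ⟨a, ha, rfl⟩ := hx k hk
  refine ha.2 (Or.inr (hDD' ⟨⟨ha.1, fun hh => ha.2 (Or.inl hh)⟩, fun t ht => ?_⟩))
  obtain ⟨c, hc, hca⟩ := hx t ht
  exact ⟨c, ⟨hc.1, fun hh => hc.2 (Or.inl hh)⟩, hca⟩

/-- Each of the finitely many sets at level `n` of a scheme is split in two, one node at a time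
starting from two copies of the set: `LargeFam.split` cannot treat all nodes at once, since with
several nodes the set of points with unique partners in the fibre need not be analytic. -/
lemma LargeFam.split_level [MetricSpace P] [CompleteSpace P] [SecondCountableTopology P]
    [BorelSpace P]
    [TopologicalSpace X] [T2Space X] [SecondCountableTopology X] [MeasurableSpace X]
    [OpensMeasurableSpace X]
    (hf : Measurable f) {n : ℕ} {A : List Bool → Set P} (hA : ∀ l, IsClosed (A l))
    {ε : ENNReal} (hε : 0 < ε) (h : LargeFam f {l | l.length = n} A) :
    ∃ A' : List Bool → Set P, (∀ l, IsClosed (A' l)) ∧ LargeFam f {l | l.length = n + 1} A' ∧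
      ∀ l, l.length = n → (∀ b, A' (b :: l) ⊆ A l ∧ Metric.ediam (A' (b :: l)) ≤ ε) ∧
        Disjoint (A' (true :: l)) (A' (false :: l)) := by
  have key : ∃ A' : List Bool → Set P, (∀ l, IsClosed (A' l)) ∧
      LargeFam f {l | l.length = n + 1} A' ∧
      (∀ l, l ∉ {l : List Bool | l.length = n} → ∀ b, A' (b :: l) = A l) ∧
      ∀ l ∈ {l : List Bool | l.length = n},
        (∀ b, A' (b :: l) ⊆ A l ∧ Metric.ediam (A' (b :: l)) ≤ ε) ∧
        Disjoint (A' (true :: l)) (A' (false :: l)) := by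
    refine Set.Finite.induction_on_subset (motive := fun T _ => ∃ A' : List Bool → Set P,
      (∀ l, IsClosed (A' l)) ∧
      LargeFam f {l | l.length = n + 1} A' ∧
      (∀ l, l ∉ T → ∀ b, A' (b :: l) = A l) ∧
      ∀ l ∈ T, (∀ b, A' (b :: l) ⊆ A l ∧ Metric.ediam (A' (b :: l)) ≤ ε) ∧
        Disjoint (A' (true :: l)) (A' (false :: l))) _ (List.finite_length_eq Bool n) ?_ ?_
    · refine ⟨fun l => A l.tail, fun l => hA _, ?_, fun l _ b => rfl, fun l hl => hl.elim⟩
      intro C hC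
      obtain ⟨x, hx⟩ := h C hC
      refine ⟨x, fun l hl => hx l.tail ?_⟩
      simp only [mem_ofPred_eq] at hl
      simp [hl]
    · rintro t T ht hT htT ⟨B, hBc, hBL, hB1, hB2⟩
      have ht' : t.length = n := ht
      obtain ⟨V, W, hV, hW, hVε, hWε, hVW, hL⟩ := hBL.split hf
        ((List.finite_length_eq Bool (n + 1)).countable) hBc
        (k := true :: t) (l := false :: t) (by simp [ht']) (by simp [ht']) (by simp)
        (by rw [hB1 t htT, hB1 t htT]) hε
      refine ⟨_, ?_, hL, ?_, ?_⟩
      · intro l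
        by_cases h1 : l = false :: t
        · subst h1
          rw [Function.update_self]
          exact (hBc _).inter hW
        rw [Function.update_of_ne h1]
        by_cases h2 : l = true :: t
        · subst h2
          rw [Function.update_self]
          exact (hBc _).inter hV
        rw [Function.update_of_ne h2]
        exact hBc l
      · intro l hl b
        rw [mem_insert_iff, not_or] at hl
        rw [Function.update_of_ne (by simp [hl.1]), Function.update_of_ne (by simp [hl.1])]
        exact hB1 l hl.2 b
      · intro l hl
        by_cases hlt : l = t
        · subst hlt
          have e1 : Function.update (Function.update B (true :: l) (B (true :: l) ∩ V)) (false :: l)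
            (B (false :: l) ∩ W) (true :: l) = B (true :: l) ∩ V := by
            rw [Function.update_of_ne (by simp), Function.update_self]
          have e2 : Function.update (Function.update B (true :: l) (B (true :: l) ∩ V)) (false :: l)
            (B (false :: l) ∩ W) (false :: l) = B (false :: l) ∩ W := by
            rw [Function.update_self]
          refine ⟨fun b => ?_, ?_⟩
          · cases b
            · rw [e2, hB1 l htT]
              exact ⟨inter_subset_left, (Metric.ediam_mono inter_subset_right).trans hWε⟩
            · rw [e1, hB1 l htT]
              exact ⟨inter_subset_left, (Metric.ediam_mono inter_subset_right).trans hVε⟩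
          · rw [e1, e2]
            exact hVW.mono inter_subset_right inter_subset_right
        · have e : ∀ b, Function.update (Function.update B (true :: t) (B (true :: t) ∩ V))
              (false :: t) (B (false :: t) ∩ W) (b :: l) = B (b :: l) := fun b => by
            rw [Function.update_of_ne (by simp [hlt]), Function.update_of_ne (by simp [hlt])]
          simp only [e]
          exact hB2 l (hl.resolve_left hlt)
  obtain ⟨A', h1, h2, -, h3⟩ := key
  exact ⟨A', h1, h2, h3⟩

/-- Lusin–Novikov for a continuous map on a complete separable metric space. If the conclusion
failed, the Cantor scheme obtained by repeated splitting would embed `ℕ → Bool` into a fibre. -/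
theorem sigmaInj_univ_of_continuous [MetricSpace P] [CompleteSpace P] [SecondCountableTopology P]
    [BorelSpace P]
    [TopologicalSpace X] [T2Space X] [SecondCountableTopology X] [MeasurableSpace X]
    [BorelSpace X] (hf : Continuous f) (hc : ∀ x, (f ⁻¹' {x}).Countable) :
    SigmaInj f (univ : Set P) := by
  by_contra hns
  have h0 : LargeFam f {l : List Bool | l.length = 0} (fun _ => (univ : Set P)) := by
    intro C hC
    have : C ≠ univ := fun h => hns (h ▸ hC)
    obtain ⟨a, ha⟩ := (ne_univ_iff_exists_notMem C).1 this
    exact ⟨f a, fun _ _ => ⟨a, ⟨trivial, ha⟩, rfl⟩⟩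
  let St (n : ℕ) := {A : List Bool → Set P // (∀ l, IsClosed (A l)) ∧
    LargeFam f {l : List Bool | l.length = n} A}
  have step : ∀ n (A : St n), ∃ A' : St (n + 1),
      ∀ l, l.length = n → (∀ b, A'.1 (b :: l) ⊆ A.1 l ∧
        Metric.ediam (A'.1 (b :: l)) ≤ ((n : ENNReal) + 1)⁻¹) ∧
        Disjoint (A'.1 (true :: l)) (A'.1 (false :: l)) := by
    intro n A
    obtain ⟨A', h1, h2, h3⟩ := LargeFam.split_level hf.measurable A.2.1
      (ε := ((n : ENNReal) + 1)⁻¹) (by simp) A.2.2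
    exact ⟨⟨A', h1, h2⟩, h3⟩
  choose next hnext using step
  let s : ∀ n, St n := fun n => Nat.rec ⟨fun _ => univ, fun _ => isClosed_univ, h0⟩ next n
  let A : List Bool → Set P := fun l => (s l.length).1 l
  have hA : ∀ l, (∀ b, A (b :: l) ⊆ A l ∧
        Metric.ediam (A (b :: l)) ≤ ((l.length : ENNReal) + 1)⁻¹) ∧
        Disjoint (A (true :: l)) (A (false :: l)) := fun l => hnext l.length (s l.length) l rfl
  have hAcl : ∀ l, IsClosed (A l) := fun l => (s l.length).2.1 l
  have hcommon : ∀ n, ∃ x, ∀ l : List Bool, l.length = n → ∃ a ∈ A l, f a = x := by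
    intro n
    obtain ⟨x, hx⟩ := (s n).2.2 ∅ .empty
    refine ⟨x, fun l hl => ?_⟩
    obtain ⟨a, ha, hax⟩ := hx l hl
    subst hl
    exact ⟨a, ha.1, hax⟩
  have hanti : CantorScheme.ClosureAntitone A :=
    CantorScheme.Antitone.closureAntitone (fun l b => ((hA l).1 b).1) hAcl
  have hdisj : CantorScheme.Disjoint A := by
    intro l a b hab
    cases a <;> cases b
    · exact (hab rfl).elim
    · exact (hA l).2.symm
    · exact (hA l).2
    · exact (hab rfl).elim
  have hdiam : CantorScheme.VanishingDiam A := by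
    intro x
    rw [← tendsto_add_atTop_iff_nat 1]
    refine tendsto_of_tendsto_of_tendsto_of_le_of_le tendsto_const_nhds
      (h := fun n : ℕ => ((n : ENNReal) + 1)⁻¹) ?_ (fun _ => zero_le) ?_
    · have := (tendsto_add_atTop_iff_nat 1).2 ENNReal.tendsto_inv_nat_nhds_zero
      simpa using this
    · intro n
      have := ((hA (PiNat.res x n)).1 (x n)).2
      rwa [PiNat.res_length] at this
  have hne : ∀ l, (A l).Nonempty := fun l => by
    obtain ⟨x, hx⟩ := hcommon l.length
    obtain ⟨a, ha, -⟩ := hx l rfl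
    exact ⟨a, ha⟩
  have hdom := hanti.map_of_vanishingDiam hdiam hne
  let p : (ℕ → Bool) → P := fun σ => (CantorScheme.inducedMap A).2 ⟨σ, hdom ▸ mem_univ σ⟩
  have hp : ∀ σ n, p σ ∈ A (PiNat.res σ n) := fun σ n => CantorScheme.map_mem _ n
  have hpinj : Function.Injective p := by
    intro σ τ h
    simpa using hdisj.map_injective h
  -- `x n` lies in the image of all sets of level `n`, so every branch point maps to `lim x n`
  choose x hx using hcommon
  have : Nonempty P := ⟨p fun _ => true⟩
  choose! a ha hax using hx
  have hlim : ∀ σ, Tendsto (fun n => a n (PiNat.res σ n)) atTop (𝓝 (p σ)) := by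
    intro σ
    rw [tendsto_iff_edist_tendsto_0]
    refine tendsto_of_tendsto_of_tendsto_of_le_of_le tendsto_const_nhds (hdiam σ)
      (fun _ => zero_le) fun n => ?_
    exact Metric.edist_le_ediam_of_mem (ha _ _ (PiNat.res_length _ _)) (hp σ n)
  have hlimx : ∀ σ, Tendsto x atTop (𝓝 (f (p σ))) := by
    intro σ
    refine ((hf.tendsto _).comp (hlim σ)).congr fun n => ?_
    exact hax _ _ (PiNat.res_length _ _)
  have hsub : range p ⊆ f ⁻¹' {f (p fun _ => true)} := by
    rintro _ ⟨σ, rfl⟩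
    exact tendsto_nhds_unique (hlimx σ) (hlimx _)
  have hcount : (range p).Countable := (hc _).mono hsub
  have : Countable (ℕ → Bool) := by
    have := hcount.to_subtype
    exact (rangeFactorization_injective.2 hpinj).countable
  -- Cantor's diagonal argument
  obtain ⟨e, he⟩ := exists_surjective_nat (ℕ → Bool)
  obtain ⟨n, hn⟩ := he fun m => !(e m m)
  simpa using congrFun hn n

/-- The **Lusin–Novikov theorem** for countable-to-one maps. -/
theorem sigmaInj_univ [StandardBorelSpace P] [MeasurableSpace X] [StandardBorelSpace X]
    (hf : Measurable f) (hc : ∀ x, (f ⁻¹' {x}).Countable) :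
    SigmaInj f (univ : Set P) := by
  obtain ⟨tX, hbX, hpX⟩ := StandardBorelSpace.polish (α := X)
  obtain ⟨tP, hbP, hpP⟩ := StandardBorelSpace.polish (α := P)
  -- refine the topology of `P` to make `f` continuous, without changing its Borel sets
  obtain ⟨t', ht', hft', hpt'⟩ := hf.exists_continuous
  have hb : @BorelSpace P t' _ := ⟨by
    rw [hbP.measurable_eq]
    exact (borel_eq_borel_of_le hpt' hpP ht').symm⟩
  clear! tP
  let := TopologicalSpace.upgradeIsCompletelyMetrizable P
  exact sigmaInj_univ_of_continuous hft' hc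
end

/-! ### Borel selection in a countable Borel equivalence relation -/

section
variable {X : Type*} [MeasurableSpace X]

/-- A weak form of the Feldman–Moore theorem: the classes of `E` are enumerated by countably many
Borel maps. -/
lemma exists_generating_sequence [StandardBorelSpace X] {E : X → X → Prop}
    (hrefl : ∀ x, E x x) (hEmeas : MeasurableSet {p : X × X | E p.1 p.2})
    (hEcount : ∀ x, {y | E x y}.Countable) :
    ∃ φ : ℕ → X → X, (∀ n, Measurable (φ n)) ∧ ∀ x y, E x y ↔ ∃ n, φ n x = y := by
  classical
  have : StandardBorelSpace {p : X × X | E p.1 p.2} := hEmeas.standardBorel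
  let f : {p : X × X | E p.1 p.2} → X := fun p => p.1.1
  let s : {p : X × X | E p.1 p.2} → X := fun p => p.1.2
  have hf : Measurable f := measurable_fst.comp measurable_subtype_coe
  have hs : Measurable s := measurable_snd.comp measurable_subtype_coe
  have hc : ∀ x, (f ⁻¹' {x}).Countable := by
    intro x
    refine Set.MapsTo.countable_of_injOn (f := s) (t := {y | E x y}) ?_ ?_ (hEcount x)
    · rintro ⟨⟨a, b⟩, hab⟩ (rfl : a = x)
      exact hab
    · rintro ⟨⟨a, b⟩, hab⟩ (rfl : a = x) ⟨⟨c, d⟩, hcd⟩ (rfl : c = a) (h : b = d)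
      subst h
      rfl
  obtain ⟨D, hD, hDU⟩ := sigmaInj_univ hf hc
  let φ : ℕ → X → X := fun n x => if h : ∃ p ∈ D n, f p = x then s h.choose else x
  have hφ : ∀ n, ∀ p ∈ D n, φ n (f p) = s p := by
    intro n p hp
    have h : ∃ q ∈ D n, f q = f p := ⟨p, hp, rfl⟩
    have : h.choose = p := (hD n).2 h.choose_spec.1 hp h.choose_spec.2
    simp only [φ, dif_pos h, this]
  have hφ' : ∀ n x, x ∉ f '' D n → φ n x = x := fun n x hx => dif_neg hx
  refine ⟨φ, fun n B hB => ?_, fun x y => ⟨fun hxy => ?_, ?_⟩⟩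
  · have : φ n ⁻¹' B = f '' (D n ∩ s ⁻¹' B) ∪ ((f '' D n)ᶜ ∩ B) := by
      ext x
      by_cases hx : x ∈ f '' D n
      · obtain ⟨p, hp, rfl⟩ := hx
        rw [mem_preimage, hφ n p hp]
        constructor
        · exact fun h => Or.inl ⟨p, ⟨hp, h⟩, rfl⟩
        · rintro (⟨q, ⟨hq, hqB⟩, hqp⟩ | ⟨h, -⟩)
          · rwa [← (hD n).2 hq hp hqp]
          · exact (h ⟨p, hp, rfl⟩).elim
      · rw [mem_preimage, hφ' n x hx]
        constructor
        · exact fun h => Or.inr ⟨hx, h⟩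
        · rintro (h | h)
          · exact (hx (image_mono inter_subset_left h)).elim
          · exact h.2
    rw [this]
    exact (((hD n).1.inter (hs hB)).image_of_measurable_injOn hf
      ((hD n).2.mono inter_subset_left)).union
      (((hD n).1.image_of_measurable_injOn hf (hD n).2).compl.inter hB)
  · obtain ⟨n, hn⟩ := mem_iUnion.1 (hDU ▸ mem_univ (⟨(x, y), hxy⟩ : {p : X × X | E p.1 p.2}))
    exact ⟨n, hφ n _ hn⟩
  · rintro ⟨n, rfl⟩
    by_cases hx : x ∈ f '' D n
    · obtain ⟨p, hp, rfl⟩ := hx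
      rw [hφ n p hp]
      exact p.2
    · rw [hφ' n x hx]
      exact hrefl x

/-- Choose, in a Borel way, an `E`-related point satisfying a Borel condition `T` wherever one
exists; elsewhere `r` has an irrelevant value. -/
lemma exists_measurable_selector {E : X → X → Prop} {φ : ℕ → X → X}
    (hφ : ∀ n, Measurable (φ n)) (hE : ∀ x y, E x y ↔ ∃ n, φ n x = y)
    {T : Set (X × X)} (hT : MeasurableSet T) :
    ∃ r : X → X, Measurable r ∧ ∀ x y, E x y → (x, y) ∈ T → E x (r x) ∧ (x, r x) ∈ T := by
  classical
  have hm : ∀ n, MeasurableSet {x | (x, φ n x) ∈ T} := fun n =>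
    (measurable_id.prodMk (hφ n)) hT
  let p : ℕ → X → Prop := fun n x => (x, φ n x) ∈ T ∨ ∀ m, (x, φ m x) ∉ T
  have hp : ∀ n, MeasurableSet {x | p n x} := fun n => by
    have : {x | p n x} = {x | (x, φ n x) ∈ T} ∪ ⋂ m, {x | (x, φ m x) ∈ T}ᶜ := by
      ext x
      simp [p]
    rw [this]
    exact (hm n).union (MeasurableSet.iInter fun m => (hm m).compl)
  have hex : ∀ x, ∃ n, p n x := fun x => by
    by_cases h : ∃ n, (x, φ n x) ∈ T
    · exact h.imp fun n hn => Or.inl hn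
    · exact ⟨0, Or.inr (not_exists.1 h)⟩
  refine ⟨_, Measurable.find hφ hp hex, fun x y hxy hT' => ⟨(hE _ _).2 ⟨_, rfl⟩, ?_⟩⟩
  obtain ⟨m, rfl⟩ := (hE x y).1 hxy
  exact (Nat.find_spec (hex x)).resolve_right fun h => h m hT'

/-! ### Injections from a compression, and Schröder–Bernstein -/

/-- If `g` maps `S` into itself and `S \ g '' S` meets every `E`-class, then the disjoint copies
`g^[n] '' (S \ g '' S)` leave room for a Borel injection of the whole space into `S` within `E`. -/
lemma exists_injection_of_compression [StandardBorelSpace X] {E : X → X → Prop}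
    (hEq : Equivalence E) {φ : ℕ → X → X}
    (hφ : ∀ n, Measurable (φ n)) (hE : ∀ x y, E x y ↔ ∃ n, φ n x = y)
    {S : Set X} (hS : MeasurableSet S) {g : X → X} (hg : Measurable g)
    (hginj : Function.Injective g) (hgE : ∀ x, E x (g x)) (hgS : MapsTo g S S)
    (hS0 : ∀ x, ∃ y, E x y ∧ y ∈ S \ g '' S) :
    ∃ h : X → X, Measurable h ∧ Function.Injective h ∧ (∀ x, h x ∈ S) ∧ ∀ x, E x (h x) := by
  classical
  obtain ⟨r, hr, hrT⟩ := exists_measurable_selector hφ hE (T := {q | q.2 ∈ S \ g '' S})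
    (measurable_snd (hS.diff (hS.image_of_measurable_injOn hg hginj.injOn)))
  have hrE : ∀ x, E x (r x) := fun x => by
    obtain ⟨y, hy, hyS⟩ := hS0 x
    exact (hrT x y hy hyS).1
  have hrS : ∀ x, r x ∈ S \ g '' S := fun x => by
    obtain ⟨y, hy, hyS⟩ := hS0 x
    exact (hrT x y hy hyS).2
  have hex : ∀ x, ∃ n, φ n (r x) = x := fun x => (hE _ _).1 (hEq.symm (hrE x))
  have hitS : ∀ n, ∀ x ∈ S, g^[n] x ∈ S := fun n x hx => hgS.iterate n hx
  have hitE : ∀ n x, E x (g^[n] x) := by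
    intro n x
    induction n with
    | zero => exact hEq.refl x
    | succ n ih =>
      rw [Function.iterate_succ_apply']
      exact hEq.trans ih (hgE _)
  have hlt : ∀ m n x y, m < n → g^[m] (r x) ≠ g^[n] (r y) := by
    intro m n x y hmn heq
    obtain ⟨d, rfl⟩ := Nat.exists_eq_add_of_lt hmn
    rw [add_assoc, Function.iterate_add_apply] at heq
    have := hginj.iterate m heq
    rw [Function.iterate_succ_apply'] at this
    exact (hrS x).2 ⟨_, hitS d _ (hrS y).1, this.symm⟩
  refine ⟨_, Measurable.find (f := fun n x => g^[n] (r x)) (p := fun n x => φ n (r x) = x)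
    (fun n => (hg.iterate n).comp hr)
    (fun n => measurableSet_eq_fun ((hφ n).comp hr) measurable_id) hex, ?_, ?_, ?_⟩
  · intro x y hxy
    have hxy' : g^[Nat.find (hex x)] (r x) = g^[Nat.find (hex y)] (r y) := hxy
    have hn : Nat.find (hex x) = Nat.find (hex y) := by
      rcases lt_trichotomy (Nat.find (hex x)) (Nat.find (hex y)) with h | h | h
      · exact (hlt _ _ _ _ h hxy').elim
      · exact h
      · exact (hlt _ _ _ _ h hxy'.symm).elim
    rw [hn] at hxy'
    have hrr := hginj.iterate _ hxy'
    calc x = φ (Nat.find (hex x)) (r x) := (Nat.find_spec (hex x)).symm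
      _ = φ (Nat.find (hex y)) (r y) := by rw [hn, hrr]
      _ = y := Nat.find_spec (hex y)
  · exact fun x => hitS _ _ (hrS x).1
  · exact fun x => hEq.trans (hrE x) (hitE _ _)

/-- The Borel Schröder–Bernstein theorem, keeping the graph of the bijection inside `E`. -/
lemma schroederBernstein_within [StandardBorelSpace X] {E : X → X → Prop}
    (hEq : Equivalence E) {φ : ℕ → X → X}
    (hφ : ∀ n, Measurable (φ n)) (hE : ∀ x y, E x y ↔ ∃ n, φ n x = y)
    {R S : Set X} (hR : MeasurableSet R) (hS : MeasurableSet S) {h k : X → X}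
    (hh : Measurable h) (hhinj : Function.Injective h) (hhS : ∀ x, h x ∈ S) (hhE : ∀ x, E x (h x))
    (hk : Measurable k) (hkinj : Function.Injective k) (hkR : ∀ x, k x ∈ R) (hkE : ∀ x, E x (k x)) :
    ∃ f : X → X, Measurable f ∧ BijOn f R S ∧ ∀ x ∈ R, E x (f x) := by
  classical
  obtain ⟨r, hr, hrT⟩ := exists_measurable_selector hφ hE (T := {q | q.2 ∈ S ∧ k q.2 = q.1})
    ((measurable_snd hS).inter (measurableSet_eq_fun (hk.comp measurable_snd) measurable_fst))
  set A : Set X := ⋃ n : ℕ, (k ∘ h)^[n] '' (R \ k '' S) with hAdef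
  have hA : MeasurableSet A := MeasurableSet.iUnion fun n =>
    (hR.diff (hS.image_of_measurable_injOn hk hkinj.injOn)).image_of_measurable_injOn
      ((hk.comp hh).iterate n) ((hkinj.comp hhinj).iterate n).injOn
  have hAstep : ∀ x ∈ A, k (h x) ∈ A := by
    intro x hx
    obtain ⟨n, z, hz, rfl⟩ := mem_iUnion.1 hx
    exact mem_iUnion.2 ⟨n + 1, z, hz, Function.iterate_succ_apply' _ _ _⟩
  have hAR : A ⊆ R := by
    intro x hx
    obtain ⟨n, z, hz, rfl⟩ := mem_iUnion.1 hx
    cases n with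
    | zero => exact hz.1
    | succ n =>
      rw [Function.iterate_succ_apply']
      exact hkR _
  have hrA : ∀ x ∈ R, x ∉ A → E x (r x) ∧ r x ∈ S ∧ k (r x) = x := by
    intro x hx hxA
    have : x ∈ k '' S := by
      by_contra hxk
      exact hxA (mem_iUnion.2 ⟨0, x, ⟨hx, hxk⟩, rfl⟩)
    obtain ⟨y, hy, rfl⟩ := this
    exact hrT _ y (hEq.symm (hkE y)) ⟨hy, rfl⟩
  refine ⟨fun x => if x ∈ A then h x else r x, Measurable.ite hA hh hr, ⟨?_, ?_, ?_⟩, ?_⟩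
  · intro x hx
    by_cases hxA : x ∈ A
    · simpa only [if_pos hxA] using hhS x
    · simpa only [if_neg hxA] using (hrA x hx hxA).2.1
  · intro x hx y hy hxy
    by_cases hxA : x ∈ A <;> by_cases hyA : y ∈ A
    · simp only [if_pos hxA, if_pos hyA] at hxy
      exact hhinj hxy
    · simp only [if_pos hxA, if_neg hyA] at hxy
      refine (hyA ?_).elim
      rw [← (hrA y hy hyA).2.2, ← hxy]
      exact hAstep x hxA
    · simp only [if_neg hxA, if_pos hyA] at hxy
      refine (hxA ?_).elim
      rw [← (hrA x hx hxA).2.2, hxy]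
      exact hAstep y hyA
    · simp only [if_neg hxA, if_neg hyA] at hxy
      rw [← (hrA x hx hxA).2.2, hxy, (hrA y hy hyA).2.2]
  · intro y hy
    by_cases hyA : k y ∈ A
    · obtain ⟨n, z, hz, hzy⟩ := mem_iUnion.1 hyA
      cases n with
      | zero => exact (hz.2 ⟨y, hy, hzy.symm⟩).elim
      | succ n =>
        rw [Function.iterate_succ_apply'] at hzy
        have hw : (k ∘ h)^[n] z ∈ A := mem_iUnion.2 ⟨n, z, hz, rfl⟩
        refine ⟨_, hAR hw, ?_⟩
        simp only [if_pos hw]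
        exact hkinj hzy
    · refine ⟨k y, hkR y, ?_⟩
      simp only [if_neg hyA]
      exact hkinj (hrA _ (hkR y) hyA).2.2
  · intro x hx
    by_cases hxA : x ∈ A
    · simpa only [if_pos hxA] using hhE x
    · simpa only [if_neg hxA] using (hrA x hx hxA).1
end

/-- If `E` is a CBER on a standard Borel space, `R, S` are disjoint Borel
sets meeting every `E`-class infinitely, and the induced subequivalence relation `F`
is compressible, then there is a Borel bijection `R → S` whose graph is contained in `E`. -/
theorem stmt_1 {X : Type*} [MeasurableSpace X] [StandardBorelSpace X]
    (E : X → X → Prop) (hE : Equivalence E)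
    (hEmeas : MeasurableSet {p : X × X | E p.1 p.2})
    (hEcount : ∀ x, {y | E x y}.Countable)
    (R S : Set X) (hR : MeasurableSet R) (hS : MeasurableSet S)
    (hdisj : Disjoint R S)
    (hRinf : ∀ x, (R ∩ {y | E x y}).Infinite)
    (hSinf : ∀ x, (S ∩ {y | E x y}).Infinite)
    (F : X → X → Prop)
    (hF : ∀ x y, F x y ↔ E x y ∧ (x ∈ R ↔ y ∈ R) ∧ (x ∈ S ↔ y ∈ S))
    (hcomp : ∃ g : X → X, Measurable g ∧ Function.Injective g ∧
      (∀ x, F x (g x)) ∧ ∀ x, g '' {y | F x y} ⊂ {y | F x y}) :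
    ∃ f : X → X, Measurable f ∧ Set.BijOn f R S ∧ ∀ x ∈ R, E x (f x) := by
  obtain ⟨φ, hφ, hEφ⟩ := exists_generating_sequence hE.refl hEmeas hEcount
  obtain ⟨g, hg, hginj, hgF, hgC⟩ := hcomp
  have hgE : ∀ x, E x (g x) := fun x => ((hF _ _).1 (hgF x)).1
  have hgR : MapsTo g R R := fun x hx => ((hF _ _).1 (hgF x)).2.1.1 hx
  have hgS : MapsTo g S S := fun x hx => ((hF _ _).1 (hgF x)).2.2.1 hx
  -- the trace of an `E`-class on `T = R` or `T = S` is a single `F`-class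
  have hmiss : ∀ T : Set X, (∀ x, (T ∩ {y | E x y}).Infinite) →
      (∀ x ∈ T, ∀ y, F x y ↔ E x y ∧ y ∈ T) → ∀ x, ∃ y, E x y ∧ y ∈ T \ g '' T := by
    intro T hTinf hTF x
    obtain ⟨z, hzT, hxz⟩ := (hTinf x).nonempty
    obtain ⟨y, hy, hyg⟩ := exists_of_ssubset (hgC z)
    have hy' := (hTF z hzT y).1 hy
    refine ⟨y, hE.trans hxz hy'.1, hy'.2, ?_⟩
    rintro ⟨w, hw, rfl⟩
    exact hyg ⟨w, (hTF z hzT w).2 ⟨hE.trans hy'.1 (hE.symm (hgE w)), hw⟩, rfl⟩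
  obtain ⟨h, hh, hhinj, hhS, hhE⟩ := exists_injection_of_compression hE hφ hEφ hS hg hginj hgE hgS
    (hmiss S hSinf fun x hx y => by
      have := fun z (hz : z ∈ S) => disjoint_right.1 hdisj hz
      rw [hF]
      constructor
      · exact fun h => ⟨h.1, h.2.2.1 hx⟩
      · exact fun h => ⟨h.1, by simp [this x hx, this y h.2], by simp [hx, h.2]⟩)
  obtain ⟨k, hk, hkinj, hkR, hkE⟩ := exists_injection_of_compression hE hφ hEφ hR hg hginj hgE hgR
    (hmiss R hRinf fun x hx y => by
      have := fun z (hz : z ∈ R) => disjoint_left.1 hdisj hz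
      rw [hF]
      constructor
      · exact fun h => ⟨h.1, h.2.1.1 hx⟩
      · exact fun h => ⟨h.1, by simp [hx, h.2], by simp [this x hx, this y h.2]⟩)
  exact schroederBernstein_within hE hφ hEφ hR hS hh hhinj hhS hhE hk hkinj hkR hkE
end

section
/- Let E be an aperiodic countable Borel equivalence relation on a standard Borel space X. Then there is a Borel relation P ⊆ E whose restriction to each E-class is a partial order on that class, such that for every E-invariant Borel probability measure μ on X and every E-invariant μ-conull Borel set Y ⊆ X, there is no Borel relation L with P ∩ (Y × Y) ⊆ L ⊆ E ∩ (Y × Y) whose restriction to each E-class contained in Y is a linear order on that class. -/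
/-!
The order is built along an increasing sequence of finite Borel subequivalence relations of `E`.
By the Lusin–Novikov and Feldman–Moore theorems (`thin_univ`, `exists_involutions`), `E` is generated
by Borel involutions. A maximal Borel pairing of a set within `E`-classes (`exists_pairing`) leaves at
most one point per class, a null set for each invariant probability measure because the classes
are infinite (`measure_partial_transversal`). Pairing points, then pairs, and so on, gives blocks of
size `2 ^ n` almost everywhere, each with a root (`Tower`). Let `σ = T 0` be the first pairing.

When two blocks `D` and `D'` merge, each point carries a label, true or false, with `σ`-partners
labelled oppositely. Every false point of `D` is declared to lie below every true point of `D'`, and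
every false point of `D'` below every true point of `D`. The labels in one of the two blocks are then
negated, so points just related have equal labels from then on; hence all the relations
together are transitive (`Tower.Cross.later`, `Tower.Cross.trans`). Since negating all the labels of a
block is harmless, before the merging at level `n` the labels in each block can be chosen so that
at least half of the points of a prescribed Borel set `A n` in the block are labelled true
(`Tower.sum_mid_le`).

Suppose `L` is a Borel linear extension on a conull invariant set, and let `U` be the set of `x` with
`L x (σ x)`. In one of any two merged blocks, `U` is exactly the set of false points
(`Tower.exists_block`), so there `U` differs from `A n` on at least half of the points
(`Tower.sum_le_of_block`). Integrating over blocks (`Tower.lintegral_sum`), the symmetric difference of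
`U` and `A n` has measure at least `1 / 4` for all `n ≥ 1` (`Tower.not_linear`). Letting the sets `A n`
enumerate a countable algebra generating the Borel sets (`exists_dense_sequence`) gives a
contradiction, for all measures at once.
-/

open MeasureTheory

namespace BorelOrder
open Set Filter Topology

/-! ### Lusin–Novikov uniformization -/

section LusinNovikov
variable {F X : Type*} [MeasurableSpace F]

/-- `A` is covered by countably many measurable sets on each of which `f` is injective. -/
def Thin (f : F → X) (A : Set F) : Prop :=
  ∃ B : ℕ → Set F, (∀ n, MeasurableSet (B n) ∧ InjOn f (B n)) ∧ A ⊆ ⋃ n, B n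

theorem Thin.mono {f : F → X} {A A' : Set F} (h : Thin f A) (hA : A' ⊆ A) : Thin f A' := by
  obtain ⟨B, hB, hAB⟩ := h
  exact ⟨B, hB, hA.trans hAB⟩

theorem Thin.iUnion {f : F → X} {ι : Type*} [Countable ι] {A : ι → Set F}
    (h : ∀ i, Thin f (A i)) : Thin f (⋃ i, A i) := by
  choose B hB hAB using h
  rcases isEmpty_or_nonempty ι with hι | hι
  · exact ⟨fun _ => ∅, fun _ => ⟨MeasurableSet.empty, injOn_empty _⟩, by simp⟩
  obtain ⟨e, he⟩ := exists_surjective_nat (ι × ℕ)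
  refine ⟨fun n => B (e n).1 (e n).2, fun n => hB _ _, iUnion_subset fun i x hx => ?_⟩
  obtain ⟨k, hk⟩ := mem_iUnion.1 (hAB i hx)
  obtain ⟨n, hn⟩ := he (i, k)
  exact mem_iUnion.2 ⟨n, by simpa [hn] using hk⟩

theorem Thin.of_injOn {f : F → X} {A : Set F} (hA : MeasurableSet A) (h : InjOn f A) :
    Thin f A :=
  ⟨fun _ => A, fun _ => ⟨hA, h⟩, fun _ hx => mem_iUnion.2 ⟨0, hx⟩⟩

variable [MeasurableSpace X]

/-- The filter on `X` dual to the σ-ideal of those `D` that lie in a measurable `C` for which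
`U ∩ f ⁻¹' C` is thin. It is proper exactly when `U` itself is not thin. -/
def thinFilter (f : F → X) (U : Set F) : Filter X :=
  Filter.ofCountableUnion {D | ∃ C, MeasurableSet C ∧ D ⊆ C ∧ Thin f (U ∩ f ⁻¹' C)}
    (by
      intro S hS h
      have := hS.to_subtype
      choose C hC hDC hT using fun D : S => h D.1 D.2
      refine ⟨⋃ D, C D, MeasurableSet.iUnion hC, ?_, ?_⟩
      · exact sUnion_subset fun D hD => (hDC ⟨D, hD⟩).trans (subset_iUnion C ⟨D, hD⟩)
      · rw [preimage_iUnion, inter_iUnion]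
        exact Thin.iUnion hT)
    (by
      rintro t ⟨C, hC, htC, hT⟩ s hst
      exact ⟨C, hC, hst.trans htC, hT⟩)

theorem mem_thinFilter {f : F → X} {U : Set F} {S : Set X} :
    S ∈ thinFilter f U ↔ ∃ C, MeasurableSet C ∧ Sᶜ ⊆ C ∧ Thin f (U ∩ f ⁻¹' C) := Iff.rfl

instance (f : F → X) (U : Set F) : CountableInterFilter (thinFilter f U) :=
  Filter.countableInter_ofCountableUnion ..

instance (f : F → X) (U : Set F) : IsMeasurablyGenerated (thinFilter f U) where
  exists_measurable_subset := by
    rintro S ⟨C, hC, hSC, hT⟩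
    exact ⟨Cᶜ, ⟨C, hC, by simp, hT⟩, hC.compl, compl_subset_comm.1 hSC⟩

/-- If `thinFilter f U` is compatible with `G`, then two disjoint basic sets can be chosen whose
thin filters are compatible with `G` simultaneously. Otherwise each disjoint basic pair would be
separated by a measurable set `C p` modulo `G`, and `f` would be injective on the part `B` of `U`
that respects all these separations, while the remainder of `U` is thin over a set of `G`. -/
theorem exists_split {f : F → X} (hf : Measurable f) {U : Set F} (hU : MeasurableSet U)
    {G : Filter X} [CountableInterFilter G] [IsMeasurablyGenerated G]
    (hG : (G ⊓ thinFilter f U).NeBot) {𝓑 : Set (Set F)} (h𝓑c : 𝓑.Countable)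
    (h𝓑m : ∀ V ∈ 𝓑, MeasurableSet V)
    (h𝓑s : ∀ y ∈ U, ∀ y' ∈ U, y ≠ y' → ∃ V ∈ 𝓑, ∃ W ∈ 𝓑, y ∈ V ∧ y' ∈ W ∧ Disjoint V W) :
    ∃ V ∈ 𝓑, ∃ W ∈ 𝓑, Disjoint V W ∧ (G ⊓ (thinFilter f V ⊓ thinFilter f W)).NeBot := by
  by_contra! hcon
  let I := {p : Set F × Set F // (p.1 ∈ 𝓑 ∧ p.2 ∈ 𝓑) ∧ Disjoint p.1 p.2}
  have hI : Countable I := by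
    have : ({p : Set F × Set F | (p.1 ∈ 𝓑 ∧ p.2 ∈ 𝓑) ∧ Disjoint p.1 p.2}).Countable :=
      (h𝓑c.prod h𝓑c).mono fun p hp => hp.1
    exact this.to_subtype
  have key : ∀ p : I, ∃ S ∈ G, ∃ C D : Set X, MeasurableSet C ∧ MeasurableSet D ∧
      Thin f (p.1.1 ∩ f ⁻¹' C) ∧ Thin f (p.1.2 ∩ f ⁻¹' D) ∧ S ⊆ C ∪ D := by
    rintro ⟨⟨V, W⟩, ⟨hV, hW⟩, hVW⟩
    have h0 := hcon V hV W hW hVW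
    rw [← empty_mem_iff_bot] at h0
    obtain ⟨S, hS, T, hT, hST⟩ := mem_inf_iff_superset.1 h0
    obtain ⟨T1, ⟨C, hC, hTC, hC'⟩, T2, ⟨D, hD, hTD, hD'⟩, hTT⟩ := mem_inf_iff_superset.1 hT
    refine ⟨S, hS, C, D, hC, hD, hC', hD', fun x hx => ?_⟩
    by_contra hx'
    rw [mem_union, not_or] at hx'
    exact hST ⟨hx, hTT ⟨by_contra fun h => hx'.1 (hTC h), by_contra fun h => hx'.2 (hTD h)⟩⟩
  choose S hSG C D hC hD hCt hDt hSCD using key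
  obtain ⟨S', hS'G, hS'm, hS'S⟩ :=
    IsMeasurablyGenerated.exists_measurable_subset (countable_iInter_mem.2 hSG)
  let B : Set F := U ∩ ⋂ p : I, {y | (y ∈ p.1.1 → f y ∉ C p) ∧ (y ∈ p.1.2 → f y ∈ C p)}
  have hBm : MeasurableSet B := by
    refine hU.inter (MeasurableSet.iInter fun p => ?_)
    have e : {y | (y ∈ p.1.1 → f y ∉ C p) ∧ (y ∈ p.1.2 → f y ∈ C p)} =
        (p.1.1ᶜ ∪ f ⁻¹' (C p)ᶜ) ∩ (p.1.2ᶜ ∪ f ⁻¹' (C p)) := by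
      ext y; simp [imp_iff_not_or]
    rw [e]
    exact ((h𝓑m _ p.2.1.1).compl.union (hf (hC p).compl)).inter
      ((h𝓑m _ p.2.1.2).compl.union (hf (hC p)))
  have hBi : InjOn f B := by
    rintro y ⟨hyU, hy⟩ y' ⟨hyU', hy'⟩ hff
    by_contra hne
    obtain ⟨V, hV, W, hW, hyV, hyW, hVW⟩ := h𝓑s y hyU y' hyU' hne
    have h1 := (mem_iInter.1 hy ⟨(V, W), ⟨hV, hW⟩, hVW⟩).1 hyV
    have h2 := (mem_iInter.1 hy' ⟨(V, W), ⟨hV, hW⟩, hVW⟩).2 hyW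
    rw [hff] at h1
    exact h1 h2
  have hthin : Thin f (U ∩ f ⁻¹' S') := by
    have hN : Thin f (⋃ b : Bool, bif b then B else
        ⋃ p : I, ⋃ b : Bool, bif b then p.1.1 ∩ f ⁻¹' C p else p.1.2 ∩ f ⁻¹' D p) := by
      refine Thin.iUnion fun b => ?_
      cases b
      · refine Thin.iUnion fun p => Thin.iUnion fun b => ?_
        cases b
        · exact hDt p
        · exact hCt p
      · exact Thin.of_injOn hBm hBi
    refine hN.mono ?_
    rintro y ⟨hyU, hyS⟩
    by_contra hy
    simp only [mem_iUnion, not_exists] at hy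
    have hy1 := hy true
    have hy2 : ∀ p : I, ∀ b : Bool, y ∉ bif b then p.1.1 ∩ f ⁻¹' C p else p.1.2 ∩ f ⁻¹' D p := by
      simpa using hy false
    refine hy1 ⟨hyU, mem_iInter.2 fun p => ⟨fun hV hc => hy2 p true ⟨hV, hc⟩, fun hW => ?_⟩⟩
    rcases hSCD p (mem_iInter.1 (hS'S hyS) p) with h | h
    · exact h
    · exact absurd ⟨hW, h⟩ (hy2 p false)
  refine hG.ne (empty_mem_iff_bot.1 (mem_inf_iff_superset.2
    ⟨S', hS'G, S'ᶜ, ⟨S', hS'm, by simp, hthin⟩, by simp⟩))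

omit [MeasurableSpace X] in
theorem countableInterFilter_biInf {ι : Type*} (s : Finset ι) (g : ι → Filter X)
    [∀ i, CountableInterFilter (g i)] : CountableInterFilter (⨅ i ∈ s, g i) := by
  classical
  induction s using Finset.induction_on with
  | empty => simpa using countableInterFilter_top
  | insert a s ha ih =>
    rw [Finset.iInf_insert]
    exact countableInterFilter_inf _ _

/-- Splits finitely many sets one after the other, absorbing the filters already obtained
into `G`. -/
theorem exists_split_finset {f : F → X} (hf : Measurable f) {ι : Type*} (s : Finset ι)
    {U : ι → Set F} (hU : ∀ i, MeasurableSet (U i)) {𝓑 : ι → Set (Set F)}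
    (h𝓑c : ∀ i, (𝓑 i).Countable) (h𝓑m : ∀ i, ∀ V ∈ 𝓑 i, MeasurableSet V)
    (h𝓑s : ∀ i, ∀ y ∈ U i, ∀ y' ∈ U i, y ≠ y' →
      ∃ V ∈ 𝓑 i, ∃ W ∈ 𝓑 i, y ∈ V ∧ y' ∈ W ∧ Disjoint V W)
    (G : Filter X) [CountableInterFilter G] [IsMeasurablyGenerated G]
    (hG : (G ⊓ ⨅ i ∈ s, thinFilter f (U i)).NeBot) :
    ∃ V W : ι → Set F, (∀ i ∈ s, V i ∈ 𝓑 i ∧ W i ∈ 𝓑 i ∧ Disjoint (V i) (W i)) ∧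
      (G ⊓ ⨅ i ∈ s, (thinFilter f (V i) ⊓ thinFilter f (W i))).NeBot := by
  classical
  induction s using Finset.induction_on generalizing G with
  | empty => exact ⟨fun _ => ∅, fun _ => ∅, by simp, by simpa using hG⟩
  | insert a s ha ih =>
    rw [Finset.iInf_insert, inf_comm (thinFilter f (U a)), ← inf_assoc] at hG
    have := countableInterFilter_biInf s fun i => thinFilter f (U i)
    obtain ⟨V, hV, W, hW, hVW, h⟩ := exists_split hf (hU a) hG (h𝓑c a) (h𝓑m a) (h𝓑s a)
    rw [inf_assoc, inf_comm (⨅ i ∈ s, _), ← inf_assoc] at h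
    obtain ⟨V', W', h', hn⟩ := ih _ h
    refine ⟨Function.update V' a V, Function.update W' a W, ?_, ?_⟩
    · intro i hi
      rcases eq_or_ne i a with rfl | hne
      · simpa using ⟨hV, hW, hVW⟩
      · simpa [hne] using h' i (Finset.mem_of_mem_insert_of_ne hi hne)
    · rw [Finset.iInf_insert, ← inf_assoc]
      have e : (⨅ i ∈ s, (thinFilter f (Function.update V' a V i) ⊓
          thinFilter f (Function.update W' a W i))) =
          ⨅ i ∈ s, (thinFilter f (V' i) ⊓ thinFilter f (W' i)) := by
        refine iInf_congr fun i => iInf_congr fun hi => ?_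
        have hne : i ≠ a := fun h => ha (h ▸ hi)
        simp [hne]
      rw [e, Function.update_self, Function.update_self]
      exact hn

/-- Repeated splitting builds a Cantor scheme of open sets of `F` in which any two sets of the same
level have compatible thin filters. Compatibility forces `f` to identify any two branches, so the
scheme embeds the Cantor space in a single fibre, which contradicts countability. -/
theorem thin_univ_of_continuous [TopologicalSpace F] [PolishSpace F] [BorelSpace F]
    [TopologicalSpace X] [T2Space X] [RegularSpace X] [OpensMeasurableSpace X]
    {f : F → X} (hf : Continuous f) (hfm : Measurable f)
    (hc : ∀ x, (f ⁻¹' {x}).Countable) : Thin f univ := by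
  classical
  by_contra hthin
  let := TopologicalSpace.upgradeIsCompletelyMetrizable F
  let T : ℕ → Finset (List Bool) := fun n => (List.finite_length_eq Bool n).toFinset
  have hT : ∀ {n l}, l ∈ T n ↔ l.length = n := by simp [T]
  let State (n : ℕ) := {U : List Bool → Set F //
    (∀ l, IsOpen (U l)) ∧ (⨅ l ∈ T n, thinFilter f (U l)).NeBot}
  have init : ∃ U : State 0, True := by
    refine ⟨⟨fun _ => univ, fun _ => isOpen_univ, ?_⟩, trivial⟩
    refine NeBot.mono (f := thinFilter f univ) ?_ (le_iInf₂ fun _ _ => le_rfl)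
    refine ⟨fun h => hthin ?_⟩
    obtain ⟨C, -, hC, hC'⟩ := mem_thinFilter.1 (empty_mem_iff_bot.2 h)
    rw [compl_empty, univ_subset_iff] at hC
    simpa [hC] using hC'
  have step : ∀ n (U : State n), ∃ U' : State (n + 1), ∀ l, l.length = n →
      Disjoint (U'.1 (true :: l)) (U'.1 (false :: l)) ∧
      ∀ b, closure (U'.1 (b :: l)) ⊆ U.1 l ∧
        Metric.ediam (U'.1 (b :: l)) ≤ 2 * ((n : ENNReal) + 1)⁻¹ := by
    rintro n ⟨U, hUo, hU⟩
    let 𝓑 : List Bool → Set (Set F) := fun l => {V ∈ TopologicalSpace.countableBasis F |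
      closure V ⊆ U l ∧ Metric.ediam V ≤ 2 * ((n : ENNReal) + 1)⁻¹}
    have h𝓑o : ∀ l, ∀ V ∈ 𝓑 l, IsOpen V := fun l V hV =>
      TopologicalSpace.isOpen_of_mem_countableBasis hV.1
    have h𝓑n : ∀ l, ∀ y ∈ U l, ∀ O ∈ 𝓝 y, ∃ V ∈ 𝓑 l, y ∈ V ∧ V ⊆ O := by
      intro l y hy O hO
      have hb : Metric.eball y ((n : ENNReal) + 1)⁻¹ ∈ 𝓝 y :=
        Metric.eball_mem_nhds _ (by simp)
      obtain ⟨V, hV, hyV, hVs⟩ :=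
        (TopologicalSpace.isBasis_countableBasis F).exists_closure_subset
          (inter_mem (inter_mem ((hUo l).mem_nhds hy) hO) hb)
      refine ⟨V, ⟨hV, fun z hz => (hVs hz).1.1, ?_⟩, hyV,
        fun z hz => (hVs (subset_closure hz)).1.2⟩
      exact (Metric.ediam_mono fun z hz => (hVs (subset_closure hz)).2).trans
        Metric.ediam_eball_le
    have h𝓑s : ∀ l, ∀ y ∈ U l, ∀ y' ∈ U l, y ≠ y' →
        ∃ V ∈ 𝓑 l, ∃ W ∈ 𝓑 l, y ∈ V ∧ y' ∈ W ∧ Disjoint V W := by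
      intro l y hy y' hy' hne
      obtain ⟨O, O', hO, hO', hyO, hyO', hd⟩ := t2_separation hne
      obtain ⟨V, hV, hyV, hVO⟩ := h𝓑n l y hy O (hO.mem_nhds hyO)
      obtain ⟨W, hW, hyW, hWO⟩ := h𝓑n l y' hy' O' (hO'.mem_nhds hyO')
      exact ⟨V, hV, W, hW, hyV, hyW, hd.mono hVO hWO⟩
    have hG : ((⊤ : Filter X) ⊓ ⨅ l ∈ T n, thinFilter f (U l)).NeBot := by
      rw [top_inf_eq]; exact hU
    obtain ⟨V, W, hVW, hne⟩ := exists_split_finset hfm (T n) (fun l => (hUo l).measurableSet)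
      (𝓑 := 𝓑) (fun l => (TopologicalSpace.countable_countableBasis F).mono fun V hV => hV.1)
      (fun l V hV => (h𝓑o l V hV).measurableSet) h𝓑s ⊤ hG
    rw [top_inf_eq] at hne
    let U' : List Bool → Set F := fun l => match l with
      | [] => ∅
      | b :: l => if l ∈ T n then (bif b then V l else W l) else ∅
    have hU't : ∀ l ∈ T n, U' (true :: l) = V l := fun l hl => by simp [U', hl]
    have hU'f : ∀ l ∈ T n, U' (false :: l) = W l := fun l hl => by simp [U', hl]
    refine ⟨⟨U', ?_, ?_⟩, ?_⟩
    · rintro (_ | ⟨b, l⟩)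
      · exact isOpen_empty
      · by_cases hl : l ∈ T n
        · cases b
          · rw [hU'f l hl]; exact h𝓑o l _ (hVW l hl).2.1
          · rw [hU't l hl]; exact h𝓑o l _ (hVW l hl).1
        · simp [U', hl]
    · refine hne.mono (le_iInf₂ fun l' hl' => ?_)
      obtain _ | ⟨b, l⟩ := l'
      · simp [hT] at hl'
      · have hl : l ∈ T n := by simpa [hT] using hl'
        refine iInf₂_le_of_le l hl ?_
        cases b
        · rw [hU'f l hl]; exact inf_le_right
        · rw [hU't l hl]; exact inf_le_left
    · intro l hl
      rw [← hT] at hl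
      refine ⟨?_, fun b => ?_⟩
      · simp only [hU't l hl, hU'f l hl]
        exact (hVW l hl).2.2
      cases b
      · simp only [hU'f l hl]; exact (hVW l hl).2.1.2
      · simp only [hU't l hl]; exact (hVW l hl).1.2
  obtain ⟨U0, -⟩ := init
  choose next hnext using step
  let lev : ∀ n, State n := fun n => Nat.rec U0 (fun n U => next n U) n
  have hlev : ∀ n, lev (n + 1) = next n (lev n) := fun n => rfl
  let A : List Bool → Set F := fun l => (lev l.length).1 l
  have hA : ∀ l, Disjoint (A (true :: l)) (A (false :: l)) ∧
      ∀ b, closure (A (b :: l)) ⊆ A l ∧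
        Metric.ediam (A (b :: l)) ≤ 2 * ((l.length : ENNReal) + 1)⁻¹ := by
    intro l
    have h := hnext l.length (lev l.length) l rfl
    rw [← hlev] at h
    exact h
  have hpair : ∀ l l', l.length = l'.length →
      (thinFilter f (A l) ⊓ thinFilter f (A l')).NeBot := by
    intro l l' hll
    refine (lev l.length).2.2.mono (le_inf (iInf₂_le l (hT.2 rfl)) ?_)
    have e : A l' = (lev l.length).1 l' := by
      simp only [A]
      rw [hll]
    rw [e]
    exact iInf₂_le l' (hT.2 hll.symm)
  have hne : ∀ l, (A l).Nonempty := by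
    intro l
    by_contra h
    rw [not_nonempty_iff_eq_empty] at h
    refine (hpair l l rfl).ne ?_
    rw [inf_idem, ← empty_mem_iff_bot, mem_thinFilter]
    refine ⟨univ, MeasurableSet.univ, subset_univ _, ?_⟩
    rw [h, empty_inter]
    exact Thin.of_injOn MeasurableSet.empty (injOn_empty _)
  have hanti : CantorScheme.ClosureAntitone A := fun l b => ((hA l).2 b).1
  have hdisj : CantorScheme.Disjoint A := by
    intro l a b hab
    cases a <;> cases b
    · exact absurd rfl hab
    · exact (hA l).1.symm
    · exact (hA l).1
    · exact absurd rfl hab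
  have hdiam : CantorScheme.VanishingDiam A := by
    intro x
    rw [← tendsto_add_atTop_iff_nat 1]
    refine tendsto_of_tendsto_of_tendsto_of_le_of_le tendsto_const_nhds
      (h := fun n : ℕ => 2 * ((n : ENNReal) + 1)⁻¹) ?_ (fun _ => zero_le) ?_
    · have h1 : Tendsto (fun n : ℕ => ((n : ENNReal) + 1)⁻¹) atTop (𝓝 0) := by
        have := (tendsto_add_atTop_iff_nat 1).2 ENNReal.tendsto_inv_nat_nhds_zero
        simpa using this
      simpa using ENNReal.Tendsto.const_mul h1 (Or.inr (by simp : (2 : ENNReal) ≠ ⊤))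
    · intro n
      have := ((hA (PiNat.res x n)).2 (x n)).2
      rwa [PiNat.res_length] at this
  have huniv := hanti.map_of_vanishingDiam hdiam hne
  let g : (ℕ → Bool) → F := fun x => (CantorScheme.inducedMap A).2 ⟨x, huniv ▸ mem_univ x⟩
  have hg : Function.Injective g := fun x y h => by
    simpa using hdisj.map_injective h
  have hgmem : ∀ x n, g x ∈ A (PiNat.res x n) := fun x n => CantorScheme.map_mem _ n
  have hsmall : ∀ x, ∀ O ∈ 𝓝 (g x), ∃ N, ∀ n ≥ N, A (PiNat.res x n) ⊆ O := by
    intro x O hO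
    obtain ⟨ε, hε, hb⟩ := Metric.mem_nhds_iff.1 hO
    obtain ⟨N, hN⟩ := hdiam.dist_lt ε hε x
    refine ⟨N, fun n hn z hz => hb (hN z ?_ _ (hgmem x N))⟩
    have hant : Antitone fun n => A (PiNat.res x n) :=
      antitone_nat_of_succ_le fun n => hanti.antitone _ _
    exact hant hn hz
  have hconst : ∀ x y, f (g x) = f (g y) := by
    intro x y
    by_contra hxy
    obtain ⟨O, O', hO, hO', hxO, hyO, hd⟩ := t2_separation hxy
    obtain ⟨N, hN⟩ := hsmall x _ ((hO.preimage hf).mem_nhds hxO)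
    obtain ⟨N', hN'⟩ := hsmall y _ ((hO'.preimage hf).mem_nhds hyO)
    have h1 := hN (max N N') (le_max_left _ _)
    have h2 := hN' (max N N') (le_max_right _ _)
    refine (hpair (PiNat.res x (max N N')) (PiNat.res y (max N N')) (by simp)).ne ?_
    rw [← empty_mem_iff_bot]
    refine mem_inf_iff_superset.2 ⟨O, mem_thinFilter.2 ⟨Oᶜ, hO.measurableSet.compl, subset_rfl, ?_⟩,
      Oᶜ, mem_thinFilter.2 ⟨O, hO.measurableSet, by simp, ?_⟩, by simp⟩
    · have : A (PiNat.res x (max N N')) ∩ f ⁻¹' Oᶜ = ∅ := by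
        ext z
        simp only [mem_inter_iff, mem_preimage, mem_compl_iff, mem_empty_iff_false, iff_false,
          not_and, not_not]
        exact fun hz => h1 hz
      rw [this]
      exact Thin.of_injOn MeasurableSet.empty (injOn_empty _)
    · have : A (PiNat.res y (max N N')) ∩ f ⁻¹' O = ∅ := by
        ext z
        simp only [mem_inter_iff, mem_preimage, mem_empty_iff_false, iff_false, not_and]
        exact fun hz hzO => disjoint_left.1 hd hzO (h2 hz)
      rw [this]
      exact Thin.of_injOn MeasurableSet.empty (injOn_empty _)
  have hcount : (range g).Countable :=
    (hc (f (g fun _ => false))).mono (by rintro _ ⟨x, rfl⟩; exact hconst _ _)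
  have : Countable (ℕ → Bool) := by
    have := hcount.to_subtype
    exact (Set.rangeFactorization_injective.2 hg).countable
  obtain ⟨e, he⟩ := exists_surjective_nat (ℕ → Bool)
  obtain ⟨n, hn⟩ := he fun n => !(e n n)
  have := congrFun hn n
  simp at this

/-- Lusin–Novikov: the domain of a countable-to-one Borel map is a countable union of Borel sets on
which the map is injective. -/
theorem thin_univ [StandardBorelSpace F] [StandardBorelSpace X] {f : F → X} (hf : Measurable f)
    (hc : ∀ x, (f ⁻¹' {x}).Countable) : Thin f univ := by
  obtain ⟨tF, hFB, hFP⟩ := StandardBorelSpace.polish (α := F)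
  obtain ⟨tX, hXB, hXP⟩ := StandardBorelSpace.polish (α := X)
  obtain ⟨t', ht', hcont, hpol⟩ := hf.exists_continuous
  have hB : @BorelSpace F t' _ := by
    refine @BorelSpace.mk F t' _ ?_
    rw [hFB.measurable_eq]
    exact (borel_eq_borel_of_le hpol hFP ht').symm
  exact @thin_univ_of_continuous F X _ _ t' hpol hB _ _ _ _ f hcont hf hc

end LusinNovikov

/-! ### The Feldman–Moore theorem -/

section FeldmanMoore
variable {X : Type*} [MeasurableSpace X] [StandardBorelSpace X]

/-- A Borel set `D` that is the graph of a partial injection with disjoint domain and range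
extends to a Borel involution exchanging the two and fixing every other point. -/
theorem exists_involution_of_graph {D : Set (X × X)} (hD : MeasurableSet D)
    (h1 : InjOn Prod.fst D) (h2 : InjOn Prod.snd D)
    (hdisj : Disjoint (Prod.fst '' D) (Prod.snd '' D)) :
    ∃ g : X → X, Measurable g ∧ (∀ x, g (g x) = x) ∧ (∀ p ∈ D, g p.1 = p.2 ∧ g p.2 = p.1) ∧
      ∀ x, g x = x ∨ (x, g x) ∈ D ∨ (g x, x) ∈ D := by
  classical
  let g : X → X := fun x => if h : ∃ y, (x, y) ∈ D then h.choose else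
    if h : ∃ y, (y, x) ∈ D then h.choose else x
  have hfs : ∀ x y z, (x, y) ∈ D → (z, x) ∉ D := fun x y z h h' =>
    disjoint_left.1 hdisj (mem_image_of_mem _ h) (mem_image_of_mem Prod.snd h')
  have hg1 : ∀ x y, (x, y) ∈ D → g x = y := by
    intro x y h
    have hex : ∃ y, (x, y) ∈ D := ⟨y, h⟩
    have e : g x = hex.choose := dif_pos hex
    rw [e]
    exact congrArg Prod.snd (h1 hex.choose_spec h rfl)
  have hg2 : ∀ x y, (x, y) ∈ D → g y = x := by
    intro x y h
    have hex : ∃ x, (x, y) ∈ D := ⟨x, h⟩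
    have hnex : ¬ ∃ z, (y, z) ∈ D := fun ⟨z, hz⟩ => hfs _ _ _ hz h
    have e : g y = hex.choose := (dif_neg hnex).trans (dif_pos hex)
    rw [e]
    exact congrArg Prod.fst (h2 hex.choose_spec h rfl)
  have hg3 : ∀ x, (¬ ∃ y, (x, y) ∈ D) → (¬ ∃ y, (y, x) ∈ D) → g x = x := fun x h h' =>
    (dif_neg h).trans (dif_neg h')
  refine ⟨g, ?_, ?_, fun p hp => ⟨hg1 _ _ hp, hg2 _ _ hp⟩, ?_⟩
  · intro A hA
    have e : g ⁻¹' A = Prod.fst '' (D ∩ Prod.snd ⁻¹' A) ∪ Prod.snd '' (D ∩ Prod.fst ⁻¹' A) ∪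
        (A \ (Prod.fst '' D ∪ Prod.snd '' D)) := by
      ext x
      by_cases hx1 : ∃ y, (x, y) ∈ D
      · obtain ⟨y, hy⟩ := hx1
        have hx2 : ∀ z, (z, x) ∉ D := fun z => hfs _ _ _ hy
        have hu : ∀ z, (x, z) ∈ D ↔ z = y := fun z =>
          ⟨fun h => congrArg Prod.snd (h1 h hy rfl), fun h => h ▸ hy⟩
        simp [hg1 _ _ hy, hx2, hu]
      · by_cases hx2 : ∃ y, (y, x) ∈ D
        · obtain ⟨y, hy⟩ := hx2
          have hu : ∀ z, (z, x) ∈ D ↔ z = y := fun z =>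
            ⟨fun h => congrArg Prod.fst (h2 h hy rfl), fun h => h ▸ hy⟩
          push Not at hx1
          simp [hg2 _ _ hy, hx1, hu]
        · have := hg3 x hx1 hx2
          push Not at hx1 hx2
          simp [this, hx1, hx2]
    rw [e]
    refine ((MeasurableSet.image_of_measurable_injOn (hD.inter (measurable_snd hA)) measurable_fst
      (h1.mono inter_subset_left)).union (MeasurableSet.image_of_measurable_injOn
        (hD.inter (measurable_fst hA)) measurable_snd (h2.mono inter_subset_left))).union
      (hA.diff ((hD.image_of_measurable_injOn measurable_fst h1).union
        (hD.image_of_measurable_injOn measurable_snd h2)))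
  · intro x
    by_cases hx1 : ∃ y, (x, y) ∈ D
    · obtain ⟨y, hy⟩ := hx1
      rw [hg1 _ _ hy, hg2 _ _ hy]
    · by_cases hx2 : ∃ y, (y, x) ∈ D
      · obtain ⟨y, hy⟩ := hx2
        rw [hg2 _ _ hy, hg1 _ _ hy]
      · rw [hg3 x hx1 hx2, hg3 x hx1 hx2]
  · intro x
    by_cases hx1 : ∃ y, (x, y) ∈ D
    · obtain ⟨y, hy⟩ := hx1
      rw [hg1 _ _ hy]; exact Or.inr (Or.inl hy)
    · by_cases hx2 : ∃ y, (y, x) ∈ D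
      · obtain ⟨y, hy⟩ := hx2
        rw [hg2 _ _ hy]; exact Or.inr (Or.inr hy)
      · exact Or.inl (hg3 x hx1 hx2)

/-- Feldman–Moore: a countable Borel equivalence relation is the union of the graphs of countably
many Borel involutions. Both projections of `E` are countable-to-one, so `E` is a countable union of
graphs of partial injections; a rational cut of a real-valued embedding makes domain and range
disjoint. -/
theorem exists_involutions {E : X → X → Prop} (hE : Equivalence E)
    (hEmeas : MeasurableSet {p : X × X | E p.1 p.2})
    (hEcount : ∀ x, {y | E x y}.Countable) :
    ∃ g : ℕ → X → X, (∀ n, Measurable (g n)) ∧ (∀ n x, g n (g n x) = x) ∧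
      ∀ x y, E x y ↔ ∃ n, g n x = y := by
  classical
  let S := {p : X × X | E p.1 p.2}
  have : StandardBorelSpace S := hEmeas.standardBorel
  have hfst : Measurable fun p : S => p.1.1 := measurable_fst.comp measurable_subtype_coe
  have hsnd : Measurable fun p : S => p.1.2 := measurable_snd.comp measurable_subtype_coe
  obtain ⟨B, hB, hBu⟩ := thin_univ hfst (fun x => by
    refine ((hEcount x).image fun y => (x, y)).preimage_of_injOn
      (f := fun p : S => p.1) Subtype.val_injective.injOn |>.mono ?_
    rintro ⟨⟨a, b⟩, hab⟩ rfl
    exact ⟨b, hab, rfl⟩)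
  obtain ⟨C, hC, hCu⟩ := thin_univ hsnd (fun x => by
    refine ((hEcount x).image fun y => (y, x)).preimage_of_injOn
      (f := fun p : S => p.1) Subtype.val_injective.injOn |>.mono ?_
    rintro ⟨⟨a, b⟩, hab⟩ rfl
    exact ⟨a, hE.symm hab, rfl⟩)
  obtain ⟨φ, hφ⟩ := exists_measurableEmbedding_real X
  let D : ℕ × ℕ × ℚ → Set (X × X) := fun i =>
    (Subtype.val '' (B i.1 ∩ C i.2.1)) ∩ {p | φ p.1 < i.2.2 ∧ (i.2.2 : ℝ) < φ p.2}
  have hDE : ∀ i, ∀ p ∈ D i, E p.1 p.2 := by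
    rintro i _ ⟨⟨p, -, rfl⟩, -⟩
    exact p.2
  have hg : ∀ i, ∃ g : X → X, Measurable g ∧ (∀ x, g (g x) = x) ∧
      (∀ p ∈ D i, g p.1 = p.2 ∧ g p.2 = p.1) ∧
      ∀ x, g x = x ∨ (x, g x) ∈ D i ∨ (g x, x) ∈ D i := by
    intro i
    refine exists_involution_of_graph ?_ ?_ ?_ ?_
    · refine (hEmeas.subtype_image ((hB _).1.inter (hC _).1)).inter ?_
      exact (measurableSet_lt (hφ.measurable.comp measurable_fst) measurable_const).inter
        (measurableSet_lt measurable_const (hφ.measurable.comp measurable_snd))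
    · rintro _ ⟨⟨p, hp, rfl⟩, -⟩ _ ⟨⟨q, hq, rfl⟩, -⟩ h
      exact congrArg Subtype.val ((hB _).2 hp.1 hq.1 h)
    · rintro _ ⟨⟨p, hp, rfl⟩, -⟩ _ ⟨⟨q, hq, rfl⟩, -⟩ h
      exact congrArg Subtype.val ((hC _).2 hp.2 hq.2 h)
    · rw [disjoint_left]
      rintro _ ⟨p, hp, rfl⟩ ⟨q, hq, hqp⟩
      have h1 := hp.2.1
      have h2 := hq.2.2
      rw [hqp] at h2
      exact lt_asymm h1 h2
  choose g hgm hgi hgD hgE using hg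
  obtain ⟨e, he⟩ := exists_surjective_nat (Option (ℕ × ℕ × ℚ))
  let G : Option (ℕ × ℕ × ℚ) → X → X := fun o => o.elim id g
  refine ⟨fun n => G (e n), fun n => ?_, fun n x => ?_, fun x y => ⟨fun h => ?_, ?_⟩⟩
  · dsimp only
    rcases e n with _ | i
    · exact measurable_id
    · exact hgm i
  · dsimp only
    rcases e n with _ | i
    · rfl
    · exact hgi i x
  · suffices h : ∃ o, G o x = y by
      obtain ⟨o, ho⟩ := h
      obtain ⟨n, rfl⟩ := he o
      exact ⟨n, ho⟩
    have cover : ∀ x y, E x y → φ x < φ y → ∃ i, (x, y) ∈ D i := by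
      intro x y h hlt
      obtain ⟨q, hq1, hq2⟩ := exists_rat_btwn hlt
      obtain ⟨n, hn⟩ := mem_iUnion.1 (hBu (mem_univ ⟨(x, y), h⟩))
      obtain ⟨m, hm⟩ := mem_iUnion.1 (hCu (mem_univ ⟨(x, y), h⟩))
      exact ⟨(n, m, q), ⟨⟨(x, y), h⟩, ⟨hn, hm⟩, rfl⟩, hq1, hq2⟩
    rcases lt_trichotomy (φ x) (φ y) with hlt | heq | hlt
    · obtain ⟨i, hi⟩ := cover x y h hlt
      exact ⟨some i, (hgD i _ hi).1⟩
    · exact ⟨none, hφ.injective heq⟩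
    · obtain ⟨i, hi⟩ := cover y x (hE.symm h) hlt
      exact ⟨some i, (hgD i _ hi).2⟩
  · rintro ⟨n, rfl⟩
    dsimp only
    rcases e n with _ | i
    · exact hE.refl x
    · rcases hgE i x with h | h | h
      · change E x (g i x)
        rw [h]; exact hE.refl x
      · exact hDE i _ h
      · exact hE.symm (hDE i _ h)

end FeldmanMoore

/-! ### Pairings and towers of roots -/

section Tower
variable {X : Type*} [MeasurableSpace X]

/-- An increasing sequence of finite Borel subequivalence relations of `E`, presented by roots.
The relation at level `n` is `r n x = r n y`; its classes are called blocks, and `r n x` is the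
root of the block of `x`. The involution `T n` pairs roots of level `n`, leaving at most one of
them per `E`-class fixed, and level `n + 1` merges the paired blocks, keeping one of the two
roots. -/
structure Tower (E : X → X → Prop) where
  r : ℕ → X → X
  T : ℕ → X → X
  r_zero : ∀ x, r 0 x = x
  measurable_r : ∀ n, Measurable (r n)
  measurable_T : ∀ n, Measurable (T n)
  r_r : ∀ n x, r n (r n x) = r n x
  T_T : ∀ n x, T n (T n x) = x
  rel_r : ∀ n x, E x (r n x)
  rel_T : ∀ n x, E x (T n x)
  r_T : ∀ n x, r n x = x → r n (T n x) = T n x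
  eq_of_fixed : ∀ n x y, r n x = x → r n y = y → E x y → T n x = x → T n y = y → x = y
  r_succ : ∀ n x, r (n + 1) x = r n x ∨ r (n + 1) x = T n (r n x)
  r_succ_T : ∀ n x, r n x = x → r (n + 1) (T n x) = r (n + 1) x
  r_succ_r : ∀ n x, r (n + 1) (r n x) = r (n + 1) x

variable [StandardBorelSpace X] {E : X → X → Prop} {g : ℕ → X → X}

open Classical in
/-- A maximal Borel pairing of the points of `Z` within `E`-classes: an involution of `Z` inside `E`
with at most one fixed point of `Z` in each class. At stage `j` every unpaired point of `Z` is
matched with its image under `g j`, when that image is also an unpaired point of `Z`. -/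
theorem exists_pairing (hE : Equivalence E) (hgm : ∀ n, Measurable (g n))
    (hgi : ∀ n x, g n (g n x) = x) (hgE : ∀ x y, E x y ↔ ∃ n, g n x = y)
    {Z : Set X} (hZ : MeasurableSet Z) :
    ∃ T : X → X, Measurable T ∧ (∀ x, T (T x) = x) ∧ (∀ x, E x (T x)) ∧
      (∀ x ∈ Z, T x ∈ Z) ∧
      ∀ x ∈ Z, ∀ y ∈ Z, E x y → T x = x → T y = y → x = y := by
  let D : ℕ → (X → X) → X → Prop := fun j t x =>
    x ∈ Z ∧ t x = x ∧ g j x ∈ Z ∧ t (g j x) = g j x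
  let step : ℕ → (X → X) → X → X := fun j t x => if D j t x then g j x else t x
  obtain ⟨t, t0, tsucc⟩ : ∃ t : ℕ → X → X, t 0 = id ∧ ∀ j, t (j + 1) = step j (t j) :=
    ⟨fun j => Nat.rec id step j, rfl, fun _ => rfl⟩
  have tpos : ∀ j x, D j (t j) x → t (j + 1) x = g j x := fun j x h => by
    rw [tsucc]; exact if_pos h
  have tneg : ∀ j x, ¬ D j (t j) x → t (j + 1) x = t j x := fun j x h => by
    rw [tsucc]; exact if_neg h
  have htm : ∀ j, Measurable (t j) := by
    intro j
    induction j with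
    | zero => rw [t0]; exact measurable_id
    | succ j ih =>
      rw [tsucc]
      refine Measurable.ite ?_ (hgm j) ih
      exact hZ.inter ((measurableSet_eq_fun ih measurable_id).inter
        ((hgm j hZ).inter (measurableSet_eq_fun (ih.comp (hgm j)) (hgm j))))
  have htE : ∀ j x, E x (t j x) := by
    intro j x
    induction j with
    | zero => rw [t0]; exact hE.refl x
    | succ j ih =>
      by_cases h : D j (t j) x
      · rw [tpos j x h]; exact (hgE _ _).2 ⟨j, rfl⟩
      · rw [tneg j x h]; exact ih
  have htZ : ∀ j, ∀ x ∈ Z, t j x ∈ Z := by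
    intro j x hx
    induction j with
    | zero => rw [t0]; exact hx
    | succ j ih =>
      by_cases h : D j (t j) x
      · rw [tpos j x h]; exact h.2.2.1
      · rw [tneg j x h]; exact ih
  have htt : ∀ j x, t j (t j x) = x := by
    intro j
    induction j with
    | zero => rw [t0]; exact fun x => rfl
    | succ j ih =>
      intro x
      by_cases h : D j (t j) x
      · rw [tpos j x h, tpos j (g j x), hgi]
        exact ⟨h.2.2.1, h.2.2.2, by rw [hgi]; exact h.1, by rw [hgi]; exact h.2.1⟩
      · rw [tneg j x h, tneg j, ih]
        intro h'
        have e : t j x = x := by rw [← h'.2.1, ih]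
        rw [e] at h'
        exact h h'
  have hstay : ∀ j x, t j x ≠ x → ∀ k ≥ j, t k x = t j x := by
    intro j x hx k hk
    induction k, hk using Nat.le_induction with
    | base => rfl
    | succ k hk ih =>
      rw [tneg k x, ih]
      exact fun h => hx (ih ▸ h.2.1)
  have hlim : ∀ x, ∃ y N, ∀ k ≥ N, t k x = y := by
    intro x
    by_cases h : ∃ j, t j x ≠ x
    · obtain ⟨j, hj⟩ := h
      exact ⟨_, j, hstay j x hj⟩
    · push Not at h
      exact ⟨x, 0, fun k _ => h k⟩
  choose T N hT using hlim
  have hfix : ∀ x, T x = x → ∀ j, t j x = x := by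
    intro x hx j
    by_contra hj
    have h1 := hstay j x hj (max j (N x)) (le_max_left _ _)
    rw [hT x _ (le_max_right _ _), hx] at h1
    exact hj h1.symm
  refine ⟨T, ?_, fun x => ?_, fun x => ?_, fun x hx => ?_, fun x hx y hy hxy hTx hTy => ?_⟩
  · obtain ⟨φ, hφ⟩ := exists_measurableEmbedding_real X
    -- The stages stabilize pointwise, so after embedding `X` in `ℝ` the limit is a pointwise limit
    -- of measurable functions.
    rw [← hφ.measurable_comp_iff]
    refine measurable_of_tendsto_metrizable (fun j => hφ.measurable.comp (htm j)) ?_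
    rw [tendsto_pi_nhds]
    intro x
    refine tendsto_const_nhds.congr' ?_
    filter_upwards [eventually_ge_atTop (N x)] with k hk
    simp [hT x k hk]
  · have h1 := hT x (max (N x) (N (T x))) (le_max_left _ _)
    have h2 := hT (T x) (max (N x) (N (T x))) (le_max_right _ _)
    have h3 := htt (max (N x) (N (T x))) x
    rwa [h1, h2] at h3
  · rw [← hT x _ le_rfl]; exact htE _ x
  · rw [← hT x _ le_rfl]; exact htZ _ x hx
  · obtain ⟨j, rfl⟩ := (hgE x y).1 hxy
    have h : D j (t j) x := ⟨hx, hfix x hTx j, hy, hfix _ hTy j⟩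
    exact (hfix x hTx (j + 1)).symm.trans (tpos j x h)

open Classical in
/-- Iterating maximal pairings of the roots, each time keeping one root of every pair. -/
theorem exists_tower (hE : Equivalence E) (hgm : ∀ n, Measurable (g n))
    (hgi : ∀ n x, g n (g n x) = x) (hgE : ∀ x y, E x y ↔ ∃ n, g n x = y) :
    Nonempty (Tower E) := by
  obtain ⟨φ, hφ⟩ := exists_measurableEmbedding_real X
  -- Of two paired roots the one with the smaller real code is kept.
  let mn : X → X → X := fun a b => if φ a ≤ φ b then a else b
  have mn_or : ∀ a b, mn a b = a ∨ mn a b = b := fun a b => ite_eq_or_eq _ _ _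
  have mn_comm : ∀ a b, mn a b = mn b a := by
    intro a b
    rcases lt_trichotomy (φ a) (φ b) with h | h | h
    · simp [mn, h.le, h.not_ge]
    · rw [hφ.injective h]
    · simp [mn, h.le, h.not_ge]
  let State := {r : X → X // Measurable r ∧ (∀ x, r (r x) = r x) ∧ ∀ x, E x (r x)}
  have hpair := fun s : State => exists_pairing hE hgm hgi hgE
    (measurableSet_eq_fun s.2.1 measurable_id)
  choose P hPm hPP hPE hPr hPf using hpair
  have hor : ∀ (s : State) x, mn (s.1 x) (P s (s.1 x)) = s.1 x ∨
    mn (s.1 x) (P s (s.1 x)) = P s (s.1 x) := fun s x => mn_or _ _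
  let next : State → State := fun s => ⟨fun x => mn (s.1 x) (P s (s.1 x)), by
    refine ⟨?_, fun x => ?_, fun x => ?_⟩
    · refine Measurable.ite ?_ s.2.1 ((hPm s).comp s.2.1)
      exact measurableSet_le (hφ.measurable.comp s.2.1) (hφ.measurable.comp ((hPm s).comp s.2.1))
    · have h1 := s.2.2.1 x
      have h2 : s.1 (P s (s.1 x)) = P s (s.1 x) := hPr s (s.1 x) h1
      rcases hor s x with h | h
      · simp only [h, h1]
      · simp only [h, h2, hPP]
        rw [mn_comm, h]
    · rcases hor s x with h | h
      · simp only [h]; exact s.2.2.2 x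
      · simp only [h]; exact hE.trans (s.2.2.2 x) (hPE s _)⟩
  let s : ℕ → State := fun n =>
    Nat.rec ⟨id, measurable_id, fun _ => rfl, fun x => hE.refl x⟩ (fun _ s => next s) n
  have hs : ∀ n x, (s (n + 1)).1 x = mn ((s n).1 x) (P (s n) ((s n).1 x)) := fun n x => rfl
  exact ⟨{
    r := fun n => (s n).1
    T := fun n => P (s n)
    r_zero := fun x => rfl
    measurable_r := fun n => (s n).2.1
    measurable_T := fun n => hPm _
    r_r := fun n => (s n).2.2.1
    T_T := fun n => hPP _
    rel_r := fun n => (s n).2.2.2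
    rel_T := fun n => hPE _
    r_T := fun n x hx => hPr _ x hx
    eq_of_fixed := fun n x y hx hy => hPf _ x hx y hy
    r_succ := fun n x => hor _ x
    r_succ_T := fun n x hx => by
      have h2 : (s n).1 (P (s n) x) = P (s n) x := hPr _ x hx
      rw [hs, hs, h2, hPP, hx, mn_comm]
    r_succ_r := fun n x => by rw [hs, hs, (s n).2.2.1] }⟩

end Tower

/-! ### Block sums -/

section Combinatorics
variable {X : Type*} [MeasurableSpace X] {E : X → X → Prop} (t : Tower E)

theorem Tower.r_eq_succ {n : ℕ} {x y : X} (h : t.r n x = t.r n y) :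
    t.r (n + 1) x = t.r (n + 1) y := by
  rw [← t.r_succ_r, h, t.r_succ_r]

theorem Tower.r_eq_mono {n m : ℕ} (hnm : n ≤ m) {x y : X} (h : t.r n x = t.r n y) :
    t.r m x = t.r m y := by
  induction m, hnm using Nat.le_induction with
  | base => exact h
  | succ m _ ih => exact t.r_eq_succ ih

theorem Tower.root_of_succ {n : ℕ} {z : X} (h : t.r (n + 1) z = z) : t.r n z = z := by
  rcases t.r_succ n z with h' | h'
  · rw [← h', h]
  · rw [h] at h'
    rw [h', t.r_T _ _ (t.r_r n z)]

/-- Two distinct blocks are merged only if their roots are paired. -/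
theorem Tower.r_eq_T {n : ℕ} {x y : X} (h : t.r (n + 1) x = t.r (n + 1) y)
    (hne : t.r n x ≠ t.r n y) : t.r n y = t.T n (t.r n x) := by
  rcases t.r_succ n x with h1 | h1 <;> rcases t.r_succ n y with h2 | h2
  · exact absurd (by rw [← h1, h, h2]) hne
  · rw [← h1, h, h2, t.T_T]
  · rw [← h1, h, h2]
  · refine absurd ?_ hne
    rw [← t.T_T n (t.r n x), ← h1, h, h2, t.T_T]

/-- When two distinct blocks are merged, exactly one of their roots survives. -/
theorem Tower.r_succ_iff {n : ℕ} {x y : X} (h : t.r (n + 1) x = t.r (n + 1) y)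
    (hne : t.r n x ≠ t.r n y) : t.r n y = t.r (n + 1) y ↔ ¬ t.r n x = t.r (n + 1) x := by
  rw [← h]
  constructor
  · intro h1 h2
    exact hne (h2.trans h1.symm)
  · intro h1
    rcases t.r_succ n x with h2 | h2
    · exact absurd h2.symm h1
    · rw [h2, t.r_eq_T h hne]

/-- The block sum: `t.sum n u z` adds up `u` over the block with root `z`, when `z` is a root of
level `n`. Points unpaired at some stage are counted with multiplicity, so that the total weight of
a block is always `2 ^ n`; away from a null set nothing is counted twice. -/
def Tower.sum (t : Tower E) : ℕ → (X → ENNReal) → X → ENNReal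
  | 0, u => u
  | n + 1, u => fun z => t.sum n u z + t.sum n u (t.T n z)

theorem Tower.sum_succ (n : ℕ) (u : X → ENNReal) (z : X) :
    t.sum (n + 1) u z = t.sum n u z + t.sum n u (t.T n z) := rfl

theorem Tower.measurable_sum (n : ℕ) {u : X → ENNReal} (hu : Measurable u) :
    Measurable (t.sum n u) := by
  induction n with
  | zero => exact hu
  | succ n ih => exact ih.add (ih.comp (t.measurable_T n))

theorem Tower.sum_add (n : ℕ) (u v : X → ENNReal) (z : X) :
    t.sum n (u + v) z = t.sum n u z + t.sum n v z := by
  induction n generalizing z with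
  | zero => rfl
  | succ n ih => rw [t.sum_succ, t.sum_succ, t.sum_succ, ih, ih]; ring

theorem Tower.sum_one (n : ℕ) (z : X) : t.sum n (fun _ => 1) z = 2 ^ n := by
  induction n generalizing z with
  | zero => simp [Tower.sum]
  | succ n ih => rw [t.sum_succ, ih, ih, pow_succ, mul_two]

/-- The involution `T 0` permutes each block of positive level, hence preserves its block sums. -/
theorem Tower.sum_comp (n : ℕ) (u : X → ENNReal) (z : X) :
    t.sum (n + 1) (fun x => u (t.T 0 x)) z = t.sum (n + 1) u z := by
  induction n generalizing z with
  | zero =>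
    simp only [Tower.sum, t.T_T]
    exact add_comm _ _
  | succ n ih => rw [t.sum_succ (n + 1), t.sum_succ (n + 1), ih, ih]

/-- A block sum depends only on the values of the function on the block. -/
theorem Tower.sum_mono (n : ℕ) {u v : X → ENNReal} {z : X} (hz : t.r n z = z)
    (h : ∀ x, t.r n x = z → u x ≤ v x) : t.sum n u z ≤ t.sum n v z := by
  induction n generalizing z with
  | zero => exact h z hz
  | succ n ih =>
    have hz' := t.root_of_succ hz
    refine add_le_add (ih hz' fun x hx => h x ?_) (ih (t.r_T n z hz') fun x hx => h x ?_)
    · rw [← t.r_succ_r, hx, hz]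
    · rw [← t.r_succ_r, hx, t.r_succ_T n z hz', hz]

theorem Tower.sum_congr (n : ℕ) {u v : X → ENNReal} {z : X} (hz : t.r n z = z)
    (h : ∀ x, t.r n x = z → u x = v x) : t.sum n u z = t.sum n v z :=
  le_antisymm (t.sum_mono n hz fun x hx => (h x hx).le)
    (t.sum_mono n hz fun x hx => (h x hx).ge)

end Combinatorics

/-! ### Invariant measures -/

section Invariant
variable {X : Type*} [MeasurableSpace X] {E : X → X → Prop} {μ : Measure X}

theorem measurePreserving_of_involution
    (hμ : ∀ f : X → X, Measurable f → Function.Bijective f → (∀ x, E x (f x)) →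
      Measure.map f μ = μ) {f : X → X} (hf : Measurable f) (hff : ∀ x, f (f x) = x)
    (hfE : ∀ x, E x (f x)) : MeasurePreserving f μ μ :=
  ⟨hf, hμ f hf (Function.Involutive.bijective hff) hfE⟩

/-- A Borel set meeting each class at most once is null. Choosing for each `x` only those indices
`j` for which `g j x` is new yields pairwise disjoint copies of `W`, infinitely many over each
point, of finite total measure. -/
theorem measure_partial_transversal [StandardBorelSpace X] [IsFiniteMeasure μ]
    {g : ℕ → X → X} (hE : Equivalence E)
    (hEaper : ∀ x, {y | E x y}.Infinite)
    (hgi : ∀ n x, g n (g n x) = x) (hgE : ∀ x y, E x y ↔ ∃ n, g n x = y)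
    (hgμ : ∀ n, MeasurePreserving (g n) μ μ)
    {W : Set X} (hW : MeasurableSet W) (hWE : ∀ x ∈ W, ∀ y ∈ W, E x y → x = y) : μ W = 0 := by
  -- `G j` is the set of points for which `g j x` has not been enumerated before.
  let G : ℕ → Set X := fun j => {x | ∀ i < j, g j x ≠ g i x}
  have hG : ∀ j, MeasurableSet (G j) := by
    intro j
    have e : G j = ⋂ i, ⋂ (_ : i < j), {x | g j x = g i x}ᶜ := by
      ext x; simp [G]
    rw [e]
    exact MeasurableSet.iInter fun i => MeasurableSet.iInter fun _ =>
      (measurableSet_eq_fun (hgμ j).measurable (hgμ i).measurable).compl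
  have hEg : ∀ n x, E x (g n x) := fun n x => (hgE _ _).2 ⟨n, rfl⟩
  have hWm : ∀ j, MeasurableSet (W ∩ G j) := fun j => hW.inter (hG j)
  have hdisj : Pairwise (Function.onFun Disjoint fun j => g j ⁻¹' (W ∩ G j)) := by
    have key : ∀ i j, i < j → Disjoint (g i ⁻¹' (W ∩ G i)) (g j ⁻¹' (W ∩ G j)) := by
      intro i j hij
      rw [disjoint_left]
      intro z hi hj
      have e : g i z = g j z :=
        hWE _ hi.1 _ hj.1 (hE.trans (hE.symm (hEg i z)) (hEg j z))
      refine hj.2 i hij ?_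
      rw [hgi, ← e, hgi]
    intro i j hij
    rcases lt_or_gt_of_ne hij with h | h
    · exact key i j h
    · exact (key j i h).symm
  have hfin : ∑' j, μ (W ∩ G j) ≠ ⊤ := by
    have e : ∀ j, μ (W ∩ G j) = μ (g j ⁻¹' (W ∩ G j)) := fun j =>
      ((hgμ j).measure_preimage (hWm j).nullMeasurableSet).symm
    simp_rw [e]
    rw [← measure_iUnion hdisj fun j => (hgμ j).measurable (hWm j)]
    exact measure_ne_top _ _
  have hinf : ∀ x, ∑' j, (G j).indicator (fun _ => (1 : ENNReal)) x = ⊤ := by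
    intro x
    have hi : {j | x ∈ G j}.Infinite := by
      intro hf
      refine hEaper x ((hf.image fun j => g j x).subset ?_)
      intro y hy
      have hex := (hgE x y).1 hy
      classical
      refine ⟨Nat.find hex, fun i hi h => ?_, Nat.find_spec hex⟩
      exact Nat.find_min hex hi (h.symm.trans (Nat.find_spec hex))
    have e : ∀ j, (G j).indicator (fun _ => (1 : ENNReal)) x =
        {j | x ∈ G j}.indicator (fun _ => 1) j := fun j => rfl
    simp_rw [e]
    rw [← tsum_subtype {j | x ∈ G j} (fun _ => (1 : ENNReal)), ENNReal.tsum_set_one,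
      hi.encard_eq]
    rfl
  have hsum : ∑' j, μ (W ∩ G j) = ⊤ * μ W := by
    calc ∑' j, μ (W ∩ G j) = ∑' j, ∫⁻ x in W, (G j).indicator (fun _ => (1 : ENNReal)) x ∂μ := by
          refine tsum_congr fun j => ?_
          rw [lintegral_indicator (hG j), setLIntegral_one, Measure.restrict_apply (hG j),
            inter_comm]
      _ = ∫⁻ x in W, ⊤ ∂μ := by
          rw [← lintegral_tsum fun j => (measurable_const.indicator (hG j)).aemeasurable]
          simp_rw [hinf]
      _ = ⊤ * μ W := setLIntegral_const _ _
  by_contra h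
  exact hfin (by rw [hsum, ENNReal.top_mul h])

/-- Mass transport: summing over blocks and integrating over the roots gives back the integral. -/
theorem Tower.lintegral_sum [StandardBorelSpace X] (t : Tower E)
    (hTμ : ∀ n, MeasurePreserving (t.T n) μ μ)
    (hfix : ∀ n, μ {z | t.r n z = z ∧ t.T n z = z} = 0) (n : ℕ) {u : X → ENNReal}
    (hu : Measurable u) :
    ∫⁻ z in {z | t.r n z = z}, t.sum n u z ∂μ = ∫⁻ z, u z ∂μ := by
  have hZ : ∀ n, MeasurableSet {z | t.r n z = z} := fun n =>
    measurableSet_eq_fun (t.measurable_r n) measurable_id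
  induction n with
  | zero =>
    have e : {z | t.r 0 z = z} = univ := by ext z; simp [t.r_zero]
    rw [e, Measure.restrict_univ]
    rfl
  | succ n ih =>
    rw [← ih]
    have hF := t.measurable_sum n hu
    have hZT := t.measurable_T n (hZ (n + 1))
    -- The roots of level `n` are those that survive together with the partners of the survivors;
    -- the overlap consists of unpaired roots.
    have e : {z | t.r n z = z} = {z | t.r (n + 1) z = z} ∪ t.T n ⁻¹' {z | t.r (n + 1) z = z} := by
      ext z
      constructor
      · intro hz
        have hz' : t.r n z = z := hz
        rcases t.r_succ n z with h | h
        · exact Or.inl (h.trans hz')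
        · refine Or.inr ?_
          change t.r (n + 1) (t.T n z) = t.T n z
          rw [t.r_succ_T n z hz', h, hz']
      · rintro (h | h)
        · exact t.root_of_succ h
        · have h1 := t.r_T n _ (t.root_of_succ h)
          rwa [t.T_T] at h1
    have hd : AEDisjoint μ {z | t.r (n + 1) z = z} (t.T n ⁻¹' {z | t.r (n + 1) z = z}) := by
      refine measure_mono_null ?_ (hfix n)
      rintro z ⟨h1, h2⟩
      have h1' : t.r (n + 1) z = z := h1
      have h2' : t.r (n + 1) (t.T n z) = t.T n z := h2
      have hr := t.root_of_succ h1
      refine ⟨hr, ?_⟩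
      rw [← h2', t.r_succ_T n z hr, h1']
    rw [e, Measure.restrict_union₀ hd hZT.nullMeasurableSet, lintegral_add_measure]
    simp_rw [t.sum_succ]
    rw [lintegral_add_left hF]
    congr 1
    have h := (hTμ n).setLIntegral_comp_preimage hZT hF
    rw [← preimage_comp, show t.T n ∘ t.T n = id from funext (t.T_T n), preimage_id] at h
    exact h

end Invariant

/-! ### Labels and the partial order -/

section Order
variable {X : Type*} [MeasurableSpace X] {E : X → X → Prop} (t : Tower E)

/-- The indicator function of `s` with values in `ENNReal`. -/
noncomputable def ind (s : Set X) : X → ENNReal := s.indicator fun _ => 1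

theorem measurable_ind {s : Set X} (hs : MeasurableSet s) : Measurable (ind s) :=
  measurable_const.indicator hs

omit [MeasurableSpace X] in
theorem ind_le_ind {s s' : Set X} {x y : X} (h : x ∈ s → y ∈ s') : ind s x ≤ ind s' y := by
  by_cases hx : x ∈ s
  · simp [ind, hx, h hx]
  · simp [ind, hx]

omit [MeasurableSpace X] in
theorem ind_congr {s s' : Set X} {x y : X} (h : x ∈ s ↔ y ∈ s') : ind s x = ind s' y :=
  le_antisymm (ind_le_ind h.1) (ind_le_ind h.2)

/-- Changes the labelling `h` to its negation on those level-`n` blocks in which fewer points of `A`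
satisfy `h` than fail it. After this, in each block at least half of the points of `A` carry
the label true. -/
def Tower.flip (t : Tower E) (n : ℕ) (A : Set X) (h : X → Prop) (x : X) : Prop :=
  t.sum n (ind {y | y ∈ A ∧ ¬ h y}) (t.r n x) ≤ t.sum n (ind {y | y ∈ A ∧ h y}) (t.r n x) ↔ h x

/-- The label of a point on entering level `n`. All labels are true at level `0`. At each level the
labels are first adjusted by `Tower.flip` relative to `A n`, and then negated on the blocks whose
root does not survive to the next level. -/
def Tower.lab (t : Tower E) (A : ℕ → Set X) : ℕ → X → Prop
  | 0 => fun _ => True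
  | n + 1 => fun x => t.r n x = t.r (n + 1) x ↔ t.flip n (A n) (t.lab A n) x

/-- The label of a point at level `n` after the adjustment relative to `A n`; the order between the
two blocks merged at this level is defined from it. -/
def Tower.mid (t : Tower E) (A : ℕ → Set X) (n : ℕ) : X → Prop := t.flip n (A n) (t.lab A n)

variable {A : ℕ → Set X}

theorem Tower.lab_succ (n : ℕ) (x : X) :
    t.lab A (n + 1) x ↔ (t.r n x = t.r (n + 1) x ↔ t.mid A n x) := Iff.rfl

theorem Tower.mid_iff (n : ℕ) (x : X) :
    t.mid A n x ↔ (t.sum n (ind {y | y ∈ A n ∧ ¬ t.lab A n y}) (t.r n x) ≤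
      t.sum n (ind {y | y ∈ A n ∧ t.lab A n y}) (t.r n x) ↔ t.lab A n x) := Iff.rfl

theorem measurableSet_iff {p q : X → Prop} (hp : MeasurableSet {x | p x})
    (hq : MeasurableSet {x | q x}) : MeasurableSet {x | p x ↔ q x} := by
  have e : {x | p x ↔ q x} = ({x | p x} ∩ {x | q x}) ∪ ({x | p x}ᶜ ∩ {x | q x}ᶜ) := by
    ext x
    simp only [mem_ofPred_eq, mem_union, mem_inter_iff, mem_compl_iff]
    tauto
  rw [e]
  exact (hp.inter hq).union (hp.compl.inter hq.compl)

theorem Tower.measurableSet_flip (n : ℕ) {B : Set X} (hB : MeasurableSet B) {h : X → Prop}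
    (hh : MeasurableSet {x | h x}) : MeasurableSet {x | t.flip n B h x} := by
  refine measurableSet_iff (measurableSet_le ?_ ?_) hh
  · exact (t.measurable_sum n (measurable_ind (hB.inter hh.compl))).comp (t.measurable_r n)
  · exact (t.measurable_sum n (measurable_ind (hB.inter hh))).comp (t.measurable_r n)

theorem Tower.measurableSet_lab [StandardBorelSpace X] (hA : ∀ n, MeasurableSet (A n)) (n : ℕ) :
    MeasurableSet {x | t.lab A n x} := by
  induction n with
  | zero => exact MeasurableSet.univ
  | succ n ih =>
    exact measurableSet_iff (measurableSet_eq_fun (t.measurable_r n) (t.measurable_r (n + 1)))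
      (t.measurableSet_flip n (hA n) ih)

theorem Tower.measurableSet_mid [StandardBorelSpace X] (hA : ∀ n, MeasurableSet (A n)) (n : ℕ) :
    MeasurableSet {x | t.mid A n x} :=
  t.measurableSet_flip n (hA n) (t.measurableSet_lab hA n)

/-- In each block at least half of the points of `A n` carry an adjusted label true. -/
theorem Tower.sum_mid_le {n : ℕ} {z : X} (hz : t.r n z = z) :
    t.sum n (ind {y | y ∈ A n ∧ ¬ t.mid A n y}) z ≤ t.sum n (ind {y | y ∈ A n ∧ t.mid A n y}) z := by
  by_cases hd : t.sum n (ind {y | y ∈ A n ∧ ¬ t.lab A n y}) z ≤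
      t.sum n (ind {y | y ∈ A n ∧ t.lab A n y}) z
  · have hm : ∀ x, t.r n x = z → (t.mid A n x ↔ t.lab A n x) := by
      intro x hx
      rw [t.mid_iff, hx]
      simp [hd]
    rw [t.sum_congr n hz fun x hx => ind_congr (s' := {y | y ∈ A n ∧ ¬ t.lab A n y}) (y := x)
        (by simp [hm x hx]),
      t.sum_congr n hz fun x hx => ind_congr (s := {y | y ∈ A n ∧ t.mid A n y})
        (s' := {y | y ∈ A n ∧ t.lab A n y}) (y := x) (by simp [hm x hx])]
    exact hd
  · have hm : ∀ x, t.r n x = z → (t.mid A n x ↔ ¬ t.lab A n x) := by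
      intro x hx
      rw [t.mid_iff, hx]
      simp [hd]
    rw [t.sum_congr n hz fun x hx => ind_congr (s' := {y | y ∈ A n ∧ t.lab A n y}) (y := x)
        (by simp [hm x hx]),
      t.sum_congr n hz fun x hx => ind_congr (s := {y | y ∈ A n ∧ t.mid A n y})
        (s' := {y | y ∈ A n ∧ ¬ t.lab A n y}) (y := x) (by simp [hm x hx])]
    exact (not_le.1 hd).le

/-- At level `0` no label is negated, so the first merging step introduces no order relation. -/
theorem Tower.mid_zero (x : X) : t.mid A 0 x := by
  rw [t.mid_iff]
  simp [Tower.lab, Tower.sum, ind]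

theorem Tower.r_T_zero (n : ℕ) (x : X) : t.r (n + 1) (t.T 0 x) = t.r (n + 1) x :=
  t.r_eq_mono (Nat.le_add_left 1 n) (t.r_succ_T 0 x (t.r_zero x))

/-- From level `1` on, a point and its partner under `T 0` carry opposite labels. -/
theorem Tower.lab_T {n : ℕ} {x : X} (hx : t.T 0 x ≠ x) :
    (t.lab A (n + 1) (t.T 0 x) ↔ ¬ t.lab A (n + 1) x) ∧
      (t.mid A (n + 1) (t.T 0 x) ↔ ¬ t.mid A (n + 1) x) := by
  have hmid : ∀ n, (t.lab A (n + 1) (t.T 0 x) ↔ ¬ t.lab A (n + 1) x) →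
      (t.mid A (n + 1) (t.T 0 x) ↔ ¬ t.mid A (n + 1) x) := by
    intro n h
    rw [t.mid_iff, t.mid_iff, t.r_T_zero, h]
    tauto
  induction n with
  | zero =>
    refine ⟨?_, hmid 0 ?_⟩ <;>
    · rw [t.lab_succ, t.lab_succ, t.r_T_zero, t.r_zero, t.r_zero]
      simp only [t.mid_zero, iff_true]
      have h := t.r_succ 0 x
      rw [t.r_zero] at h
      rcases h with h | h <;> simp [h, hx, hx.symm]
  | succ n ih =>
    refine ⟨?_, hmid _ ?_⟩ <;>
    · rw [t.lab_succ, t.lab_succ, t.r_T_zero, t.r_T_zero, ih.2]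
      tauto

/-- The relations introduced when two distinct blocks are merged at level `n`: every point labelled
false in either block lies below every point labelled true in the other. -/
def Tower.Cross (t : Tower E) (A : ℕ → Set X) (n : ℕ) (x y : X) : Prop :=
  t.r (n + 1) x = t.r (n + 1) y ∧ t.r n x ≠ t.r n y ∧ ¬ t.mid A n x ∧ t.mid A n y

/-- Points related at level `k` carry the same label from level `k + 1` on: their labels differ at
level `k`, and exactly one of their blocks is negated in the merging. This is what makes the order
transitive. -/
theorem Tower.Cross.later {t : Tower E} {k n : ℕ} {x y : X} (h : t.Cross A k x y) (hkn : k < n) :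
    t.r n x = t.r n y ∧ (t.mid A n x ↔ t.mid A n y) := by
  have key : t.r n x = t.r n y ∧ (t.lab A n x ↔ t.lab A n y) := by
    induction n, hkn using Nat.le_induction with
    | base =>
      refine ⟨h.1, ?_⟩
      rw [t.lab_succ, t.lab_succ]
      simp only [h.2.2.1, h.2.2.2, iff_true, iff_false]
      exact (t.r_succ_iff h.1 h.2.1).symm
    | succ n _ ih =>
      refine ⟨t.r_eq_succ ih.1, ?_⟩
      rw [t.lab_succ, t.lab_succ, t.mid_iff, t.mid_iff, ih.1, ih.2, t.r_eq_succ ih.1]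
  refine ⟨key.1, ?_⟩
  rw [t.mid_iff, t.mid_iff, key.1, key.2]

theorem Tower.Cross.trans {t : Tower E} {k n : ℕ} {x y z : X} (h : t.Cross A k x y)
    (h' : t.Cross A n y z) : ∃ m, t.Cross A m x z := by
  rcases lt_trichotomy k n with hkn | rfl | hkn
  · have e := h.later hkn
    exact ⟨n, by rw [t.r_eq_succ e.1, h'.1], by rw [e.1]; exact h'.2.1,
      by rw [e.2]; exact h'.2.2.1, h'.2.2.2⟩
  · exact absurd h.2.2.2 h'.2.2.1
  · have e := h'.later hkn
    exact ⟨k, by rw [h.1, t.r_eq_succ e.1], by rw [← e.1]; exact h.2.1, h.2.2.1,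
      e.2.1 h.2.2.2⟩

/-- The partial order of the theorem. -/
def Tower.Le (t : Tower E) (A : ℕ → Set X) (x y : X) : Prop := x = y ∨ ∃ n, t.Cross A n x y

theorem Tower.Le.trans {t : Tower E} {x y z : X} (h : t.Le A x y) (h' : t.Le A y z) :
    t.Le A x z := by
  rcases h with rfl | ⟨k, hk⟩
  · exact h'
  rcases h' with rfl | ⟨n, hn⟩
  · exact Or.inr ⟨k, hk⟩
  · exact Or.inr (hk.trans hn)

theorem Tower.Le.antisymm {t : Tower E} {x y : X} (h : t.Le A x y) (h' : t.Le A y x) :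
    x = y := by
  rcases h with rfl | ⟨k, hk⟩
  · rfl
  rcases h' with rfl | ⟨n, hn⟩
  · rfl
  · obtain ⟨m, hm⟩ := hk.trans hn
    exact absurd rfl hm.2.1

theorem Tower.rel_of_r_eq (hE : Equivalence E) {n : ℕ} {x y : X} (h : t.r n x = t.r n y) :
    E x y :=
  hE.trans (t.rel_r n x) (h ▸ hE.symm (t.rel_r n y))

theorem Tower.Le.rel {t : Tower E} (hE : Equivalence E) {x y : X} (h : t.Le A x y) : E x y := by
  rcases h with rfl | ⟨k, hk⟩
  · exact hE.refl x
  · exact t.rel_of_r_eq hE hk.1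

theorem Tower.measurableSet_Le [StandardBorelSpace X] (hA : ∀ n, MeasurableSet (A n)) :
    MeasurableSet {p : X × X | t.Le A p.1 p.2} := by
  have e : {p : X × X | t.Le A p.1 p.2} = {p : X × X | p.1 = p.2} ∪ ⋃ n,
      ({p : X × X | t.r (n + 1) p.1 = t.r (n + 1) p.2} ∩ ({p : X × X | t.r n p.1 = t.r n p.2}ᶜ ∩
        (Prod.fst ⁻¹' {x | t.mid A n x}ᶜ ∩ Prod.snd ⁻¹' {x | t.mid A n x}))) := by
    ext p
    simp [Tower.Le, Tower.Cross]
  have hr : ∀ n, MeasurableSet {p : X × X | t.r n p.1 = t.r n p.2} := fun n =>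
    measurableSet_eq_fun ((t.measurable_r n).comp measurable_fst)
      ((t.measurable_r n).comp measurable_snd)
  have hm := t.measurableSet_mid hA
  rw [e]
  exact (measurableSet_eq_fun measurable_fst measurable_snd).union (MeasurableSet.iUnion fun n =>
    (hr _).inter ((hr n).compl.inter ((measurable_fst (hm n).compl).inter
      (measurable_snd (hm n)))))

/-- Let two distinct blocks with roots `z` and `w` be merged at level `n + 1` inside
`Y`, and let `L` be a partial order extending `t.Le A` on `Y` in which each point of `Y` is comparable
with its partner under `T 0`. In one of the two blocks, `L` places a point below its
partner under `T 0` exactly when the point is labelled false. Indeed if a point `x` labelled true in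
the first block has `L x (T 0 x)`, then for `y` labelled false in the second block
`y ≤ x ≤ T 0 x ≤ T 0 y`. -/
theorem Tower.exists_block {L : X → X → Prop} {Y : Set X}
    (hPL : ∀ x y, x ∈ Y → y ∈ Y → t.Le A x y → L x y)
    (hLa : ∀ x y, L x y → L y x → x = y)
    (hLt : ∀ x y z, L x y → L y z → L x z)
    (hLtot : ∀ x ∈ Y, L x (t.T 0 x) ∨ L (t.T 0 x) x) {n : ℕ} {z w : X}
    (hYz : ∀ x, t.r (n + 2) x = z → x ∈ Y ∧ t.T 0 x ≠ x)
    (hz : t.r (n + 2) z = z) (hw : t.r (n + 2) w = z) (hzw : w ≠ z)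
    (hzr : t.r (n + 1) z = z) (hwr : t.r (n + 1) w = w) :
    ∃ v, (v = z ∨ v = w) ∧ t.r (n + 1) v = v ∧
      ∀ x, t.r (n + 1) x = v → (L x (t.T 0 x) ↔ ¬ t.mid A (n + 1) x) := by
  have hT0 : ∀ x, t.T 0 (t.T 0 x) = x := t.T_T 0
  have hmT : ∀ x, t.r (n + 2) x = z → (t.mid A (n + 1) (t.T 0 x) ↔ ¬ t.mid A (n + 1) x) :=
    fun x hx => (t.lab_T (hYz x hx).2).2
  have hbz : ∀ x, t.r (n + 1) x = z → t.r (n + 2) x = z := fun x hx => by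
    rw [t.r_eq_succ (hx.trans hzr.symm), hz]
  have hbw : ∀ x, t.r (n + 1) x = w → t.r (n + 2) x = z := fun x hx => by
    rw [t.r_eq_succ (hx.trans hwr.symm), hw]
  have hTz : ∀ x, t.r (n + 2) x = z → t.r (n + 2) (t.T 0 x) = z := fun x hx => by
    rw [t.r_T_zero, hx]
  by_cases hex : ∃ x, t.r (n + 1) x = z ∧ t.mid A (n + 1) x ∧ L x (t.T 0 x)
  · obtain ⟨x, hxz, hxm, hxL⟩ := hex
    have key : ∀ y, t.r (n + 1) y = w → ¬ t.mid A (n + 1) y → L y (t.T 0 y) := by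
      intro y hy hym
      have hx2 := hbz x hxz
      have hy2 := hbw y hy
      have h1 : L y x := hPL y x (hYz y hy2).1 (hYz x hx2).1 (Or.inr ⟨n + 1, by rw [hx2, hy2],
        by rw [hxz, hy]; exact hzw, hym, hxm⟩)
      have h2 : L (t.T 0 x) (t.T 0 y) := hPL _ _ (hYz _ (hTz x hx2)).1 (hYz _ (hTz y hy2)).1
        (Or.inr ⟨n + 1, by rw [hTz x hx2, hTz y hy2],
          by rw [t.r_T_zero, t.r_T_zero, hxz, hy]; exact hzw.symm,
          by rw [hmT x hx2]; exact not_not.2 hxm, by rw [hmT y hy2]; exact hym⟩)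
      exact hLt _ _ _ h1 (hLt _ _ _ hxL h2)
    refine ⟨w, Or.inr rfl, hwr, fun y hy => ⟨fun hyL hym => ?_, key y hy⟩⟩
    have hy2 := hbw y hy
    have h := key (t.T 0 y) (by rw [t.r_T_zero, hy]) (by rw [hmT y hy2]; exact not_not.2 hym)
    rw [hT0] at h
    exact (hYz y hy2).2 (hLa _ _ h hyL)
  · push Not at hex
    refine ⟨z, Or.inl rfl, hzr, fun x hx => ⟨fun hL hm => hex x hx hm hL, fun hm => ?_⟩⟩
    have hx2 := hbz x hx
    rcases hLtot x (hYz x hx2).1 with h | h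
    · exact h
    · refine absurd ?_ (hex (t.T 0 x) (by rw [t.r_T_zero, hx]) (by rw [hmT x hx2]; exact hm))
      rw [hT0]; exact h

/-- In a block where `U` consists of the points labelled false, `U` differs from `A (n + 1)` on at
least half of the points: half of all points are labelled false, and at least half of the points
of `A (n + 1)` are labelled true. -/
theorem Tower.sum_le_of_block {n : ℕ} {v : X} (hv : t.r (n + 1) v = v) {U : Set X}
    (hT : ∀ x, t.r (n + 1) x = v → t.T 0 x ≠ x)
    (hU : ∀ x, t.r (n + 1) x = v → (x ∈ U ↔ ¬ t.mid A (n + 1) x)) :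
    t.sum (n + 1) (fun _ => 1) v ≤ 2 * t.sum (n + 1) (ind (symmDiff U (A (n + 1)))) v := by
  have hhalf : t.sum (n + 1) (ind {x | t.mid A (n + 1) x}) v =
      t.sum (n + 1) (ind {x | ¬ t.mid A (n + 1) x}) v := by
    rw [← t.sum_comp]
    exact t.sum_congr _ hv fun x hx => ind_congr (t.lab_T (hT x hx)).2
  have h1 : t.sum (n + 1) (fun _ => 1) v = t.sum (n + 1) (ind {x | t.mid A (n + 1) x}) v +
      t.sum (n + 1) (ind {x | ¬ t.mid A (n + 1) x}) v := by
    rw [← t.sum_add]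
    congr 1
    funext x
    by_cases hx : t.mid A (n + 1) x <;> simp [ind, hx]
  have h2 : t.sum (n + 1) (ind {x | ¬ t.mid A (n + 1) x}) v ≤
      t.sum (n + 1) (ind (symmDiff U (A (n + 1)))) v := by
    calc _ = t.sum (n + 1) (ind {x | x ∈ A (n + 1) ∧ ¬ t.mid A (n + 1) x}) v +
            t.sum (n + 1) (ind {x | x ∉ A (n + 1) ∧ ¬ t.mid A (n + 1) x}) v := by
          rw [← t.sum_add]
          congr 1
          funext x
          by_cases hx : t.mid A (n + 1) x <;> by_cases hx' : x ∈ A (n + 1) <;> simp [ind, hx, hx']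
      _ ≤ t.sum (n + 1) (ind {x | x ∈ A (n + 1) ∧ t.mid A (n + 1) x}) v +
            t.sum (n + 1) (ind {x | x ∉ A (n + 1) ∧ ¬ t.mid A (n + 1) x}) v :=
          add_le_add (t.sum_mid_le hv) le_rfl
      _ ≤ _ := by
          rw [← t.sum_add]
          refine t.sum_mono _ hv fun x hx => ?_
          have := hU x hx
          by_cases hx : t.mid A (n + 1) x <;> by_cases hx' : x ∈ A (n + 1) <;>
            simp_all [ind, mem_symmDiff]
  rw [h1, hhalf, ← two_mul]
  gcongr

end Order

/-! ### Approximation and the contradiction -/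

section Main
variable {X : Type*} [MeasurableSpace X]

/-- A single sequence of Borel sets that approximates every Borel set with error less than `1 / 4`
for every Borel probability measure: a countable algebra generating the σ-algebra. -/
theorem exists_dense_sequence (X : Type*) [MeasurableSpace X]
    [MeasurableSpace.CountablyGenerated X] :
    ∃ A : ℕ → Set X, (∀ n, MeasurableSet (A n)) ∧
      ∀ μ : Measure X, IsProbabilityMeasure μ → ∀ U, MeasurableSet U →
        ∃ n, 4 * μ (symmDiff U (A n)) < 1 := by
  let 𝒜 := generateSetAlgebra (MeasurableSpace.countableGeneratingSet X)
  have hc : 𝒜.Countable :=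
    countable_generateSetAlgebra MeasurableSpace.countable_countableGeneratingSet
  have hne : 𝒜.Nonempty := ⟨∅, isSetAlgebra_generateSetAlgebra.empty_mem⟩
  obtain ⟨A, hA⟩ := hc.exists_eq_range hne
  have hgen : ‹MeasurableSpace X› = MeasurableSpace.generateFrom 𝒜 := by
    rw [generateFrom_generateSetAlgebra_eq, MeasurableSpace.generateFrom_countableGeneratingSet]
  refine ⟨A, fun n => ?_, fun μ hμ U hU => ?_⟩
  · rw [hgen]
    exact MeasurableSpace.measurableSet_generateFrom (hA ▸ mem_range_self n)
  · obtain ⟨V, hV, hlt⟩ := (Measure.MeasureDense.of_generateFrom_isSetAlgebra_finite μ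
      isSetAlgebra_generateSetAlgebra hgen).approx U hU (measure_ne_top _ _) (1 / 4) (by norm_num)
    have hV' : V ∈ 𝒜 := hV
    rw [hA] at hV'
    obtain ⟨n, rfl⟩ := hV'
    refine ⟨n, ?_⟩
    have e : ENNReal.ofReal (1 / 4) = 1 / 4 := by
      rw [ENNReal.ofReal_div_of_pos (by norm_num)]; simp
    rw [e] at hlt
    calc 4 * μ (symmDiff U (A n)) < 4 * (1 / 4) :=
          ENNReal.mul_lt_mul_right (by norm_num) (by norm_num) hlt
      _ = 1 := ENNReal.mul_div_cancel (by norm_num) (by norm_num)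

/-- If `L` linearly orders the classes in `Y` and extends `t.Le A`, the set of points that `L` places
below their partner under `T 0` is at `μ`-distance at least `1 / 4` from each of `A 1, A 2, …`. -/
theorem Tower.not_linear [StandardBorelSpace X] {E : X → X → Prop} (hE : Equivalence E)
    (hEaper : ∀ x, {y | E x y}.Infinite) {g : ℕ → X → X} (hgm : ∀ n, Measurable (g n))
    (hgi : ∀ n x, g n (g n x) = x) (hgE : ∀ x y, E x y ↔ ∃ n, g n x = y) (t : Tower E)
    {A : ℕ → Set X} (hA : ∀ n, MeasurableSet (A n)) {μ : Measure X} [IsProbabilityMeasure μ]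
    (hμ : ∀ f : X → X, Measurable f → Function.Bijective f → (∀ x, E x (f x)) →
      Measure.map f μ = μ)
    {Y : Set X} (hYE : ∀ x y, E x y → x ∈ Y → y ∈ Y) (hYμ : μ Yᶜ = 0) {L : X → X → Prop}
    (hLm : MeasurableSet {p : X × X | L p.1 p.2})
    (hPL : ∀ x y, x ∈ Y → y ∈ Y → t.Le A x y → L x y)
    (hLa : ∀ x y, L x y → L y x → x = y)
    (hLt : ∀ x y z, L x y → L y z → L x z)
    (hLtot : ∀ x y, x ∈ Y → y ∈ Y → E x y → L x y ∨ L y x) :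
    (MeasurableSet {x | L x (t.T 0 x)}) ∧
      ∀ n, 1 ≤ 4 * μ (symmDiff {x | L x (t.T 0 x)} (A (n + 1))) := by
  have hUm : MeasurableSet {x | L x (t.T 0 x)} :=
    (measurable_id.prodMk (t.measurable_T 0)) hLm
  refine ⟨hUm, fun n => ?_⟩
  have hgμ : ∀ n, MeasurePreserving (g n) μ μ := fun n =>
    measurePreserving_of_involution hμ (hgm n) (hgi n) fun x => (hgE _ _).2 ⟨n, rfl⟩
  have hTμ : ∀ n, MeasurePreserving (t.T n) μ μ := fun n =>
    measurePreserving_of_involution hμ (t.measurable_T n) (t.T_T n) (t.rel_T n)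
  have hWm : ∀ n, MeasurableSet {z | t.r n z = z ∧ t.T n z = z} := fun n =>
    (measurableSet_eq_fun (t.measurable_r n) measurable_id).inter
      (measurableSet_eq_fun (t.measurable_T n) measurable_id)
  have hfix : ∀ n, μ {z | t.r n z = z ∧ t.T n z = z} = 0 := fun n =>
    measure_partial_transversal hE hEaper hgi hgE hgμ (hWm n)
      fun x hx y hy hxy => t.eq_of_fixed n x y hx.1 hy.1 hxy hx.2 hy.2
  have hsat : ∀ᵐ z ∂μ, ∀ j, t.T 0 (g j z) ≠ g j z := by
    rw [ae_all_iff]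
    intro j
    refine measure_mono_null ?_ (((hgμ j).measure_preimage (hWm 0).nullMeasurableSet).trans
      (hfix 0))
    intro z hz
    exact ⟨t.r_zero _, not_not.1 hz⟩
  have hY : ∀ᵐ z ∂μ, z ∈ Y := hYμ
  have hne : ∀ᵐ z ∂μ, ¬ (t.r (n + 1) z = z ∧ t.T (n + 1) z = z) := by
    rw [ae_iff]
    simpa using hfix (n + 1)
  have hBm := hUm.symmDiff (hA (n + 1))
  have hZm : MeasurableSet {z | t.r (n + 2) z = z} :=
    measurableSet_eq_fun (t.measurable_r (n + 2)) measurable_id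
  -- The set differs from `A (n + 1)` on half of one of the two halves of almost every block of
  -- level `n + 2`, hence on at least a quarter of the block.
  have key : ∀ᵐ z ∂μ, z ∈ {z | t.r (n + 2) z = z} → t.sum (n + 2) (fun _ => 1) z ≤
      4 * t.sum (n + 2) (ind (symmDiff {x | L x (t.T 0 x)} (A (n + 1)))) z := by
    filter_upwards [hsat, hY, hne] with z hz1 hz2 hz3 hz
    have hz : t.r (n + 2) z = z := hz
    have hzr : t.r (n + 1) z = z := t.root_of_succ hz
    have hwr := t.r_T (n + 1) z hzr
    have hYz : ∀ x, t.r (n + 2) x = z → x ∈ Y ∧ t.T 0 x ≠ x := by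
      intro x hx
      have hzx : E z x := hE.symm (hx ▸ t.rel_r (n + 2) x)
      obtain ⟨j, rfl⟩ := (hgE z x).1 hzx
      exact ⟨hYE _ _ hzx hz2, hz1 j⟩
    have hw : t.r (n + 2) (t.T (n + 1) z) = z := by rw [t.r_succ_T (n + 1) z hzr, hz]
    obtain ⟨v, hv, hvr, hvL⟩ := t.exists_block hPL hLa hLt
      (fun x hx => hLtot _ _ hx (hYE _ _ (t.rel_T 0 x) hx) (t.rel_T 0 x)) hYz hz hw
      (fun h => hz3 ⟨hzr, h⟩) hzr hwr
    have hv2 : ∀ x, t.r (n + 1) x = v → t.r (n + 2) x = z := by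
      intro x hx
      rw [t.r_eq_succ (hx.trans hvr.symm)]
      rcases hv with rfl | rfl
      · exact hz
      · exact hw
    have h1 := t.sum_le_of_block (A := A) (U := {x | L x (t.T 0 x)}) hvr
      (fun x hx => (hYz x (hv2 x hx)).2) hvL
    have h2 : t.sum (n + 1) (ind (symmDiff {x | L x (t.T 0 x)} (A (n + 1)))) v ≤
        t.sum (n + 2) (ind (symmDiff {x | L x (t.T 0 x)} (A (n + 1)))) z := by
      rw [t.sum_succ (n + 1)]
      rcases hv with rfl | rfl
      · exact le_self_add
      · exact le_add_self
    calc t.sum (n + 2) (fun _ => 1) z = 2 * t.sum (n + 1) (fun _ => 1) v := by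
          rw [t.sum_one, t.sum_one, pow_succ' _ (n + 1)]
      _ ≤ 2 * (2 * t.sum (n + 1) (ind (symmDiff {x | L x (t.T 0 x)} (A (n + 1)))) v) := by gcongr
      _ ≤ 2 * (2 * t.sum (n + 2) (ind (symmDiff {x | L x (t.T 0 x)} (A (n + 1)))) z) := by gcongr
      _ = _ := by rw [← mul_assoc]; norm_num
  have hind := measurable_ind hBm
  calc (1 : ENNReal) = ∫⁻ z, 1 ∂μ := by simp
    _ = ∫⁻ z in {z | t.r (n + 2) z = z}, t.sum (n + 2) (fun _ => 1) z ∂μ :=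
        (t.lintegral_sum hTμ hfix (n + 2) measurable_const).symm
    _ ≤ ∫⁻ z in {z | t.r (n + 2) z = z},
          4 * t.sum (n + 2) (ind (symmDiff {x | L x (t.T 0 x)} (A (n + 1)))) z ∂μ :=
        setLIntegral_mono_ae' hZm key
    _ = 4 * ∫⁻ z, ind (symmDiff {x | L x (t.T 0 x)} (A (n + 1))) z ∂μ := by
        rw [lintegral_const_mul _ (t.measurable_sum _ hind), t.lintegral_sum hTμ hfix _ hind]
    _ = _ := by
        congr 1
        exact lintegral_indicator_one hBm

end Main

end BorelOrder

/-- Every aperiodic CBER `E` admits a Borel assignment of partial orders to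
its classes (a Borel partial order `P ⊆ E`) such that for every `E`-invariant Borel
probability measure `μ` and every `E`-invariant `μ`-conull Borel set `Y`, there is no
Borel linearization of `P` on `Y`. -/
theorem stmt_8 {X : Type*} [MeasurableSpace X] [StandardBorelSpace X]
    (E : X → X → Prop) (hE : Equivalence E)
    (hEmeas : MeasurableSet {p : X × X | E p.1 p.2})
    (hEcount : ∀ x, {y | E x y}.Countable)
    (hEaper : ∀ x, {y | E x y}.Infinite) :
    ∃ P : X → X → Prop,
      MeasurableSet {p : X × X | P p.1 p.2} ∧
      (∀ x y, P x y → E x y) ∧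
      (∀ x, P x x) ∧
      (∀ x y, P x y → P y x → x = y) ∧
      (∀ x y z, P x y → P y z → P x z) ∧
      ∀ μ : Measure X, IsProbabilityMeasure μ →
        (∀ f : X → X, Measurable f → Function.Bijective f → (∀ x, E x (f x)) →
          Measure.map f μ = μ) →
        ∀ Y : Set X, MeasurableSet Y → (∀ x y, E x y → x ∈ Y → y ∈ Y) → μ Yᶜ = 0 →
          ¬ ∃ L : X → X → Prop,
            MeasurableSet {p : X × X | L p.1 p.2} ∧
            (∀ x y, x ∈ Y → y ∈ Y → P x y → L x y) ∧
            (∀ x y, L x y → E x y ∧ x ∈ Y ∧ y ∈ Y) ∧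
            (∀ x ∈ Y, L x x) ∧
            (∀ x y, L x y → L y x → x = y) ∧
            (∀ x y z, L x y → L y z → L x z) ∧
            (∀ x y, x ∈ Y → y ∈ Y → E x y → L x y ∨ L y x) := by
  obtain ⟨g, hgm, hgi, hgE⟩ := BorelOrder.exists_involutions hE hEmeas hEcount
  obtain ⟨t⟩ := BorelOrder.exists_tower hE hgm hgi hgE
  obtain ⟨A, hA, hAd⟩ := BorelOrder.exists_dense_sequence X
  -- The index is shifted because labels at level `0` are constant and ignore their set.
  refine ⟨t.Le fun n => A (n - 1), t.measurableSet_Le fun n => hA _, fun x y h => h.rel hE,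
    fun x => Or.inl rfl, fun x y h h' => h.antisymm h', fun x y z h h' => h.trans h', ?_⟩
  rintro μ hμp hμ Y - hYE hYμ ⟨L, hLm, hPL, -, -, hLa, hLt, hLtot⟩
  obtain ⟨hUm, hU⟩ := t.not_linear hE hEaper hgm hgi hgE (fun n => hA (n - 1)) hμ hYE hYμ hLm
    hPL hLa hLt hLtot
  obtain ⟨n, hn⟩ := hAd μ hμp _ hUm
  exact absurd hn (not_lt.2 (hU n))
end
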